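/- arXiv:1502.06483 — 10 statements merged into one kernel-verified Lean document; each statement's English description precedes it below -/
import Mathlib

section
/- Let n be a positive integer and let λ and μ be partitions of n such that λ dominates μ. Then there exists an index i with 1 ≤ i ≤ length(λ) such that λ_i ≥ μ_i ≥ λ_{i+1} (where λ_{i+1} is taken to be 0 when i = length(λ), and parts beyond the length of a partition are taken to be 0). -/
/-- `l` (viewed as the sequence of parts, indexed from `0`) together with length `k`
is a partition of `n`: parts are positive up to `k`, zero afterwards, nonincreasing,
and sum to `n`. -/
def IsPartitionFun (n : ℕ) (l : ℕ → ℕ) (k : ℕ) : Prop :=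
  (∀ i, i < k → 0 < l i) ∧ (∀ i, k ≤ i → l i = 0) ∧
  (∀ i j, i ≤ j → l j ≤ l i) ∧ (∑ i ∈ Finset.range k, l i = n)

/-- if `λ` dominates `μ` then there is an index `i` (here `0`-indexed,
`i < length λ`) with `λ_i ≥ μ_i ≥ λ_{i+1}`. -/
theorem exists_interlacing_index (n : ℕ) (hn : 0 < n) (lam mu : ℕ → ℕ) (kl km : ℕ)
    (hlam : IsPartitionFun n lam kl) (hmu : IsPartitionFun n mu km)
    (hdom : ∀ j, ∑ i ∈ Finset.range j, mu i ≤ ∑ i ∈ Finset.range j, lam i) :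
    ∃ i, i < kl ∧ mu i ≤ lam i ∧ lam (i + 1) ≤ mu i := by
  obtain ⟨-, hzero, -, hsum⟩ := hlam
  obtain ⟨-, -, hanti, -⟩ := hmu
  by_contra! hno
  have hle : ∀ i, i ≤ kl → mu i ≤ lam i := by
    intro i
    induction i with
    | zero => simpa using hdom 1
    | succ i ih =>
      intro hi
      exact (hanti i (i + 1) i.le_succ).trans (hno i hi (ih (Nat.le_of_succ_le hi))).le
  cases kl with
  | zero => simp at hsum; omega
  | succ k =>
    have hlt := hno k k.lt_succ_self (hle k k.le_succ)
    rw [hzero (k + 1) le_rfl] at hlt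
    exact Nat.not_lt_zero _ hlt
end

section
/- Let n be a positive integer and let λ and μ be partitions of n. Then λ dominates μ if and only if there exists a diagonal matrix S ∈ M_n(ℂ) with integer entries such that S·J_λ − J_λ·S = −2·J_λ and the closure, in the standard (Euclidean) topology of M_n(ℂ), of the set {g·J_λ·g⁻¹ : g ∈ GL_n(ℂ), g·S = S·g} contains a matrix of the form g·J_μ·g⁻¹ for some g ∈ GL_n(ℂ). -/
open Classical in
/-- The block-diagonal nilpotent matrix with lower-triangular Jordan blocks of sizes
`l 0, l 1, ...`: it has a `1` at position `(i, i-1)` exactly when `i` is not a partial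
sum of the parts, and `0` elsewhere. -/
noncomputable def jordanOfPartition (n : ℕ) (l : ℕ → ℕ) : Matrix (Fin n) (Fin n) ℂ :=
  Matrix.of fun i j =>
    if (i : ℕ) = (j : ℕ) + 1 ∧ ∀ m : ℕ, (∑ t ∈ Finset.range m, l t) ≠ (i : ℕ) then 1 else 0

section RankBound

/-- Having rank at most `r` is a closed condition on complex matrices. -/
theorem isClosed_setOf_rank_le {n : ℕ} (r : ℕ) :
    IsClosed {A : Matrix (Fin n) (Fin n) ℂ | A.rank ≤ r} := by
  let φ : Matrix (Fin n) (Fin n) ℂ →ₗ[ℂ] ((Fin n → ℂ) →L[ℂ] (Fin n → ℂ)) :=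
    (LinearMap.toContinuousLinearMap (𝕜 := ℂ) (E := Fin n → ℂ) (F' := Fin n → ℂ)).toLinearMap ∘ₗ
      (Matrix.toLin' (R := ℂ) (m := Fin n) (n := Fin n)).toLinearMap
  have hφ : Continuous φ := LinearMap.continuous_of_finiteDimensional φ
  have hopen := (isOpen_setOfPred_nat_le_rank (𝕜 := ℂ) (E := Fin n → ℂ) (F := Fin n → ℂ)
    (r + 1)).preimage hφ
  refine isOpen_compl_iff.mp ?_
  convert hopen using 1
  ext A
  have h : (φ A : (Fin n → ℂ) →ₗ[ℂ] (Fin n → ℂ)).rank = (A.rank : Cardinal) := by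
    rw [Matrix.rank, LinearMap.rank, Module.finrank_eq_rank]
    rfl
  simp only [Set.mem_compl_iff, Set.mem_ofPred_eq, Set.mem_preimage, h, Nat.cast_le]
  omega

/-- The entries of the powers of the Jordan matrix attached to a partition. -/
theorem jordanOfPartition_pow_apply (n : ℕ) (l : ℕ → ℕ) (k : ℕ) (i j : Fin n)
    [Decidable ((i : ℕ) = j + k ∧
      ∀ m : ℕ, ¬ ((j : ℕ) < ∑ t ∈ Finset.range m, l t ∧ ∑ t ∈ Finset.range m, l t ≤ j + k))] :
    (jordanOfPartition n l ^ k) i j = if (i : ℕ) = j + k ∧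
      ∀ m : ℕ, ¬ ((j : ℕ) < ∑ t ∈ Finset.range m, l t ∧ ∑ t ∈ Finset.range m, l t ≤ j + k)
      then 1 else 0 := by
  classical
  induction k generalizing i j with
  | zero =>
    simp [Matrix.one_apply, Fin.ext_iff]
  | succ k ih =>
    rw [pow_succ, Matrix.mul_apply]
    by_cases hj : (j : ℕ) + 1 < n
    · rw [Finset.sum_eq_single (⟨j + 1, hj⟩ : Fin n)]
      · rw [ih]
        simp only [jordanOfPartition, Matrix.of_apply, mul_ite, mul_one, mul_zero, true_and,
          ← ite_and]
        congr 1
        apply propext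
        constructor
        · rintro ⟨h1, h2, h3⟩
          refine ⟨by omega, fun m => ?_⟩
          have := h1 m
          have := h3 m
          omega
        · rintro ⟨h1, h2⟩
          refine ⟨fun m => ?_, by omega, fun m => ?_⟩
          · have := h2 m
            omega
          · have := h2 m
            omega
      · intro x _ hx
        have : ¬ (x : ℕ) = j + 1 := fun h => hx (Fin.ext h)
        simp [jordanOfPartition, this]
      · simp
    · rw [Finset.sum_eq_zero, if_neg]
      · have := i.2
        omega
      · intro x _
        have : ¬ (x : ℕ) = j + 1 := by
          have := x.2
          omega
        simp [jordanOfPartition, this]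

/-- Counting the positions that stay inside their block after moving `k` steps. -/
theorem card_filter_no_partial_sum (l : ℕ → ℕ) (k K : ℕ) :
    ((Finset.range (∑ t ∈ Finset.range K, l t)).filter fun j =>
      ∀ m ≤ K, ¬ (j < ∑ t ∈ Finset.range m, l t ∧ ∑ t ∈ Finset.range m, l t ≤ j + k)).card
      = ∑ t ∈ Finset.range K, (l t - k) := by
  induction K with
  | zero => simp
  | succ K ih =>
    rw [Finset.sum_range_succ (fun t => l t - k), ← ih]
    have hmono : ∀ m ≤ K, ∑ t ∈ Finset.range m, l t ≤ ∑ t ∈ Finset.range K, l t := fun m hm =>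
      Finset.sum_le_sum_of_subset (Finset.range_mono hm)
    set P := ∑ t ∈ Finset.range K, l t with hP
    have hcard : (Finset.Ico P (P + l K - k)).card = l K - k := by
      rw [Nat.card_Ico]
      omega
    rw [← hcard, ← Finset.card_union_of_disjoint]
    · congr 1
      ext j
      simp only [Finset.mem_filter, Finset.mem_range, Finset.mem_union, Finset.mem_Ico,
        Finset.sum_range_succ, ← hP]
      constructor
      · rintro ⟨h1, h2⟩
        have h3 := h2 (K + 1) le_rfl
        rw [Finset.sum_range_succ, ← hP] at h3
        by_cases hj : j < P
        · exact Or.inl ⟨hj, fun m hm => h2 m (by omega)⟩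
        · exact Or.inr (by omega)
      · rintro (⟨h1, h2⟩ | h1)
        · refine ⟨by omega, fun m hm => ?_⟩
          rcases Nat.lt_or_ge K m with h | h
          · obtain rfl : m = K + 1 := by omega
            have := h2 K le_rfl
            rw [Finset.sum_range_succ, ← hP]
            omega
          · exact h2 m h
        · refine ⟨by omega, fun m hm => ?_⟩
          rcases Nat.lt_or_ge K m with h | h
          · obtain rfl : m = K + 1 := by omega
            rw [Finset.sum_range_succ, ← hP]
            omega
          · have := hmono m h
            omega
    · rw [Finset.disjoint_left]
      intro j
      simp only [Finset.mem_filter, Finset.mem_range, Finset.mem_Ico]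
      omega

theorem IsPartitionFun.sum_range_eq {n k : ℕ} {l : ℕ → ℕ} (h : IsPartitionFun n l k) {m : ℕ}
    (hm : k ≤ m) : ∑ t ∈ Finset.range m, l t = n := by
  rw [← h.2.2.2]
  refine (Finset.sum_subset (Finset.range_mono hm) fun x _ hx => ?_).symm
  exact h.2.1 x (by simpa using hx)

/-- The rank of the `k`-th power of a nilpotent Jordan matrix. -/
theorem rank_jordanOfPartition_pow {n K : ℕ} {l : ℕ → ℕ} (h : IsPartitionFun n l K) (k : ℕ) :
    (jordanOfPartition n l ^ k).rank = ∑ t ∈ Finset.range K, (l t - k) := by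
  classical
  let good : ℕ → Prop := fun j =>
    ∀ m ≤ K, ¬ (j < ∑ t ∈ Finset.range m, l t ∧ ∑ t ∈ Finset.range m, l t ≤ j + k)
  have hgood : ∀ j : ℕ, good j →
      ∀ m : ℕ, ¬ (j < ∑ t ∈ Finset.range m, l t ∧ ∑ t ∈ Finset.range m, l t ≤ j + k) := by
    intro j hj m
    rcases le_total m K with hm | hm
    · exact hj m hm
    · rw [h.sum_range_eq hm, ← h.sum_range_eq le_rfl]
      exact hj K le_rfl
  have hlt : ∀ j : Fin n, good j → (j : ℕ) + k < n := by
    intro j hj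
    have := hj K le_rfl
    rw [h.sum_range_eq le_rfl] at this
    have := j.2
    omega
  let f : {j : Fin n // good j} → Fin n := fun j => ⟨j.1 + k, hlt j.1 j.2⟩
  have hf : Function.Injective f := by
    intro a b hab
    have := congrArg Fin.val hab
    exact Subtype.ext (Fin.ext (by simpa [f] using this))
  let b : {j : Fin n // good j} → (Fin n → ℂ) := fun j => Pi.single (f j) 1
  have hb : LinearIndependent ℂ b := by
    have := (Pi.basisFun ℂ (Fin n)).linearIndependent.comp f hf
    convert this using 1
    ext j
    simp [b]
  have hcol : ∀ j : {j : Fin n // good j}, (jordanOfPartition n l ^ k).col j.1 = b j := by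
    intro j
    ext i
    rw [Matrix.col_apply, jordanOfPartition_pow_apply]
    simp only [b, f, Pi.single_apply, Fin.ext_iff]
    congr 1
    exact propext ⟨fun h => h.1, fun h => ⟨h, hgood _ j.2⟩⟩
  have hcol0 : ∀ j : Fin n, ¬ good j → (jordanOfPartition n l ^ k).col j = 0 := by
    intro j hj
    ext i
    rw [Matrix.col_apply, jordanOfPartition_pow_apply, if_neg]
    · rfl
    · exact fun h => hj fun m _ => h.2 m
  have hspan : Submodule.span ℂ (Set.range (jordanOfPartition n l ^ k).col) =
      Submodule.span ℂ (Set.range b) := by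
    apply le_antisymm
    · rw [Submodule.span_le]
      rintro _ ⟨j, rfl⟩
      by_cases hj : good j
      · rw [hcol ⟨j, hj⟩]
        exact Submodule.subset_span ⟨_, rfl⟩
      · rw [hcol0 j hj]
        exact Submodule.zero_mem _
    · refine Submodule.span_mono ?_
      rintro _ ⟨j, rfl⟩
      exact ⟨j.1, hcol j⟩
  rw [Matrix.rank_eq_finrank_span_cols, hspan, finrank_span_eq_card hb,
    ← card_filter_no_partial_sum, h.sum_range_eq le_rfl, Fintype.card_subtype]
  refine Finset.card_bij (fun j _ => (j : ℕ)) ?_ ?_ ?_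
  · intro j hj
    simpa [good] using hj
  · intro i _ j _ hij
    exact Fin.ext hij
  · intro j hj
    rw [Finset.mem_filter, Finset.mem_range] at hj
    exact ⟨⟨j, hj.1⟩, by simpa [good] using hj.2, rfl⟩

/-- Comparing the ranks of all powers gives the dominance order. -/
theorem dominates_of_sum_tsub_le {n kl km : ℕ} {lam mu : ℕ → ℕ}
    (hlam : IsPartitionFun n lam kl) (hmu : IsPartitionFun n mu km)
    (h : ∀ k, ∑ t ∈ Finset.range km, (mu t - k) ≤ ∑ t ∈ Finset.range kl, (lam t - k)) (j : ℕ) :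
    ∑ i ∈ Finset.range j, mu i ≤ ∑ i ∈ Finset.range j, lam i := by
  set k := lam j with hk
  have hext : ∀ (l : ℕ → ℕ) (K N : ℕ), (∀ i, K ≤ i → l i = 0) → K ≤ N →
      ∑ t ∈ Finset.range K, (l t - k) = ∑ t ∈ Finset.range N, (l t - k) := by
    intro l K N hl hKN
    refine Finset.sum_subset (Finset.range_mono hKN) fun x _ hx => ?_
    rw [hl x (by simpa using hx), Nat.zero_sub]
  have hle : ∑ t ∈ Finset.range j, (mu t - k) ≤ ∑ t ∈ Finset.range j, (lam t - k) := by
    calc ∑ t ∈ Finset.range j, (mu t - k)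
        ≤ ∑ t ∈ Finset.range (km + j), (mu t - k) :=
          Finset.sum_le_sum_of_subset (Finset.range_mono (by omega))
      _ = ∑ t ∈ Finset.range km, (mu t - k) := (hext mu km _ hmu.2.1 (by omega)).symm
      _ ≤ ∑ t ∈ Finset.range kl, (lam t - k) := h k
      _ = ∑ t ∈ Finset.range (kl + j), (lam t - k) := hext lam kl _ hlam.2.1 (by omega)
      _ = ∑ t ∈ Finset.range j, (lam t - k) := by
          refine (Finset.sum_subset (Finset.range_mono (by omega)) fun x _ hx => ?_).symm
          have := hlam.2.2.1 j x (by simpa using hx)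
          omega
  calc ∑ t ∈ Finset.range j, mu t ≤ ∑ t ∈ Finset.range j, ((mu t - k) + k) :=
        Finset.sum_le_sum fun t _ => by omega
    _ ≤ ∑ t ∈ Finset.range j, ((lam t - k) + k) := by
        rw [Finset.sum_add_distrib, Finset.sum_add_distrib]
        omega
    _ = ∑ t ∈ Finset.range j, lam t := Finset.sum_congr rfl fun t ht => by
        have := hlam.2.2.1 t j (by rw [Finset.mem_range] at ht; omega)
        omega

/-- Conjugation by an invertible matrix does not change the ranks of powers. -/
theorem rank_conj_pow {n : ℕ} (g : GL (Fin n) ℂ) (A : Matrix (Fin n) (Fin n) ℂ) (k : ℕ) :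
    (((g : Matrix (Fin n) (Fin n) ℂ) * A * ((g⁻¹ : GL (Fin n) ℂ) : Matrix (Fin n) (Fin n) ℂ)) ^ k).rank
      = (A ^ k).rank := by
  rw [Units.conj_pow, Matrix.rank_mul_eq_left_of_isUnit_det, Matrix.rank_mul_eq_right_of_isUnit_det]
  · exact (Matrix.isUnit_iff_isUnit_det _).mp g.isUnit
  · exact (Matrix.isUnit_iff_isUnit_det _).mp (g⁻¹).isUnit

end RankBound

section Support

variable {ι : Type*}

/-- The nonzero entries of `M` lie in rows from `R` and columns from `Q`. -/
def SupportedOn (M : Matrix ι ι ℂ) (R Q : List ι) : Prop :=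
  ∀ i j, M i j ≠ 0 → i ∈ R ∧ j ∈ Q

theorem SupportedOn.zero (R Q : List ι) : SupportedOn (0 : Matrix ι ι ℂ) R Q :=
  fun _ _ h => absurd rfl h

theorem SupportedOn.mono {M : Matrix ι ι ℂ} {R Q R' Q' : List ι} (h : SupportedOn M R Q)
    (hR : R ⊆ R') (hQ : Q ⊆ Q') : SupportedOn M R' Q' :=
  fun i j hij => ⟨hR (h i j hij).1, hQ (h i j hij).2⟩

theorem SupportedOn.add {M N : Matrix ι ι ℂ} {R Q : List ι} (hM : SupportedOn M R Q)
    (hN : SupportedOn N R Q) : SupportedOn (M + N) R Q := by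
  intro i j hij
  by_cases h : M i j = 0
  · exact hN i j fun h' => hij (by simp [h, h'])
  · exact hM i j h

theorem SupportedOn.mul_eq_zero [Fintype ι] {M N : Matrix ι ι ℂ} {R Q R' Q' : List ι}
    (hM : SupportedOn M R Q) (hN : SupportedOn N R' Q') (h : List.Disjoint Q R') :
    M * N = 0 := by
  ext i j
  rw [Matrix.mul_apply, Matrix.zero_apply]
  refine Finset.sum_eq_zero fun x _ => ?_
  by_contra hne
  exact h (hM i x (left_ne_zero_of_mul hne)).2 (hN x j (right_ne_zero_of_mul hne)).1

/-- The entries of the list have consecutive weights starting at `L`. -/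
def IsRun (w : ι → ℤ) : ℤ → List ι → Prop
  | _, [] => True
  | L, a :: l => w a = L ∧ IsRun w (L + 1) l

theorem isRun_append {w : ι → ℤ} {L : ℤ} {A B : List ι} :
    IsRun w L (A ++ B) ↔ IsRun w L A ∧ IsRun w (L + A.length) B := by
  induction A generalizing L with
  | nil => simp [IsRun]
  | cons a A ih =>
    simp only [List.cons_append, IsRun, ih, List.length_cons, and_assoc, Nat.cast_add, Nat.cast_one]
    rw [show L + 1 + (A.length : ℤ) = L + (A.length + 1) by ring]

end Support

section ChainMatrix

variable {ι : Type*} [DecidableEq ι]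

/-- The nilpotent matrix sending each basis vector of the list to the next one, and the last
one to `0`. -/
noncomputable def chainMatrix : List ι → Matrix ι ι ℂ
  | [] => 0
  | [_] => 0
  | a :: b :: l => Matrix.single b a 1 + chainMatrix (b :: l)

/-- The matrix unit sending the basis vector `a` to the head of the list. -/
noncomputable def linkMatrix (a : ι) : List ι → Matrix ι ι ℂ
  | [] => 0
  | b :: _ => Matrix.single b a 1

/-- The matrix sending the entries of the first list to the entries of the second one. -/
noncomputable def matchMatrix : List ι → List ι → Matrix ι ι ℂ
  | b :: B, c :: C => Matrix.single c b 1 + matchMatrix B C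
  | _, _ => 0

/-- The sum of the chain matrices of a list of chains. -/
noncomputable def chainsMatrix (cs : List (List ι)) : Matrix ι ι ℂ :=
  (cs.map chainMatrix).sum

theorem chainMatrix_cons (a : ι) (l : List ι) :
    chainMatrix (a :: l) = linkMatrix a l + chainMatrix l := by
  cases l <;> simp [chainMatrix, linkMatrix]

theorem chainMatrix_append_singleton_append (A : List ι) (a : ι) (B : List ι) :
    chainMatrix ((A ++ [a]) ++ B) = chainMatrix (A ++ [a]) + linkMatrix a B + chainMatrix B := by
  induction A with
  | nil => simp [chainMatrix_cons, linkMatrix, chainMatrix]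
  | cons x A ih =>
    rw [List.cons_append, List.cons_append, chainMatrix_cons, ih, chainMatrix_cons]
    cases A <;> simp [linkMatrix, add_assoc]

theorem SupportedOn.single (i j : ι) : SupportedOn (Matrix.single i j (1 : ℂ)) [i] [j] := by
  intro i' j' h
  simp only [List.mem_singleton]
  by_contra hc
  exact h (Matrix.single_apply_of_ne _ _ _ _ _ fun h' => hc ⟨h'.1.symm, h'.2.symm⟩)

theorem supportedOn_linkMatrix (a : ι) (l : List ι) : SupportedOn (linkMatrix a l) l [a] := by
  cases l with
  | nil => exact SupportedOn.zero _ _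
  | cons b l => exact (SupportedOn.single b a).mono (by simp) (by simp)

theorem supportedOn_chainMatrix (l : List ι) : SupportedOn (chainMatrix l) l l := by
  induction l with
  | nil => exact SupportedOn.zero _ _
  | cons a l ih =>
    rw [chainMatrix_cons]
    exact ((supportedOn_linkMatrix a l).mono (by simp) (by simp)).add (ih.mono (by simp) (by simp))

theorem supportedOn_matchMatrix (B C : List ι) : SupportedOn (matchMatrix B C) C B := by
  induction B generalizing C with
  | nil => exact SupportedOn.zero _ _
  | cons b B ih =>
    cases C with
    | nil => exact SupportedOn.zero _ _
    | cons c C =>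
      exact ((SupportedOn.single c b).mono (by simp) (by simp)).add
        ((ih C).mono (by simp) (by simp))

theorem chainsMatrix_cons (l : List ι) (cs : List (List ι)) :
    chainsMatrix (l :: cs) = chainMatrix l + chainsMatrix cs := by
  simp [chainsMatrix]

theorem chainsMatrix_append (cs ds : List (List ι)) :
    chainsMatrix (cs ++ ds) = chainsMatrix cs + chainsMatrix ds := by
  simp [chainsMatrix]

theorem chainsMatrix_perm {cs ds : List (List ι)} (h : cs.Perm ds) :
    chainsMatrix cs = chainsMatrix ds :=
  (h.map _).sum_eq

theorem supportedOn_chainsMatrix (cs : List (List ι)) :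
    SupportedOn (chainsMatrix cs) cs.flatten cs.flatten := by
  induction cs with
  | nil => exact SupportedOn.zero _ _
  | cons l cs ih =>
    rw [chainsMatrix_cons]
    exact ((supportedOn_chainMatrix l).mono (by simp) (by simp)).add (ih.mono (by simp) (by simp))

variable [Fintype ι]

theorem matchMatrix_mul_linkMatrix (a : ι) {B C : List ι} (hB : B.Nodup)
    (hlen : C.length ≤ B.length) : matchMatrix B C * linkMatrix a B = linkMatrix a C := by
  cases B with
  | nil =>
    obtain rfl : C = [] := List.length_eq_zero_iff.mp (by simpa using hlen)
    simp [matchMatrix, linkMatrix]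
  | cons b B =>
    cases C with
    | nil => simp [matchMatrix, linkMatrix]
    | cons c C =>
      rw [matchMatrix, linkMatrix, add_mul, (supportedOn_matchMatrix B C).mul_eq_zero
        (SupportedOn.single b a)]
      · simp [linkMatrix]
      · simpa using (List.nodup_cons.mp hB).1

/-- Matching commutes with the shift along the two chains. -/
theorem matchMatrix_mul_chainMatrix {B C : List ι} (hBC : (B ++ C).Nodup)
    (hlen : C.length ≤ B.length) :
    matchMatrix B C * chainMatrix B = chainMatrix C * matchMatrix B C := by
  induction B generalizing C with
  | nil => simp [matchMatrix]
  | cons b B ih =>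
    cases C with
    | nil => simp [matchMatrix, chainMatrix]
    | cons c C =>
      have hbB : b ∉ B := fun h => by simp [h] at hBC
      have hcC : c ∉ C := (List.nodup_cons.mp (List.nodup_append.mp hBC).2.1).1
      have hB : B.Nodup := ((List.nodup_append.mp hBC).1).of_cons
      have hsub : (B ++ C).Nodup := hBC.sublist (by
        rw [List.cons_append]
        exact ((List.Sublist.refl B).append (List.sublist_cons_self c C)).cons b)
      have hlen' : C.length ≤ B.length := by simpa using hlen
      have e1 : Matrix.single c b (1 : ℂ) * linkMatrix b B = 0 :=
        (SupportedOn.single c b).mul_eq_zero (supportedOn_linkMatrix b B) (by simpa using hbB)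
      have e2 : Matrix.single c b (1 : ℂ) * chainMatrix B = 0 :=
        (SupportedOn.single c b).mul_eq_zero (supportedOn_chainMatrix B) (by simpa using hbB)
      have e3 : chainMatrix C * Matrix.single c b (1 : ℂ) = 0 :=
        (supportedOn_chainMatrix C).mul_eq_zero (SupportedOn.single c b) (by simpa using hcC)
      have e4 : linkMatrix c C * matchMatrix B C = 0 :=
        (supportedOn_linkMatrix c C).mul_eq_zero (supportedOn_matchMatrix B C) (by simpa using hcC)
      have e5 : linkMatrix c C * Matrix.single c b (1 : ℂ) = linkMatrix b C := by
        cases C <;> simp [linkMatrix]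
      rw [matchMatrix, chainMatrix_cons, chainMatrix_cons, add_mul, mul_add, mul_add, add_mul,
        mul_add, mul_add, e1, e2, e3, e4, e5, matchMatrix_mul_linkMatrix b hB hlen', ih hsub hlen']
      abel

end ChainMatrix

section Degeneration

variable {ι : Type*} [DecidableEq ι] [Fintype ι]

/-- `M` lies in the closure of the orbit of `N` under the centralizer of `S`. -/
def InOrbitClosure (S N M : Matrix ι ι ℂ) : Prop :=
  M ∈ closure {A : Matrix ι ι ℂ | ∃ h : GL ι ℂ, (h : Matrix ι ι ℂ) * S = S * (h : Matrix ι ι ℂ) ∧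
    A = (h : Matrix ι ι ℂ) * N * ((h⁻¹ : GL ι ℂ) : Matrix ι ι ℂ)}

theorem InOrbitClosure.refl (S N : Matrix ι ι ℂ) : InOrbitClosure S N N :=
  subset_closure ⟨1, by simp, by simp⟩

theorem InOrbitClosure.trans {S N M P : Matrix ι ι ℂ} (h₁ : InOrbitClosure S N M)
    (h₂ : InOrbitClosure S M P) : InOrbitClosure S N P := by
  refine closure_minimal ?_ isClosed_closure h₂
  rintro _ ⟨h, hS, rfl⟩
  have hcont : Continuous fun A : Matrix ι ι ℂ =>
      (h : Matrix ι ι ℂ) * A * ((h⁻¹ : GL ι ℂ) : Matrix ι ι ℂ) := by fun_prop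
  refine map_mem_closure (f := fun A : Matrix ι ι ℂ =>
    (h : Matrix ι ι ℂ) * A * ((h⁻¹ : GL ι ℂ) : Matrix ι ι ℂ)) hcont h₁ ?_
  rintro _ ⟨k, hk, rfl⟩
  refine ⟨h * k, ?_, ?_⟩
  · rw [Units.val_mul, mul_assoc, hk, ← mul_assoc, hS, mul_assoc]
  · rw [mul_inv_rev, Units.val_mul, Units.val_mul]
    simp only [mul_assoc]

theorem InOrbitClosure.of_intertwine {S N M : Matrix ι ι ℂ} (h : GL ι ℂ)
    (hS : (h : Matrix ι ι ℂ) * S = S * (h : Matrix ι ι ℂ))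
    (hNM : (h : Matrix ι ι ℂ) * N = M * (h : Matrix ι ι ℂ)) : InOrbitClosure S N M :=
  subset_closure ⟨h, hS, by rw [hNM, mul_assoc, Units.mul_inv, mul_one]⟩

theorem InOrbitClosure.of_limit {S N : Matrix ι ι ℂ} {F : ℂ → Matrix ι ι ℂ} (hF : Continuous F)
    (h : ∀ t, t ≠ 0 → InOrbitClosure S N (F t)) : InOrbitClosure S N (F 0) := by
  have h0 : (0 : ℂ) ∈ closure {t : ℂ | t ≠ 0} := by
    have := dense_compl_singleton (0 : ℂ) 0
    exact this
  have := map_mem_closure hF h0 (t := closure _) fun t ht => h t ht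
  rwa [closure_closure] at this

/-- The diagonal grading matrix of a weight function. -/
noncomputable def gradingMatrix (w : ι → ℤ) : Matrix ι ι ℂ :=
  Matrix.diagonal fun i => ((-2 * w i : ℤ) : ℂ)

theorem gradingMatrix_mul_single_sub (w : ι → ℤ) (i j : ι) :
    gradingMatrix w * Matrix.single i j 1 - Matrix.single i j 1 * gradingMatrix w
      = ((-2 * (w i - w j) : ℤ) : ℂ) • Matrix.single i j 1 := by
  ext x y
  simp only [gradingMatrix, Matrix.sub_apply, Matrix.diagonal_mul, Matrix.mul_diagonal,
    Matrix.smul_apply, Matrix.single_apply, smul_eq_mul]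
  split_ifs with h
  · obtain ⟨rfl, rfl⟩ := h
    push_cast
    ring
  · simp

theorem gradingMatrix_comm_chainMatrix {w : ι → ℤ} {L : ℤ} {l : List ι} (h : IsRun w L l) :
    gradingMatrix w * chainMatrix l - chainMatrix l * gradingMatrix w
      = (-2 : ℂ) • chainMatrix l := by
  induction l generalizing L with
  | nil => simp [chainMatrix]
  | cons a l ih =>
    have hlink : gradingMatrix w * linkMatrix a l - linkMatrix a l * gradingMatrix w
        = (-2 : ℂ) • linkMatrix a l := by
      cases l with
      | nil => simp [linkMatrix]
      | cons b l =>
        rw [linkMatrix, gradingMatrix_mul_single_sub, h.1, h.2.1]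
        norm_num
    rw [chainMatrix_cons, mul_add, add_mul, add_sub_add_comm, hlink, ih h.2, smul_add]

theorem gradingMatrix_mul_matchMatrix {w : ι → ℤ} {L : ℤ} {B C : List ι} (hB : IsRun w L B)
    (hC : IsRun w L C) :
    matchMatrix B C * gradingMatrix w = gradingMatrix w * matchMatrix B C := by
  induction B generalizing C L with
  | nil => simp [matchMatrix]
  | cons b B ih =>
    cases C with
    | nil => simp [matchMatrix]
    | cons c C =>
      have := gradingMatrix_mul_single_sub w c b
      rw [hB.1, hC.1, sub_self, mul_zero, Int.cast_zero, zero_smul, sub_eq_zero] at this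
      rw [matchMatrix, add_mul, mul_add, ih hB.2 hC.2, this]

/-- Moving the tail `B` of a chain away in favour of a chain `C` that starts in the same weight
and is at most as long is a degeneration. -/
theorem inOrbitClosure_exchange {w : ι → ℤ} {L : ℤ} {A B C : List ι} (cs : List (List ι))
    (hnd : ((A ++ B) ++ (C ++ cs.flatten)).Nodup) (hB : IsRun w L B) (hC : IsRun w L C)
    (hlen : C.length ≤ B.length) :
    InOrbitClosure (gradingMatrix w) (chainsMatrix ((A ++ B) :: C :: cs))
      (chainsMatrix ((A ++ C) :: B :: cs)) := by
  obtain rfl | ⟨A, a, rfl⟩ := List.eq_nil_or_concat' A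
  · have : chainsMatrix (([] ++ C) :: B :: cs) = chainsMatrix (([] ++ B) :: C :: cs) :=
      chainsMatrix_perm (List.Perm.swap _ _ _)
    rw [this]
    exact InOrbitClosure.refl _ _
  have hndBC : (B ++ C).Nodup := hnd.sublist (by
    rw [List.append_assoc, ← List.append_assoc B]
    exact (List.sublist_append_left _ _).trans (List.sublist_append_right _ _))
  have hndB : B.Nodup := (List.nodup_append.mp hndBC).1
  have hBC : List.Disjoint B C := List.disjoint_of_nodup_append hndBC
  have haB : a ∉ B := fun h => by
    rw [List.append_assoc] at hnd
    exact List.disjoint_of_nodup_append hnd (a := a) (by simp) (by simp [h])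
  have haC : a ∉ C := fun h =>
    List.disjoint_of_nodup_append hnd (a := a) (by simp) (by simp [h])
  set D := (A ++ [a]) ++ cs.flatten with hD
  have hDB : List.Disjoint D B := by
    intro x hx hxB
    rw [hD, List.mem_append] at hx
    rcases hx with hx | hx
    · rw [List.append_assoc] at hnd
      exact List.disjoint_of_nodup_append hnd hx (by simp [hxB])
    · exact List.disjoint_of_nodup_append hnd (a := x) (by simp [hxB]) (by simp [hx])
  have hDC : List.Disjoint D C := by
    intro x hx hxC
    rw [hD, List.mem_append] at hx
    rcases hx with hx | hx
    · exact List.disjoint_of_nodup_append hnd (a := x) (List.mem_append_left _ hx)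
        (by simp [hxC])
    · exact List.disjoint_of_nodup_append (List.nodup_append.mp hnd).2.1 hxC hx
  set X := chainMatrix (A ++ [a]) + chainsMatrix cs with hXdef
  have hX : SupportedOn X D D :=
    ((supportedOn_chainMatrix _).mono (by simp [hD]) (by simp [hD])).add
      ((supportedOn_chainsMatrix cs).mono (by simp [hD]) (by simp [hD]))
  set Φ := matchMatrix B C with hΦdef
  have hΦ : SupportedOn Φ C B := supportedOn_matchMatrix B C
  set N := chainsMatrix (((A ++ [a]) ++ B) :: C :: cs) with hNdef
  have hN : N = X + linkMatrix a B + chainMatrix B + chainMatrix C := by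
    rw [hNdef, chainsMatrix_cons, chainsMatrix_cons, chainMatrix_append_singleton_append, hXdef]
    abel
  -- the unipotent part of the exchange
  have hΦΦ : Φ * Φ = 0 := hΦ.mul_eq_zero hΦ hBC
  have hcomm : Φ * N = N * Φ + linkMatrix a C := by
    rw [hN]
    simp only [mul_add, add_mul]
    rw [hΦ.mul_eq_zero hX hDB.symm, hX.mul_eq_zero hΦ hDC,
      matchMatrix_mul_linkMatrix a hndB hlen, matchMatrix_mul_chainMatrix hndBC hlen,
      hΦ.mul_eq_zero (supportedOn_chainMatrix C) hBC,
      (supportedOn_linkMatrix a B).mul_eq_zero hΦ (by simpa using haC),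
      (supportedOn_chainMatrix B).mul_eq_zero hΦ hBC]
    abel
  have hlinkΦ : linkMatrix a C * Φ = 0 :=
    (supportedOn_linkMatrix a C).mul_eq_zero hΦ (by simpa using haC)
  have hΦS : Φ * gradingMatrix w = gradingMatrix w * Φ := gradingMatrix_mul_matchMatrix hB hC
  let u : GL ι ℂ := ⟨1 + Φ, 1 - Φ, by
    rw [mul_sub, add_mul, add_mul, hΦΦ]; simp, by
    rw [sub_mul, mul_add, mul_add, hΦΦ]; simp⟩
  have hu : (u : Matrix ι ι ℂ) = 1 + Φ := rfl
  have h1 : InOrbitClosure (gradingMatrix w) N (N + linkMatrix a C) := by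
    refine InOrbitClosure.of_intertwine u ?_ ?_
    · rw [hu, add_mul, mul_add, hΦS, one_mul, mul_one]
    · rw [hu, add_mul, mul_add, add_mul N _ Φ, hcomm, hlinkΦ]
      simp only [one_mul, mul_one]
      abel
  -- the one-parameter subgroup scaling `B`
  let F : ℂ → Matrix ι ι ℂ := fun t =>
    X + t • linkMatrix a B + chainMatrix B + chainMatrix C + linkMatrix a C
  have hF : Continuous F := by
    simp only [F]
    fun_prop
  have hF0 : F 0 = chainsMatrix (((A ++ [a]) ++ C) :: B :: cs) := by
    rw [chainsMatrix_cons, chainsMatrix_cons, chainMatrix_append_singleton_append]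
    simp only [F, hXdef, zero_smul]
    abel
  rw [← hF0]
  refine h1.trans (InOrbitClosure.of_limit hF fun t ht => ?_)
  let τ : ℂ → ι → ℂ := fun s i => if i ∈ B then s else 1
  have hτ : ∀ s, s ≠ 0 → Matrix.diagonal (τ s) * Matrix.diagonal (τ s⁻¹) = 1 := by
    intro s hs
    rw [Matrix.diagonal_mul_diagonal, ← Matrix.diagonal_one]
    congr 1
    ext i
    by_cases hi : i ∈ B <;> simp [τ, hi, hs]
  let T : GL ι ℂ := ⟨Matrix.diagonal (τ t), Matrix.diagonal (τ t⁻¹), hτ t ht, by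
    simpa using hτ t⁻¹ (inv_ne_zero ht)⟩
  have hT : (T : Matrix ι ι ℂ) = Matrix.diagonal (τ t) := rfl
  -- scaling fixes matrices supported away from `B`
  have hrow : ∀ {M : Matrix ι ι ℂ} {R Q : List ι}, SupportedOn M R Q → List.Disjoint R B →
      Matrix.diagonal (τ t) * M = M := by
    intro M R Q hM hR
    ext i j
    rw [Matrix.diagonal_mul]
    by_cases hij : M i j = 0
    · simp [hij]
    · have hi : i ∉ B := fun h => hR (hM i j hij).1 h
      simp [τ, hi]
  have hcol : ∀ {M : Matrix ι ι ℂ} {R Q : List ι}, SupportedOn M R Q → List.Disjoint Q B →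
      M * Matrix.diagonal (τ t) = M := by
    intro M R Q hM hQ
    ext i j
    rw [Matrix.mul_diagonal]
    by_cases hij : M i j = 0
    · simp [hij]
    · have hj : j ∉ B := fun h => hQ (hM i j hij).2 h
      simp [τ, hj]
  have hrowB : ∀ {M : Matrix ι ι ℂ} {Q : List ι}, SupportedOn M B Q →
      Matrix.diagonal (τ t) * M = t • M := by
    intro M Q hM
    ext i j
    rw [Matrix.diagonal_mul, Matrix.smul_apply, smul_eq_mul]
    by_cases hij : M i j = 0
    · simp [hij]
    · simp [τ, (hM i j hij).1]
  have hcolB : ∀ {M : Matrix ι ι ℂ} {R : List ι}, SupportedOn M R B →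
      M * Matrix.diagonal (τ t) = t • M := by
    intro M R hM
    ext i j
    rw [Matrix.mul_diagonal, Matrix.smul_apply, smul_eq_mul, mul_comm]
    by_cases hij : M i j = 0
    · simp [hij]
    · simp [τ, (hM i j hij).2]
  have ha : List.Disjoint [a] B := by simpa using haB
  refine InOrbitClosure.of_intertwine T ?_ ?_
  · rw [hT, gradingMatrix, Matrix.diagonal_mul_diagonal, Matrix.diagonal_mul_diagonal]
    simp only [mul_comm]
  · rw [hT, hN]
    simp only [F, mul_add, add_mul, Matrix.smul_mul]
    rw [hrow hX hDB, hcol hX hDB, hrowB (supportedOn_linkMatrix a B),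
      hcol (supportedOn_linkMatrix a B) ha, hrowB (supportedOn_chainMatrix B),
      hcolB (supportedOn_chainMatrix B), hrow (supportedOn_chainMatrix C) hBC.symm,
      hcol (supportedOn_chainMatrix C) hBC.symm, hrow (supportedOn_linkMatrix a C) hBC.symm,
      hcol (supportedOn_linkMatrix a C) ha]

end Degeneration

section Chains

variable {ι : Type*} [DecidableEq ι] [Fintype ι]

/-- The chains `cs` degenerate to the chains `cs'` in the presence of arbitrary further chains. -/
def Degenerates (w : ι → ℤ) (cs cs' : List (List ι)) : Prop :=
  cs.flatten.Perm cs'.flatten ∧ ∀ ctx : List (List ι), (ctx ++ cs).flatten.Nodup →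
    InOrbitClosure (gradingMatrix w) (chainsMatrix (ctx ++ cs)) (chainsMatrix (ctx ++ cs'))

theorem Degenerates.of_perm {w : ι → ℤ} {cs cs' : List (List ι)} (h : cs.Perm cs') :
    Degenerates w cs cs' := by
  refine ⟨h.flatten, fun ctx _ => ?_⟩
  rw [chainsMatrix_perm (h.append_left ctx)]
  exact InOrbitClosure.refl _ _

theorem Degenerates.trans {w : ι → ℤ} {cs cs' cs'' : List (List ι)} (h₁ : Degenerates w cs cs')
    (h₂ : Degenerates w cs' cs'') : Degenerates w cs cs'' := by
  refine ⟨h₁.1.trans h₂.1, fun ctx hctx => (h₁.2 ctx hctx).trans (h₂.2 ctx ?_)⟩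
  rw [List.flatten_append] at hctx ⊢
  exact ((h₁.1.append_left _).nodup_iff).mp hctx

theorem Degenerates.cons {w : ι → ℤ} {cs cs' : List (List ι)} (h : Degenerates w cs cs')
    (l : List ι) : Degenerates w (l :: cs) (l :: cs') := by
  refine ⟨?_, fun ctx hctx => ?_⟩
  · simpa using h.1.append_left l
  · have := h.2 (ctx ++ [l]) (by simpa using hctx)
    simpa using this

theorem Degenerates.exchange {w : ι → ℤ} {L : ℤ} {A B C : List ι} (cs : List (List ι))
    (hB : IsRun w L B) (hC : IsRun w L C) (hlen : C.length ≤ B.length) :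
    Degenerates w ((A ++ B) :: C :: cs) (B :: (A ++ C) :: cs) := by
  have hperm : ∀ (D E : List ι) (ctx : List (List ι)),
      (ctx ++ D :: E :: cs).Perm (D :: E :: (ctx ++ cs)) := fun D E ctx =>
    List.perm_middle.trans (List.perm_middle.cons D)
  refine ⟨?_, fun ctx hctx => ?_⟩
  · rw [List.perm_iff_count]
    intro x
    simp only [List.flatten_cons, List.count_append]
    omega
  · have hnd := ((hperm (A ++ B) C ctx).flatten.nodup_iff).mp hctx
    rw [List.flatten_cons, List.flatten_cons] at hnd
    have := inOrbitClosure_exchange (ctx ++ cs) hnd hB hC hlen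
    rwa [chainsMatrix_perm (hperm _ _ ctx), chainsMatrix_perm (hperm B _ ctx),
      chainsMatrix_perm (List.Perm.swap (A ++ C) B (ctx ++ cs))]

/-- The chains are placed so that the first one starts at weight `d - m`, where `m` is the first
part of `μ`, and the end of each chain is the value of `d` for the next one. The values of `d`
stay nonnegative and end at `0`. -/
def IsPlaced (w : ι → ℤ) : ℤ → List ℕ → List (List ι) → Prop
  | d, [], [] => d = 0
  | d, m :: μ, l :: cs => 0 ≤ d ∧ IsRun w (d - m) l ∧ IsPlaced w (d - m + l.length) μ cs
  | _, _, _ => False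

/-- At a local maximum of the offsets a chain of the required length can be split off. -/
theorem IsPlaced.exists_split {w : ι → ℤ} {d : ℤ} {m : ℕ} {μ : List ℕ} {l : List ι}
    {cs : List (List ι)} (h : IsPlaced w d (m :: μ) (l :: cs)) (hml : m ≤ l.length)
    (hcs : cs ≠ []) (hμ : (m :: μ).Pairwise (· ≥ ·)) :
    ∃ (B : List ι) (ν : List ℕ) (ds : List (List ι)), ν.Sublist (m :: μ) ∧
      (m :: μ).Perm (B.length :: ν) ∧ IsPlaced w d ν ds ∧
      Degenerates w (l :: cs) (B :: ds) := by
  induction cs generalizing d m μ l with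
  | nil => exact absurd rfl hcs
  | cons l' cs ih =>
    cases μ with
    | nil => exact h.2.2.elim
    | cons m' μ =>
      obtain ⟨hd, hl, hd', hl', hrest⟩ := h
      have hmm' : m' ≤ m := (List.pairwise_cons.mp hμ).1 m' (by simp)
      rcases le_or_gt l'.length m' with hle | hlt
      · set A := l.take (l.length - m') with hA
        set B := l.drop (l.length - m') with hB
        have hAlen : A.length = l.length - m' := by simp [hA]
        have hBlen : B.length = m' := by simp only [hB, List.length_drop]; omega
        have hAB : l = A ++ B := (List.take_append_drop _ l).symm
        have hrun : IsRun w (d - m) A ∧ IsRun w (d - m + A.length) B := by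
          rw [← isRun_append, ← hAB]
          exact hl
        have hstart : d - (m : ℤ) + A.length = d - m + l.length - m' := by
          rw [hAlen]
          omega
        refine ⟨B, m :: μ, (A ++ l') :: cs, ?_, ?_, ⟨hd, ?_, ?_⟩, ?_⟩
        · exact (List.sublist_cons_self m' μ).cons_cons m
        · rw [hBlen]
          exact List.Perm.swap _ _ _
        · rw [isRun_append, hstart]
          exact ⟨hrun.1, hl'⟩
        · rw [List.length_append, Nat.cast_add, ← add_assoc, hstart]
          exact hrest
        · rw [hAB]
          refine Degenerates.exchange cs hrun.2 ?_ (by omega)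
          rw [hstart]
          exact hl'
      · have hcs' : cs ≠ [] := by
          rintro rfl
          cases μ with
          | nil =>
            have : d - (m : ℤ) + l.length - m' + l'.length = 0 := hrest
            omega
          | cons => exact hrest.elim
        obtain ⟨B, ν, ds, hsub, hperm, hpl, hdeg⟩ :=
          ih ⟨hd', hl', hrest⟩ hlt.le hcs' (List.pairwise_cons.mp hμ).2
        refine ⟨B, m :: ν, l :: ds, hsub.cons_cons m, ?_, ⟨hd, hl, hpl⟩, ?_⟩
        · exact (hperm.cons m).trans (List.Perm.swap _ _ _)
        · exact (hdeg.cons l).trans (Degenerates.of_perm (List.Perm.swap _ _ _))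

/-- Suitably placed chains degenerate to chains whose lengths are the parts of `μ`. -/
theorem IsPlaced.exists_degenerates {w : ι → ℤ} {μ : List ℕ} {cs : List (List ι)}
    (h : IsPlaced w 0 μ cs) (hμ : μ.Pairwise (· ≥ ·)) :
    ∃ ds : List (List ι), Degenerates w cs ds ∧ (ds.map List.length).Perm μ := by
  induction hk : μ.length generalizing μ cs with
  | zero =>
    obtain rfl := List.length_eq_zero_iff.mp hk
    cases cs with
    | nil => exact ⟨[], Degenerates.of_perm (List.Perm.refl _), by simp⟩
    | cons => exact h.elim
  | succ k ih =>
    cases μ with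
    | nil => simp at hk
    | cons m μ =>
      cases cs with
      | nil => exact h.elim
      | cons l cs =>
        by_cases hcs : cs = []
        · subst hcs
          cases μ with
          | nil =>
            refine ⟨[l], Degenerates.of_perm (List.Perm.refl _), ?_⟩
            have : (0 : ℤ) - m + l.length = 0 := h.2.2
            have hlm : l.length = m := by omega
            simp [hlm]
          | cons => exact h.2.2.elim
        · have hml : m ≤ l.length := by
            obtain ⟨-, -, h3⟩ := h
            cases cs with
            | nil => exact absurd rfl hcs
            | cons l' cs =>
              cases μ with
              | nil => exact h3.elim
              | cons m' μ =>
                have := h3.1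
                omega
          obtain ⟨B, ν, ds, hsub, hperm, hpl, hdeg⟩ := h.exists_split hml hcs hμ
          have hlen := hperm.length_eq
          obtain ⟨es, hes, hlens⟩ := ih hpl (hμ.sublist hsub) (by simp at hlen hk; omega)
          refine ⟨B :: es, hdeg.trans (hes.cons B), ?_⟩
          rw [List.map_cons]
          exact (hlens.cons _).trans hperm.symm

end Chains

section Placement

variable {ι : Type*}

theorem IsRun.congr {w w' : ι → ℤ} {L : ℤ} {l : List ι} (h : IsRun w L l)
    (hw : ∀ x ∈ l, w x = w' x) : IsRun w' L l := by
  induction l generalizing L with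
  | nil => trivial
  | cons a l ih =>
    exact ⟨(hw a (by simp)).symm.trans h.1, ih h.2 fun x hx => hw x (by simp [hx])⟩

theorem IsPlaced.congr {w w' : ι → ℤ} {d : ℤ} {μ : List ℕ} {cs : List (List ι)}
    (h : IsPlaced w d μ cs) (hw : ∀ x ∈ cs.flatten, w x = w' x) : IsPlaced w' d μ cs := by
  induction cs generalizing d μ with
  | nil => cases μ <;> exact h
  | cons l cs ih =>
    cases μ with
    | nil => exact h.elim
    | cons m μ =>
      exact ⟨h.1, h.2.1.congr fun x hx => hw x (by simp [hx]),
        ih h.2.2 fun x hx => hw x (by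
          rw [List.flatten_cons]
          exact List.mem_append_right _ hx)⟩

theorem exists_isRun [DecidableEq ι] {l : List ι} (hl : l.Nodup) (L : ℤ) (w : ι → ℤ) :
    ∃ w' : ι → ℤ, IsRun w' L l ∧ ∀ x ∉ l, w' x = w x := by
  induction l generalizing L with
  | nil => exact ⟨w, trivial, fun _ _ => rfl⟩
  | cons a l ih =>
    obtain ⟨w', h1, h2⟩ := ih hl.of_cons (L + 1)
    refine ⟨Function.update w' a L, ⟨by simp, h1.congr fun x hx => ?_⟩, fun x hx => ?_⟩
    · have : x ≠ a := fun h => (List.nodup_cons.mp hl).1 (h ▸ hx)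
      simp [this]
    · rw [List.mem_cons, not_or] at hx
      simp [hx.1, h2 x hx.2]

/-- Disjoint chains whose lengths dominate `μ` can be placed. -/
theorem exists_isPlaced [DecidableEq ι] {d : ℤ} {μ : List ℕ} {cs : List (List ι)}
    (hnd : cs.flatten.Nodup) (hlen : cs.length = μ.length)
    (hdom : ∀ j, ((μ.take j).sum : ℤ) ≤ d + ((cs.map List.length).take j).sum)
    (hsum : (μ.sum : ℤ) = d + (cs.map List.length).sum) : ∃ w : ι → ℤ, IsPlaced w d μ cs := by
  induction cs generalizing d μ with
  | nil =>
    obtain rfl := List.length_eq_zero_iff.mp hlen.symm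
    exact ⟨0, show d = 0 by simpa using hsum.symm⟩
  | cons l cs ih =>
    cases μ with
    | nil => simp at hlen
    | cons m μ =>
      rw [List.flatten_cons] at hnd
      obtain ⟨w, hw⟩ := ih (d := d - m + l.length) (μ := μ) (List.nodup_append.mp hnd).2.1
        (by simpa using hlen)
        (fun j => by
          have := hdom (j + 1)
          simp only [List.map_cons, List.take_succ_cons, List.sum_cons, Nat.cast_add] at this
          linarith)
        (by
          simp only [List.map_cons, List.sum_cons, Nat.cast_add] at hsum
          linarith)
      obtain ⟨w', hw', hagree⟩ := exists_isRun (List.nodup_append.mp hnd).1 (d - m) w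
      refine ⟨w', by simpa using hdom 0, hw', hw.congr fun x hx => ?_⟩
      exact (hagree x fun hx' => List.disjoint_of_nodup_append hnd hx' hx).symm

theorem IsPlaced.grading_comm [DecidableEq ι] [Fintype ι] {w : ι → ℤ} {d : ℤ} {μ : List ℕ}
    {cs : List (List ι)} (h : IsPlaced w d μ cs) :
    gradingMatrix w * chainsMatrix cs - chainsMatrix cs * gradingMatrix w
      = (-2 : ℂ) • chainsMatrix cs := by
  induction cs generalizing d μ with
  | nil => simp [chainsMatrix]
  | cons l cs ih =>
    cases μ with
    | nil => exact h.elim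
    | cons m μ =>
      rw [chainsMatrix_cons, mul_add, add_mul, add_sub_add_comm,
        gradingMatrix_comm_chainMatrix h.2.1, ih h.2.2, smul_add]

end Placement

section Jordan

theorem exists_flatten_eq_map_length_eq {α : Type*} (sz : List ℕ) (l : List α)
    (h : sz.sum = l.length) :
    ∃ cs : List (List α), cs.flatten = l ∧ cs.map List.length = sz := by
  induction sz generalizing l with
  | nil =>
    obtain rfl := List.length_eq_zero_iff.mp h.symm
    exact ⟨[], rfl, rfl⟩
  | cons a sz ih =>
    rw [List.sum_cons] at h
    obtain ⟨cs, h1, h2⟩ := ih (l.drop a) (by simp; omega)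
    refine ⟨l.take a :: cs, by simp [h1], ?_⟩
    rw [List.map_cons, h2, List.length_take, min_eq_left (by omega)]

theorem exists_perm_map_eq {α β : Type*} (f : α → β) {l : List α} {v : List β}
    (h : (l.map f).Perm v) : ∃ l' : List α, l.Perm l' ∧ l'.map f = v := by
  have hf : List.Forall₂ (fun b a => f a = b) (l.map f) l := by
    rw [List.forall₂_map_left_iff]
    exact List.forall₂_same.mpr fun _ _ => rfl
  obtain ⟨l', h1, h2⟩ := List.perm_comp_forall₂ h.symm hf
  refine ⟨l', h2.symm, ?_⟩
  rw [← List.forall₂_eq_eq_eq, List.forall₂_map_left_iff]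
  exact h1.flip

variable {ι : Type*} [DecidableEq ι]

theorem chainMatrix_getElem {l : List ι} (hl : l.Nodup) (p q : ℕ) (hp : p < l.length)
    (hq : q < l.length) : chainMatrix l l[p] l[q] = if p = q + 1 then 1 else 0 := by
  induction l generalizing p q with
  | nil => simp at hp
  | cons a l ih =>
    have ha := (List.nodup_cons.mp hl).1
    rw [chainMatrix_cons, Matrix.add_apply]
    have hrow : ∀ (x y : ι), x ∉ l → chainMatrix l x y = 0 := fun x y hx => by
      by_contra h
      exact hx (supportedOn_chainMatrix l x y h).1
    have hcol : ∀ (x y : ι), y ∉ l → chainMatrix l x y = 0 := fun x y hx => by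
      by_contra h
      exact hx (supportedOn_chainMatrix l x y h).2
    have hlrow : ∀ (x y : ι), x ∉ l → linkMatrix a l x y = 0 := fun x y hx => by
      by_contra h
      exact hx (supportedOn_linkMatrix a l x y h).1
    have hlcol : ∀ (x y : ι), y ≠ a → linkMatrix a l x y = 0 := fun x y hx => by
      by_contra h
      exact hx (by simpa using (supportedOn_linkMatrix a l x y h).2)
    cases p with
    | zero => simp [hrow _ _ ha, hlrow _ _ ha]
    | succ p =>
      have hp' : p < l.length := by simpa using hp
      cases q with
      | zero =>
        simp only [List.getElem_cons_succ, List.getElem_cons_zero, hcol _ _ ha, add_zero]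
        cases l with
        | nil => simp at hp'
        | cons b l =>
          rw [linkMatrix, Matrix.single_apply]
          congr 1
          have := (List.Nodup.getElem_inj_iff hl.of_cons (i := 0) (j := p) (hi := by simp)
            (hj := hp'))
          simp only [List.getElem_cons_zero] at this
          rw [this]
          simp only [and_true, eq_iff_iff]
          omega
      | succ q =>
        have hq' : q < l.length := by simpa using hq
        have hne : l[q] ≠ a := fun h => ha (h ▸ List.getElem_mem hq')
        simp only [List.getElem_cons_succ, hlcol _ _ hne, zero_add]
        rw [ih hl.of_cons p q hp' hq']
        simp

open Classical in
/-- The entries of a chain matrix in the order given by the concatenated chains. -/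
theorem chainsMatrix_getElem {cs : List (List ι)} (hnd : cs.flatten.Nodup) (p q : ℕ)
    (hp : p < cs.flatten.length) (hq : q < cs.flatten.length) :
    chainsMatrix cs cs.flatten[p] cs.flatten[q] =
      if p = q + 1 ∧ ∀ m : ℕ, ((cs.map List.length).take m).sum ≠ p then 1 else 0 := by
  induction cs generalizing p q with
  | nil => simp at hp
  | cons l cs ih =>
    simp only [List.flatten_cons] at hnd hp hq ⊢
    have hdisj := List.disjoint_of_nodup_append hnd
    rw [chainsMatrix_cons, Matrix.add_apply]
    have hl0 : ∀ x y, (x ∈ cs.flatten ∨ y ∈ cs.flatten) → chainMatrix l x y = 0 := by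
      intro x y hxy
      by_contra h
      have := supportedOn_chainMatrix l x y h
      rcases hxy with hx | hy
      · exact hdisj this.1 hx
      · exact hdisj this.2 hy
    have hcs0 : ∀ x y, (x ∈ l ∨ y ∈ l) → chainsMatrix cs x y = 0 := by
      intro x y hxy
      by_contra h
      have := supportedOn_chainsMatrix cs x y h
      rcases hxy with hx | hy
      · exact hdisj hx this.1
      · exact hdisj hy this.2
    have hshift : ∀ P : ℕ → Prop, (∀ m, P m) ↔ P 0 ∧ ∀ m, P (m + 1) := fun P =>
      ⟨fun h => ⟨h 0, fun m => h _⟩, fun h m => by cases m; exacts [h.1, h.2 _]⟩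
    rw [hshift fun m => (((l :: cs).map List.length).take m).sum ≠ p]
    simp only [List.map_cons, List.take_zero, List.sum_nil, List.take_succ_cons, List.sum_cons]
    rcases Nat.lt_or_ge p l.length with hpl | hpl
    · rw [List.getElem_append_left hpl, hcs0 _ _ (Or.inl (List.getElem_mem hpl)), add_zero]
      rcases Nat.lt_or_ge q l.length with hql | hql
      · rw [List.getElem_append_left hql, chainMatrix_getElem (List.nodup_append.mp hnd).1]
        congr 1
        apply propext
        constructor
        · intro h
          exact ⟨h, by omega, fun m => by omega⟩
        · exact fun h => h.1
      · rw [List.getElem_append_right hql, hl0 _ _ (Or.inr (List.getElem_mem _)), if_neg]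
        omega
    · rw [List.getElem_append_right hpl, hl0 _ _ (Or.inl (List.getElem_mem _)), zero_add]
      rcases Nat.lt_or_ge q l.length with hql | hql
      · rw [List.getElem_append_left hql, hcs0 _ _ (Or.inr (List.getElem_mem hql)), if_neg]
        rintro ⟨h1, h2, h3⟩
        have := h3 0
        simp at this
        omega
      · rw [List.getElem_append_right hql, ih (List.nodup_append.mp hnd).2.1]
        congr 1
        apply propext
        constructor
        · rintro ⟨h1, h2⟩
          refine ⟨by omega, by omega, fun m => ?_⟩
          have := h2 m
          omega
        · rintro ⟨h1, h2, h3⟩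
          refine ⟨by omega, fun m => ?_⟩
          have := h3 m
          omega

theorem sum_take_map_range (f : ℕ → ℕ) (K m : ℕ) :
    (((List.range K).map f).take m).sum = ∑ t ∈ Finset.range (min m K), f t := by
  rw [← List.map_take, List.take_range]
  induction min m K with
  | zero => simp
  | succ j ih => simp [List.range_succ, Finset.sum_range_succ, ih]

theorem IsPartitionFun.sum_take {n k : ℕ} {l : ℕ → ℕ} (h : IsPartitionFun n l k) {K : ℕ}
    (hK : k ≤ K) (m : ℕ) :
    (((List.range K).map l).take m).sum = ∑ t ∈ Finset.range m, l t := by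
  rw [sum_take_map_range]
  rcases le_total m K with hm | hm
  · rw [min_eq_left hm]
  · rw [min_eq_right hm, h.sum_range_eq hK, h.sum_range_eq (hK.trans hm)]

/-- Reading off the Jordan matrix from a list of chains along the concatenated chains. -/
theorem IsPartitionFun.chainsMatrix_eq {n k K : ℕ} {l : ℕ → ℕ} (h : IsPartitionFun n l k)
    (hK : k ≤ K) {cs : List (List (Fin n))} (hnd : cs.flatten.Nodup)
    (hlen : cs.flatten.length = n) (hcs : cs.map List.length = (List.range K).map l)
    (p q : Fin n) :
    chainsMatrix cs (cs.flatten[(p : ℕ)]'(hlen.symm ▸ p.2)) (cs.flatten[(q : ℕ)]'(hlen.symm ▸ q.2))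
      = jordanOfPartition n l p q := by
  rw [chainsMatrix_getElem hnd, jordanOfPartition, Matrix.of_apply, hcs]
  congr 1
  simp only [h.sum_take hK]

end Jordan

section Main

/-- Relabelling the basis is conjugation by a permutation matrix. -/
theorem exists_conj_eq_submatrix {n : ℕ} (π : Fin n ≃ Fin n) (J : Matrix (Fin n) (Fin n) ℂ) :
    ∃ g : GL (Fin n) ℂ, (g : Matrix (Fin n) (Fin n) ℂ) * J *
      ((g⁻¹ : GL (Fin n) ℂ) : Matrix (Fin n) (Fin n) ℂ) = J.submatrix π.symm π.symm := by
  let P : Matrix (Fin n) (Fin n) ℂ := (1 : Matrix (Fin n) (Fin n) ℂ).submatrix π.symm id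
  let Q : Matrix (Fin n) (Fin n) ℂ := (1 : Matrix (Fin n) (Fin n) ℂ).submatrix id π.symm
  have hPQ : P * Q = 1 := by
    ext i j
    simp [P, Q, Matrix.mul_apply, Matrix.one_apply]
  refine ⟨⟨P, Q, hPQ, mul_eq_one_comm.mp hPQ⟩, ?_⟩
  change P * J * Q = _
  ext i j
  simp [P, Q, Matrix.mul_apply, Matrix.one_apply]

/-- Dominance yields a grading for which a conjugate of the smaller Jordan matrix lies in the
closure of the graded orbit of the larger one. -/
theorem exists_inOrbitClosure_of_dominates {n kl km : ℕ} {lam mu : ℕ → ℕ}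
    (hlam : IsPartitionFun n lam kl) (hmu : IsPartitionFun n mu km)
    (hdom : ∀ j, ∑ i ∈ Finset.range j, mu i ≤ ∑ i ∈ Finset.range j, lam i) :
    ∃ w : Fin n → ℤ,
      gradingMatrix w * jordanOfPartition n lam - jordanOfPartition n lam * gradingMatrix w
        = (-2 : ℂ) • jordanOfPartition n lam ∧
      ∃ g : GL (Fin n) ℂ, InOrbitClosure (gradingMatrix w) (jordanOfPartition n lam)
        ((g : Matrix (Fin n) (Fin n) ℂ) * jordanOfPartition n mu *
          ((g⁻¹ : GL (Fin n) ℂ) : Matrix (Fin n) (Fin n) ℂ)) := by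
  set K := max kl km
  have hlK : kl ≤ K := le_max_left _ _
  have hmK : km ≤ K := le_max_right _ _
  have hsum : ∀ {l : ℕ → ℕ} {k : ℕ}, IsPartitionFun n l k → k ≤ K →
      ((List.range K).map l).sum = n := by
    intro l k h hk
    rw [← List.take_length (l := (List.range K).map l), h.sum_take hk]
    exact h.sum_range_eq (by simpa using hk)
  obtain ⟨cs, hflat, hsizes⟩ := exists_flatten_eq_map_length_eq ((List.range K).map lam)
    (List.finRange n) (by rw [hsum hlam hlK, List.length_finRange])
  have hnd : cs.flatten.Nodup := hflat ▸ List.nodup_finRange n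
  have hlen : cs.flatten.length = n := by rw [hflat, List.length_finRange]
  have hJ : chainsMatrix cs = jordanOfPartition n lam := by
    ext p q
    have hget : ∀ p : Fin n, cs.flatten[(p : ℕ)]'(hlen.symm ▸ p.2) = p := fun p => by
      rw [List.getElem_of_eq hflat]
      simp
    rw [← hlam.chainsMatrix_eq hlK hnd hlen hsizes p q, hget, hget]
  obtain ⟨w, hw⟩ := exists_isPlaced (d := 0) (μ := (List.range K).map mu) hnd
    (by simpa using congrArg List.length hsizes)
    (fun j => by
      rw [hsizes, hlam.sum_take hlK, hmu.sum_take hmK, zero_add]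
      exact_mod_cast hdom j)
    (by rw [hsizes, hsum hlam hlK, hsum hmu hmK, zero_add])
  refine ⟨w, hJ ▸ hw.grading_comm, ?_⟩
  have hsorted : ((List.range K).map mu).Pairwise (· ≥ ·) := by
    rw [List.pairwise_map]
    exact List.pairwise_lt_range.imp fun hij => hmu.2.2.1 _ _ hij.le
  obtain ⟨ds, hdeg, hds⟩ := hw.exists_degenerates hsorted
  obtain ⟨es, hperm, hes⟩ := exists_perm_map_eq List.length hds
  replace hdeg : Degenerates w cs es := hdeg.trans (Degenerates.of_perm hperm)
  have hnde : es.flatten.Nodup := hdeg.1.nodup_iff.mp hnd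
  have hlene : es.flatten.length = n := hdeg.1.length_eq.symm.trans hlen
  let f : Fin n → Fin n := fun p => es.flatten[(p : ℕ)]'(hlene.symm ▸ p.2)
  have hf : Function.Injective f := fun p q hpq =>
    Fin.ext ((List.Nodup.getElem_inj_iff hnde).mp hpq)
  let π : Fin n ≃ Fin n := Equiv.ofBijective f (Finite.injective_iff_bijective.mp hf)
  obtain ⟨g, hg⟩ := exists_conj_eq_submatrix π (jordanOfPartition n mu)
  refine ⟨g, ?_⟩
  have hE : chainsMatrix es = (jordanOfPartition n mu).submatrix π.symm π.symm := by
    ext i j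
    obtain ⟨p, rfl⟩ := π.surjective i
    obtain ⟨q, rfl⟩ := π.surjective j
    rw [Matrix.submatrix_apply, π.symm_apply_apply, π.symm_apply_apply]
    exact hmu.chainsMatrix_eq hmK hnde hlene hes p q
  rw [hg, ← hE, ← hJ]
  simpa using hdeg.2 [] (by simpa using hnd)

end Main

/-- `λ` dominates `μ` iff there is an integral diagonal matrix `S` with
`S J_λ - J_λ S = -2 J_λ` such that the closure of the orbit of `J_λ` under the
centralizer of `S` in `GL_n(ℂ)` contains a conjugate of `J_μ`. -/
theorem dominance_iff_degeneration (n : ℕ) (hn : 0 < n) (lam mu : ℕ → ℕ) (kl km : ℕ)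
    (hlam : IsPartitionFun n lam kl) (hmu : IsPartitionFun n mu km) :
    (∀ j, ∑ i ∈ Finset.range j, mu i ≤ ∑ i ∈ Finset.range j, lam i) ↔
      ∃ S : Matrix (Fin n) (Fin n) ℂ, S.IsDiag ∧ (∀ i, ∃ z : ℤ, S i i = (z : ℂ)) ∧
        S * jordanOfPartition n lam - jordanOfPartition n lam * S
          = (-2 : ℂ) • jordanOfPartition n lam ∧
        ∃ g : GL (Fin n) ℂ,
          (g : Matrix (Fin n) (Fin n) ℂ) * jordanOfPartition n mu *
              ((g⁻¹ : GL (Fin n) ℂ) : Matrix (Fin n) (Fin n) ℂ) ∈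
            closure {A : Matrix (Fin n) (Fin n) ℂ |
              ∃ h : GL (Fin n) ℂ,
                (h : Matrix (Fin n) (Fin n) ℂ) * S = S * (h : Matrix (Fin n) (Fin n) ℂ) ∧
                A = (h : Matrix (Fin n) (Fin n) ℂ) * jordanOfPartition n lam *
                      ((h⁻¹ : GL (Fin n) ℂ) : Matrix (Fin n) (Fin n) ℂ)} := by
  constructor
  · intro hdom
    obtain ⟨w, hcomm, g, hg⟩ := exists_inOrbitClosure_of_dominates hlam hmu hdom
    exact ⟨gradingMatrix w, Matrix.isDiag_diagonal _,
      fun i => ⟨-2 * w i, Matrix.diagonal_apply_eq _ _⟩, hcomm, g, hg⟩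
  · rintro ⟨S, -, -, -, g, hg⟩
    refine dominates_of_sum_tsub_le hlam hmu fun k => ?_
    rw [← rank_jordanOfPartition_pow hlam, ← rank_jordanOfPartition_pow hmu,
      ← rank_conj_pow g (jordanOfPartition n mu)]
    have hclosed : IsClosed {A : Matrix (Fin n) (Fin n) ℂ |
        (A ^ k).rank ≤ (jordanOfPartition n lam ^ k).rank} :=
      (isClosed_setOf_rank_le _).preimage (continuous_pow k)
    refine closure_minimal ?_ hclosed hg
    rintro _ ⟨h, -, rfl⟩
    exact (rank_conj_pow h _ k).le
end

section
/- Let p, q, r be natural numbers with p ≥ r, and set m = p + q + r, assumed positive. Let F ∈ M_m(ℂ) be the block-diagonal matrix with diagonal blocks J_{p+q} and J_r (the second block being absent if r = 0). Then there exist a diagonal matrix S ∈ M_m(ℂ) with integer entries and a nilpotent matrix X ∈ M_{q+r}(ℂ) with X^{q+r-1} ≠ 0 when q + r ≥ 1, such that S·F − F·S = −2·F and the block-diagonal matrix diag(J_p, X) lies in the closure, in the standard (Euclidean) topology of M_m(ℂ), of the set {g·F·g⁻¹ : g ∈ GL_m(ℂ), g·S = S·g}. -/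
/-- The `d × d` nilpotent lower-triangular Jordan block. -/
def jordanBlock (d : ℕ) : Matrix (Fin d) (Fin d) ℂ :=
  Matrix.of fun i j => if (i : ℕ) = (j : ℕ) + 1 then 1 else 0

/-- The block-diagonal matrix `diag(J_{p+q}, J_r)` in `M_{p+q+r}(ℂ)` (the second block
being absent when `r = 0`): `1`'s on the subdiagonal except at row `p + q`. -/
def twoBlockJordan (p q r : ℕ) : Matrix (Fin (p + q + r)) (Fin (p + q + r)) ℂ :=
  Matrix.of fun i j => if (i : ℕ) = (j : ℕ) + 1 ∧ (i : ℕ) ≠ p + q then 1 else 0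

/-- The block-diagonal matrix `diag(A, B)`. -/
def diagBlock (p d : ℕ) (A : Matrix (Fin p) (Fin p) ℂ) (B : Matrix (Fin d) (Fin d) ℂ) :
    Matrix (Fin (p + d)) (Fin (p + d)) ℂ :=
  Matrix.reindex finSumFinEquiv finSumFinEquiv (Matrix.fromBlocks A 0 0 B)

/-- Powers of a Jordan block have `1`'s on a single lower diagonal. -/
theorem jordanBlock_pow_apply (d k : ℕ) (i j : Fin d) :
    (jordanBlock d ^ k) i j = if (i : ℕ) = (j : ℕ) + k then 1 else 0 := by
  induction k generalizing i j with
  | zero => simp [Matrix.one_apply, Fin.ext_iff]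
  | succ k ih =>
    rw [pow_succ, Matrix.mul_apply]
    have hJ : ∀ x, jordanBlock d x j = if (x : ℕ) = (j : ℕ) + 1 then 1 else 0 := fun _ => rfl
    simp only [ih, hJ, mul_ite, mul_one, mul_zero]
    by_cases hj : (j : ℕ) + 1 < d
    · have h : ∀ x : Fin d, (x : ℕ) = (j : ℕ) + 1 ↔ x = ⟨j + 1, hj⟩ := fun x => by
        rw [Fin.ext_iff]
      simp only [h, Finset.sum_ite_eq', Finset.mem_univ, if_true]
      congr 1
      simp only [eq_iff_iff]
      omega
    · have h : ∀ x : Fin d, (x : ℕ) ≠ (j : ℕ) + 1 := fun x => by omega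
      simp only [h, if_false, Finset.sum_const_zero]
      rw [if_neg (by omega)]

theorem jordanBlock_pow_self (d : ℕ) : jordanBlock d ^ d = 0 := by
  ext i j
  rw [jordanBlock_pow_apply, if_neg (by omega), Matrix.zero_apply]

theorem jordanBlock_pow_sub_one_ne_zero {d : ℕ} (hd : 1 ≤ d) : jordanBlock d ^ (d - 1) ≠ 0 := by
  intro h
  have h' := congrFun (congrFun h ⟨d - 1, by omega⟩) ⟨0, by omega⟩
  simp [jordanBlock_pow_apply] at h'

/-- The regular nilpotent matrix of size `q + r` whose chain runs through the last `r` basis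
vectors and then through the first `q` ones. -/
noncomputable def rotatedJordanBlock (q r : ℕ) : Matrix (Fin (q + r)) (Fin (q + r)) ℂ :=
  Matrix.reindexAlgEquiv ℂ ℂ finAddFlip (jordanBlock (r + q))

theorem isNilpotent_rotatedJordanBlock (q r : ℕ) : IsNilpotent (rotatedJordanBlock q r) :=
  ⟨r + q, by rw [rotatedJordanBlock, ← map_pow, jordanBlock_pow_self, map_zero]⟩

theorem rotatedJordanBlock_pow_ne_zero {q r : ℕ} (h : 1 ≤ q + r) :
    rotatedJordanBlock q r ^ (q + r - 1) ≠ 0 := by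
  rw [rotatedJordanBlock, ← map_pow, ne_eq, EmbeddingLike.map_eq_zero_iff,
    show q + r - 1 = r + q - 1 by omega]
  exact jordanBlock_pow_sub_one_ne_zero (by omega)

/-- The weights `-2 i` on the long chain, the short one being shifted so that it
ends next to the `p`-th vector of the long one. -/
def chainWeight (p q r i : ℕ) : ℤ :=
  if i < p + q then -2 * (i : ℤ) else -2 * ((i : ℤ) - q - r)

/-- The diagonal matrix of the weights `chainWeight`. -/
noncomputable def weightMatrix (p q r : ℕ) : Matrix (Fin (p + q + r)) (Fin (p + q + r)) ℂ :=
  Matrix.diagonal fun i => (chainWeight p q r i : ℂ)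

theorem weightMatrix_commutator (p q r : ℕ) :
    weightMatrix p q r * twoBlockJordan p q r - twoBlockJordan p q r * weightMatrix p q r =
      (-2 : ℂ) • twoBlockJordan p q r := by
  ext i j
  simp only [weightMatrix, Matrix.sub_apply, Matrix.diagonal_mul, Matrix.mul_diagonal,
    Matrix.smul_apply, smul_eq_mul, twoBlockJordan, Matrix.of_apply]
  split_ifs with h
  · have hw : chainWeight p q r i = chainWeight p q r j - 2 := by
      unfold chainWeight
      split_ifs <;> omega
    rw [hw]
    push_cast
    ring
  · ring

/-- The family joining `diag(J_p, X)`, at `t = 0`, to conjugates of `diag(J_{p+q}, J_r)`. -/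
def degenerationFamily (p q r : ℕ) (t : ℂ) : Matrix (Fin (p + q + r)) (Fin (p + q + r)) ℂ :=
  Matrix.of fun i j =>
    if (i : ℕ) = (j : ℕ) + 1 ∧ (i : ℕ) ≠ p + q then (if (i : ℕ) = p then t else 1)
    else if (i : ℕ) = p ∧ (j : ℕ) + 1 = p + q + r ∧ 0 < q ∧ 0 < r then 1 else 0

theorem continuous_degenerationFamily (p q r : ℕ) : Continuous (degenerationFamily p q r) := by
  refine continuous_matrix fun i j => ?_
  simp only [degenerationFamily, Matrix.of_apply]
  split_ifs <;> fun_prop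

theorem degenerationFamily_zero (p q r : ℕ) (h : p + (q + r) = p + q + r) :
    Matrix.reindex (finCongr h) (finCongr h)
      (diagBlock p (q + r) (jordanBlock p) (rotatedJordanBlock q r)) =
      degenerationFamily p q r 0 := by
  ext i j
  obtain ⟨x, rfl⟩ := (finSumFinEquiv.trans (finCongr h)).surjective i
  obtain ⟨y, rfl⟩ := (finSumFinEquiv.trans (finCongr h)).surjective j
  have hflip (k : Fin (q + r)) : (((finAddFlip (m := r) (n := q)).symm k : Fin (r + q)) : ℕ) =
      if (k : ℕ) < q then r + (k : ℕ) else (k : ℕ) - q := by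
    induction k using Fin.addCases <;> simp [finAddFlip]
  rcases x with x | x <;> rcases y with y | y <;>
    simp [diagBlock, degenerationFamily, jordanBlock, rotatedJordanBlock, hflip] <;>
    clear hflip <;> grind

/-- The conjugating matrices: they rescale the tail of the long chain by `t` and subtract from
the short chain `t⁻¹` times the vectors of the long chain of the same weight. -/
noncomputable def conjugator (p q r : ℕ) (t : ℂ) :
    Matrix (Fin (p + q + r)) (Fin (p + q + r)) ℂ :=
  Matrix.of fun i j =>
    (if i = j then (if p ≤ (j : ℕ) ∧ (j : ℕ) < p + q then t else 1) else 0) +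
      if (i : ℕ) + (q + r) = (j : ℕ) ∧ p + q ≤ (j : ℕ) then -t⁻¹ else 0

theorem det_conjugator_ne_zero (p q r : ℕ) {t : ℂ} (ht : t ≠ 0) :
    (conjugator p q r t).det ≠ 0 := by
  rw [Matrix.det_of_isUpperTriangular]
  · refine Finset.prod_ne_zero_iff.2 fun i _ => ?_
    have h : ¬ ((i : ℕ) + (q + r) = (i : ℕ) ∧ p + q ≤ (i : ℕ)) := by omega
    simp only [conjugator, Matrix.of_apply, if_true, if_neg h, add_zero]
    split_ifs
    exacts [ht, one_ne_zero]
  · intro i j hij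
    have hij' : (j : ℕ) < (i : ℕ) := hij
    simp only [conjugator, Matrix.of_apply]
    rw [if_neg (by rw [Fin.ext_iff]; omega), if_neg (by omega), add_zero]

theorem conjugator_mul_weightMatrix (p q r : ℕ) (t : ℂ) :
    conjugator p q r t * weightMatrix p q r = weightMatrix p q r * conjugator p q r t := by
  ext i j
  simp only [weightMatrix, Matrix.diagonal_mul, Matrix.mul_diagonal, conjugator, Matrix.of_apply]
  by_cases hij : i = j
  · subst hij
    ring
  · rw [if_neg hij]
    split_ifs with h
    · have hw : chainWeight p q r i = chainWeight p q r j := by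
        unfold chainWeight
        split_ifs <;> omega
      rw [hw]
      ring
    · ring

theorem mul_conjugator_apply {p q r : ℕ} (hpr : r ≤ p) (t : ℂ)
    (A : Matrix (Fin (p + q + r)) (Fin (p + q + r)) ℂ) (i j : Fin (p + q + r)) :
    (A * conjugator p q r t) i j =
      A i j * (if p ≤ (j : ℕ) ∧ (j : ℕ) < p + q then t else 1) +
        if p + q ≤ (j : ℕ) then A i ⟨j - (q + r), by omega⟩ * -t⁻¹ else 0 := by
  simp only [Matrix.mul_apply, conjugator, Matrix.of_apply, mul_add, Finset.sum_add_distrib,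
    mul_ite, mul_zero]
  congr 1
  · simp
  · split_ifs with hj
    · rw [Finset.sum_eq_single ⟨j - (q + r), by omega⟩]
      · rw [if_pos ⟨by simp only; omega, hj⟩]
      · intro k _ hk
        rw [if_neg]
        rintro ⟨h, -⟩
        exact hk (Fin.ext (by simp only; omega))
      · simp
    · exact Finset.sum_eq_zero fun k _ => if_neg fun h => hj h.2

theorem mul_twoBlockJordan_apply {p q r : ℕ}
    (A : Matrix (Fin (p + q + r)) (Fin (p + q + r)) ℂ) (i j : Fin (p + q + r)) :
    (A * twoBlockJordan p q r) i j =
      if h : (j : ℕ) + 1 < p + q + r ∧ (j : ℕ) + 1 ≠ p + q then A i ⟨j + 1, h.1⟩ else 0 := by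
  simp only [Matrix.mul_apply, twoBlockJordan, Matrix.of_apply, mul_ite, mul_zero, mul_one]
  split_ifs with hj
  · rw [Finset.sum_eq_single ⟨j + 1, hj.1⟩]
    · rw [if_pos ⟨rfl, hj.2⟩]
    · intro k _ hk
      rw [if_neg]
      rintro ⟨h, -⟩
      exact hk (Fin.ext h)
    · simp
  · exact Finset.sum_eq_zero fun k _ => if_neg fun h => hj (by omega)

theorem degenerationFamily_mul_conjugator {p q r : ℕ} (hpr : r ≤ p) {t : ℂ} (ht : t ≠ 0) :
    degenerationFamily p q r t * conjugator p q r t =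
      conjugator p q r t * twoBlockJordan p q r := by
  ext i j
  rw [mul_conjugator_apply hpr, mul_twoBlockJordan_apply]
  have hi := i.isLt
  have hj := j.isLt
  have hti : t * t⁻¹ = 1 := mul_inv_cancel₀ ht
  simp only [degenerationFamily, conjugator, Matrix.of_apply, Fin.ext_iff]
  grind

/-- with `F = diag(J_{p+q}, J_r)` there are a diagonal integral matrix `S`
with `S F - F S = -2 F` and a regular nilpotent `X ∈ M_{q+r}(ℂ)` such that
`diag(J_p, X)` lies in the closure of the orbit of `F` under the centralizer of `S`. -/
theorem two_block_degeneration (p q r : ℕ) (hpr : r ≤ p) (hm : 0 < p + q + r) :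
    ∃ (S : Matrix (Fin (p + q + r)) (Fin (p + q + r)) ℂ)
      (X : Matrix (Fin (q + r)) (Fin (q + r)) ℂ),
      S.IsDiag ∧ (∀ i, ∃ z : ℤ, S i i = (z : ℂ)) ∧
      IsNilpotent X ∧ (1 ≤ q + r → X ^ (q + r - 1) ≠ 0) ∧
      S * twoBlockJordan p q r - twoBlockJordan p q r * S = (-2 : ℂ) • twoBlockJordan p q r ∧
      (Matrix.reindex (finCongr (by omega : p + (q + r) = p + q + r))
          (finCongr (by omega : p + (q + r) = p + q + r))
          (diagBlock p (q + r) (jordanBlock p) X)) ∈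
        closure {A : Matrix (Fin (p + q + r)) (Fin (p + q + r)) ℂ |
          ∃ g : GL (Fin (p + q + r)) ℂ,
            (g : Matrix (Fin (p + q + r)) (Fin (p + q + r)) ℂ) * S
              = S * (g : Matrix (Fin (p + q + r)) (Fin (p + q + r)) ℂ) ∧
            A = (g : Matrix (Fin (p + q + r)) (Fin (p + q + r)) ℂ) * twoBlockJordan p q r *
                  ((g⁻¹ : GL (Fin (p + q + r)) ℂ) : Matrix (Fin (p + q + r)) (Fin (p + q + r)) ℂ)} := by
  refine ⟨weightMatrix p q r, rotatedJordanBlock q r, Matrix.isDiag_diagonal _,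
    fun i => ⟨chainWeight p q r i, Matrix.diagonal_apply_eq _ _⟩,
    isNilpotent_rotatedJordanBlock q r, rotatedJordanBlock_pow_ne_zero,
    weightMatrix_commutator p q r, ?_⟩
  rw [degenerationFamily_zero]
  refine map_mem_closure (continuous_degenerationFamily p q r)
    (dense_compl_singleton (0 : ℂ) 0) fun t ht => ?_
  let g := Matrix.GeneralLinearGroup.mkOfDetNeZero (conjugator p q r t)
    (det_conjugator_ne_zero p q r ht)
  have hg : (g : Matrix (Fin (p + q + r)) (Fin (p + q + r)) ℂ) = conjugator p q r t := rfl
  refine ⟨g, conjugator_mul_weightMatrix p q r t, ?_⟩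
  rw [hg, ← degenerationFamily_mul_conjugator hpr ht, ← hg, mul_assoc, Units.mul_inv, mul_one]
end

section
/- Let g be a finite-dimensional Lie algebra over a field of characteristic zero and let (e, h, f) be an sl₂-triple in g. For an integer k, define g_{≥k} to be the sum over all integers i ≥ max(1−k, 1) of the subspaces ker((ad e)^i) ∩ im((ad e)^{i+k−1}). Then g_{≥k} equals the sum of the eigenspaces of ad(h) corresponding to eigenvalues ≥ k (all eigenvalues of ad(h) are integers). -/
open Module

/-- The endomorphisms `E`, `H`, `F` of a vector space satisfy the defining relations of `sl₂`,
all of them being allowed to vanish. -/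
structure IsSl2Action {K V : Type*} [Field K] [AddCommGroup V] [Module K V]
    (E H F : End K V) : Prop where
  h_e : ∀ v, H (E v) = E (H v) + (2 : K) • E v
  h_f : ∀ v, H (F v) = F (H v) - (2 : K) • F v
  e_f : ∀ v, E (F v) = F (E v) + H v

/-- A subspace stable under `f` contains the components of its elements along eigenspaces of `f`
for distinct eigenvalues. -/
theorem Module.End.inf_iSup_eigenspace_le {K V ι : Type*} [Field K] [AddCommGroup V] [Module K V]
    (f : End K V) {p : Submodule K V} (hp : ∀ x ∈ p, f x ∈ p) {μ : ι → K}
    (hμ : Function.Injective μ) :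
    p ⊓ ⨆ i, f.eigenspace (μ i) ≤ ⨆ i, p ⊓ f.eigenspace (μ i) := by
  classical
  have key (s : Finset ι) : ∀ v : ι → V, (∀ i, v i ∈ f.eigenspace (μ i)) →
      ∑ i ∈ s, v i ∈ p → ∀ i ∈ s, v i ∈ p := by
    induction s using Finset.induction_on with
    | empty => simp
    | insert a s ha ih =>
      intro v hv hsum
      have hs : ∀ i ∈ s, v i ∈ p := by
        intro i hi
        have hmem : ∑ j ∈ s, (μ j - μ a) • v j ∈ p := by
          have h := p.sub_mem (hp _ hsum) (p.smul_mem (μ a) hsum)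
          rw [map_sum, Finset.smul_sum, ← Finset.sum_sub_distrib, Finset.sum_insert ha] at h
          simpa [End.mem_eigenspace_iff.mp (hv _), sub_smul] using h
        have h := ih (fun j ↦ (μ j - μ a) • v j) (fun j ↦ Submodule.smul_mem _ _ (hv j)) hmem i hi
        have hne : μ i - μ a ≠ 0 := sub_ne_zero.mpr (hμ.ne (by rintro rfl; exact ha hi))
        exact (p.smul_mem_iff hne).mp h
      intro i hi
      rcases Finset.mem_insert.mp hi with rfl | hi
      · rw [Finset.sum_insert ha] at hsum
        exact (p.add_mem_iff_left (p.sum_mem hs)).mp hsum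
      · exact hs i hi
  rintro x ⟨hxp, hx⟩
  obtain ⟨v, hv, rfl⟩ := (Submodule.mem_iSup_iff_exists_finsupp _ _).mp hx
  exact Submodule.sum_mem _ fun i hi ↦
    Submodule.mem_iSup_of_mem i ⟨key v.support v hv hxp i hi, hv i⟩

namespace IsSl2Action

variable {K V : Type*} [Field K] [AddCommGroup V] [Module K V] {E H F : End K V}

theorem symm (t : IsSl2Action E H F) : IsSl2Action F (-H) E where
  h_e v := by simp [t.h_f, sub_eq_add_neg]; abel
  h_f v := by simp [t.h_e]; abel
  e_f v := by simp [t.e_f]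

theorem h_e_pow (t : IsSl2Action E H F) (n : ℕ) (v : V) :
    H ((E ^ n) v) = (E ^ n) (H v) + (2 * n : K) • (E ^ n) v := by
  induction n with
  | zero => simp
  | succ n ih =>
    simp only [pow_succ', End.mul_apply, t.h_e, ih, map_add, map_smul]
    push_cast
    module

theorem e_pow_succ_f (t : IsSl2Action E H F) (n : ℕ) (v : V) :
    (E ^ (n + 1)) (F v) = F ((E ^ (n + 1)) v) + (n + 1 : K) • (E ^ n) (H v + (n : K) • v) := by
  induction n with
  | zero => simp [t.e_f]
  | succ n ih =>
    rw [pow_succ', End.mul_apply, ih, map_add, t.e_f, t.h_e_pow]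
    simp only [pow_succ', End.mul_apply, map_add, map_smul]
    push_cast
    module

theorem apply_e_pow_of_apply (t : IsSl2Action E H F) {μ : K} {v : V} (hv : H v = μ • v) (n : ℕ) :
    H ((E ^ n) v) = (μ + 2 * n) • (E ^ n) v := by
  rw [t.h_e_pow, hv, map_smul, add_smul]

theorem apply_f_pow_of_apply (t : IsSl2Action E H F) {μ : K} {v : V} (hv : H v = μ • v) (n : ℕ) :
    H ((F ^ n) v) = (μ - 2 * n) • (F ^ n) v := by
  have h := t.symm.apply_e_pow_of_apply (μ := -μ) (v := v) (by simp [hv]) n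
  rw [LinearMap.neg_apply, neg_eq_iff_eq_neg, ← neg_smul] at h
  rw [h]
  congr 1
  ring

/-- For `y` primitive of weight `n`, applying `e ^ s` to `f ^ (j + s) y` recovers `f ^ j y` up to
a nonzero scalar as long as `j + s ≤ n`. -/
theorem exists_e_pow_f_pow [CharZero K] (t : IsSl2Action E H F) {n : ℕ} {y : V}
    (hy : H y = (n : K) • y) (hEy : E y = 0) {j s : ℕ} (hjs : j + s ≤ n) :
    ∃ c : K, c ≠ 0 ∧ (E ^ s) ((F ^ (j + s)) y) = c • (F ^ j) y := by
  induction s with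
  | zero => exact ⟨1, one_ne_zero, by simp⟩
  | succ s ih =>
    obtain ⟨c, hc, h⟩ := ih (by omega)
    have hE : E ((F ^ (j + s + 1)) y) = ((j + s + 1) * (n - (j + s)) : K) • (F ^ (j + s)) y := by
      have := t.symm.e_pow_succ_f (j + s) y
      rw [hEy, map_zero, eq_comm, add_eq_zero_iff_eq_neg] at this
      rw [this, LinearMap.neg_apply, hy, map_add, map_neg, map_smul, map_smul]
      push_cast
      module
    refine ⟨(j + s + 1) * (n - (j + s)) * c, mul_ne_zero (mul_ne_zero ?_ ?_) hc, ?_⟩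
    · exact_mod_cast Nat.succ_ne_zero (j + s)
    · rw [sub_ne_zero]
      exact_mod_cast (show n ≠ j + s by omega)
    · rw [pow_succ, End.mul_apply, ← add_assoc, hE, map_smul, h, smul_smul]

section FiniteDimensional

variable [CharZero K] [FiniteDimensional K V]

theorem isNilpotent_e (t : IsSl2Action E H F) : ∃ n : ℕ, E ^ n = 0 := by
  by_contra! hne
  have hlin := End.eigenvectors_linearIndependent'
    (LinearMap.mulLeft K H - LinearMap.mulRight K H) (fun n : ℕ ↦ (2 * n : K))
    (fun a b hab ↦ by simpa using hab) (fun n ↦ E ^ n) fun n ↦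
      ⟨End.mem_eigenspace_iff.mpr (by ext v; simp [t.h_e_pow]), hne n⟩
  exact not_finite_iff_infinite.mpr inferInstance hlin.finite

/-- `e ^ n` is injective on the eigenspace of `h` for the eigenvalue `-n`. -/
theorem eq_zero_of_e_pow_eq_zero (t : IsSl2Action E H F) {n : ℕ} {w : V}
    (hw : H w = -(n : K) • w) (hE : (E ^ n) w = 0) : w = 0 := by
  obtain ⟨N, hN⟩ := t.symm.isNilpotent_e
  have key (s : ℕ) : ∀ (n : ℕ) (w : V), H w = -(n : K) • w → (E ^ n) w = 0 →
      (F ^ s) w = 0 → w = 0 := by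
    induction s with
    | zero => simp
    | succ s ih =>
      intro n w hw hE hF
      have hE' : (E ^ (n + 1)) w = 0 := by rw [pow_succ', End.mul_apply, hE, map_zero]
      have hFw : F w = 0 := by
        refine ih (n + 2) (F w) ?_ ?_ (by rwa [pow_succ] at hF)
        · rw [t.h_f, hw, map_smul]
          push_cast
          module
        · rw [pow_succ' E (n + 1), End.mul_apply, t.e_pow_succ_f, hE', hw]
          simp
      have descend (m : ℕ) : m ≤ n → (E ^ m) w = 0 → w = 0 := by
        induction m with
        | zero => simp
        | succ m ihm =>
          intro hm hEm
          refine ihm (by omega) ?_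
          have h := t.e_pow_succ_f m w
          rw [hFw, hEm, map_zero, map_zero, zero_add, hw, ← add_smul, map_smul, smul_smul,
            eq_comm, smul_eq_zero] at h
          refine h.resolve_left (mul_ne_zero (by exact_mod_cast Nat.succ_ne_zero m) ?_)
          rw [neg_add_eq_sub, sub_ne_zero]
          exact_mod_cast (show m ≠ n by omega)
      exact descend n le_rfl hE
  exact key N n w hw hE (by simp [hN])

theorem eq_zero_of_e_pow_eq_zero_of_add_nonpos (t : IsSl2Action E H F) {m : ℤ} {w : V}
    (hw : H w = (m : K) • w) {j : ℕ} (hj : m + j ≤ 0) (hE : (E ^ j) w = 0) : w = 0 := by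
  obtain ⟨n, rfl⟩ : ∃ n : ℕ, m = -(n : ℤ) := ⟨m.natAbs, by omega⟩
  refine t.eq_zero_of_e_pow_eq_zero (n := n) (by simpa using hw) ?_
  exact Module.End.pow_map_zero_of_le (by omega) hE

/-- `h` is diagonalizable with integer eigenvalues. -/
theorem iSup_eigenspace_intCast (t : IsSl2Action E H F) :
    ⨆ m : ℤ, H.eigenspace (m : K) = ⊤ := by
  set W := ⨆ m : ℤ, H.eigenspace (m : K)
  have mem_W {m : ℤ} {v : V} (hv : H v = (m : K) • v) : v ∈ W :=
    Submodule.mem_iSup_of_mem m (End.mem_eigenspace_iff.mpr hv)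
  have key (i : ℕ) : ∀ v, (E ^ i) v = 0 → v ∈ W := by
    induction i with
    | zero => simp
    | succ i ih =>
      suffices ∀ n v, (E ^ (i + 1)) v = 0 → (F ^ n) ((E ^ i) v) = 0 → v ∈ W by
        obtain ⟨N, hN⟩ := t.symm.isNilpotent_e
        exact fun v hv ↦ this N v hv (by simp [hN])
      intro n
      induction n with
      | zero => exact fun v _ hv ↦ ih v (by simpa using hv)
      | succ n ihn =>
        intro v hEv hFv
        set c : ℤ := n - 2 * i with hc
        have hcK : (c : K) = n - 2 * i := by simp [hc]
        have hE_H {x : V} (hx : (E ^ (i + 1)) x = 0) : (E ^ (i + 1)) (H x) = 0 := by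
          simpa [hx] using (t.h_e_pow (i + 1) x).symm
        have hEi_H (x : V) : (E ^ i) (H x) = H ((E ^ i) x) - (2 * i : K) • (E ^ i) x :=
          eq_sub_of_add_eq (t.h_e_pow i x).symm
        let N : Submodule K V := LinearMap.ker (E ^ (i + 1)) ⊓ LinearMap.ker (F ^ n * E ^ i)
        have hN : ∀ x ∈ N, H x ∈ N := by
          rintro x ⟨hx₁, hx₂⟩
          simp only [LinearMap.mem_ker, End.mul_apply, SetLike.mem_coe] at hx₁ hx₂
          refine ⟨hE_H hx₁, ?_⟩
          have h := t.symm.h_e_pow n ((E ^ i) x)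
          simp only [LinearMap.neg_apply, hx₂, map_zero, map_neg, smul_zero, add_zero,
            zero_eq_neg] at h
          simp [hEi_H, hx₂, h]
        have hvN : H v - (c : K) • v ∈ N := by
          refine ⟨by simp [hE_H hEv, hEv], ?_⟩
          have h := t.symm.e_pow_succ_f n ((E ^ i) v)
          rw [← End.mul_apply E, ← pow_succ', hEv, hFv, map_zero, map_zero, zero_add, eq_comm,
            smul_eq_zero_iff_right (by exact_mod_cast Nat.succ_ne_zero n)] at h
          rw [SetLike.mem_coe, LinearMap.mem_ker, End.mul_apply, map_sub, map_smul, hEi_H,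
            ← neg_eq_zero, ← map_neg, ← h, hcK, LinearMap.neg_apply]
          congr 1
          module
        have hvW : H v - (c : K) • v ∈ W := ihn _ hvN.1 hvN.2
        obtain ⟨x, ⟨hxN, hxW⟩, hwN, hw⟩ : ∃ x ∈ N ⊓ W,
            (H v - (c : K) • v) - (H x - (c : K) • x) ∈ N ⊓ H.eigenspace (c : K) := by
          have hmem := H.inf_iSup_eigenspace_le hN Int.cast_injective ⟨hvN, hvW⟩
          generalize H v - (c : K) • v = v' at hmem ⊢
          induction hmem using Submodule.iSup_induction' with
          | zero => exact ⟨0, by simp, by simp⟩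
          | add a b _ _ iha ihb =>
            obtain ⟨x, hx, hx'⟩ := iha
            obtain ⟨y, hy, hy'⟩ := ihb
            refine ⟨x + y, add_mem hx hy, ?_⟩
            convert add_mem hx' hy' using 1
            rw [map_add]
            module
          | mem m a ha =>
            by_cases hm : m = c
            · exact ⟨0, by simp, by simpa [hm] using ha⟩
            · have ha' := End.mem_eigenspace_iff.mp ha.2
              have hne : (m - c : K) ≠ 0 := sub_ne_zero.mpr (by exact_mod_cast hm)
              refine ⟨(m - c : K)⁻¹ • a,
                Submodule.smul_mem _ _ ⟨ha.1, Submodule.mem_iSup_of_mem m ha.2⟩, ?_⟩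
              convert Submodule.zero_mem _ using 1
              rw [map_smul, ha', smul_comm (c : K), ← smul_sub, ← sub_smul, inv_smul_smul₀ hne,
                sub_self]
        obtain ⟨z, rfl⟩ : ∃ z, v = z + x := ⟨v - x, by abel⟩
        refine add_mem ?_ hxW
        have hEz : (E ^ (i + 1)) z = 0 := by simpa [show (E ^ (i + 1)) x = 0 from hxN.1] using hEv
        set w := (H (z + x) - (c : K) • (z + x)) - (H x - (c : K) • x)
        have hHz : H z = w + (c : K) • z := by
          simp only [w, map_add]
          module
        have hHw : H w = (c : K) • w := End.mem_eigenspace_iff.mp hw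
        by_cases hni : n < i
        · have hw0 : w = 0 := t.eq_zero_of_e_pow_eq_zero_of_add_nonpos hHw
            (j := i + 1) (by push_cast; omega) hwN.1
          exact mem_W (m := c) (by rw [hHz, hw0, zero_add])
        · have hu : (E ^ i) w = 0 := by
            refine t.symm.eq_zero_of_e_pow_eq_zero (n := n) ?_ hwN.2
            rw [LinearMap.neg_apply, t.apply_e_pow_of_apply hHw, hcK]
            module
          have hHy : H ((E ^ i) z) = (n : K) • (E ^ i) z := by
            rw [t.h_e_pow, hHz, map_add, hu, map_smul, hcK]
            module
          obtain ⟨b, hb, hb'⟩ := t.exists_e_pow_f_pow (j := 0) (s := i) hHy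
            (by rwa [← End.mul_apply, ← pow_succ']) (by omega)
          rw [zero_add, pow_zero, End.one_apply] at hb'
          have hmem : z - b⁻¹ • (F ^ i) ((E ^ i) z) ∈ W := ih _ (by simp [hb', hb])
          refine (W.sub_mem_iff_left (W.smul_mem _ ?_)).mp hmem
          exact mem_W (m := c) (by rw [t.apply_f_pow_of_apply hHy, hcK])
  obtain ⟨N, hN⟩ := t.isNilpotent_e
  exact eq_top_iff.mpr fun v _ ↦ key N v (by simp [hN])

theorem ker_inf_range_le (t : IsSl2Action E H F) {k : ℤ} {i a : ℕ} (ha : (a : ℤ) = i + k - 1) :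
    LinearMap.ker (E ^ i) ⊓ LinearMap.range (E ^ a) ≤
      ⨆ m : ℤ, ⨆ _ : k ≤ m, H.eigenspace (m : K) := by
  rintro _ ⟨hx, y, rfl⟩
  have hp : ∀ x ∈ LinearMap.ker (E ^ (i + a)), H x ∈ LinearMap.ker (E ^ (i + a)) := by
    intro x hx
    rw [LinearMap.mem_ker] at hx ⊢
    simpa [hx] using (t.h_e_pow (i + a) x).symm
  have hy : y ∈ LinearMap.ker (E ^ (i + a)) ⊓ ⨆ m : ℤ, H.eigenspace (m : K) := by
    refine ⟨?_, by simp [t.iSup_eigenspace_intCast]⟩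
    simpa [pow_add] using hx
  refine Submodule.mem_comap.mp
    (((H.inf_iSup_eigenspace_le hp Int.cast_injective).trans (iSup_le fun m ↦ ?_)) hy)
  rintro z ⟨hz, hHz⟩
  rw [SetLike.mem_coe, End.mem_eigenspace_iff] at hHz
  rw [Submodule.mem_comap]
  by_cases hm : k ≤ m + 2 * a
  · refine Submodule.mem_iSup_of_mem (m + 2 * a) (Submodule.mem_iSup_of_mem hm ?_)
    rw [End.mem_eigenspace_iff, t.apply_e_pow_of_apply hHz]
    push_cast
    rfl
  · rw [t.eq_zero_of_e_pow_eq_zero_of_add_nonpos hHz (j := i + a) (by push_cast; omega) hz]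
    simp

theorem mem_iSup_ker_inf_range (t : IsSl2Action E H F) {k m : ℤ} (hkm : k ≤ m) {x : V}
    (hx : H x = (m : K) • x) :
    x ∈ ⨆ i : ℕ, ⨆ _ : 1 ≤ i ∧ 1 - k ≤ (i : ℤ),
      LinearMap.ker (E ^ i) ⊓ LinearMap.range (E ^ ((i : ℤ) + k - 1).toNat) := by
  set D := ⨆ i : ℕ, ⨆ _ : 1 ≤ i ∧ 1 - k ≤ (i : ℤ),
    LinearMap.ker (E ^ i) ⊓ LinearMap.range (E ^ ((i : ℤ) + k - 1).toNat)
  have key (s : ℕ) : ∀ x, H x = (m : K) • x → (E ^ s) x = 0 → x ∈ D := by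
    induction s with
    | zero =>
      rintro x - rfl
      exact D.zero_mem
    | succ s ih =>
      intro x hx hEx
      by_cases hms : m + s < 0
      · simp [t.eq_zero_of_e_pow_eq_zero_of_add_nonpos hx (j := s + 1) (by push_cast; omega) hEx]
      obtain ⟨r, hr⟩ : ∃ r : ℕ, (r : ℤ) = m + s := ⟨(m + s).toNat, by omega⟩
      have hmK : (m : K) = r - s := by
        rw [eq_sub_iff_add_eq]
        exact_mod_cast hr.symm
      set y := (E ^ s) x
      have hHy : H y = ((s + r : ℕ) : K) • y := by
        rw [t.apply_e_pow_of_apply hx, hmK]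
        push_cast
        module
      have hEy : E y = 0 := by rwa [← End.mul_apply, ← pow_succ']
      obtain ⟨b, hb, hb'⟩ := t.exists_e_pow_f_pow (j := 0) (s := s) hHy hEy (by omega)
      rw [zero_add, pow_zero, End.one_apply] at hb'
      have hmem : x - b⁻¹ • (F ^ s) y ∈ D := by
        refine ih _ ?_ (by simp [hb', hb, y])
        rw [map_sub, map_smul, hx, t.apply_f_pow_of_apply hHy, hmK]
        push_cast
        module
      refine (D.sub_mem_iff_left (D.smul_mem _ ?_)).mp hmem
      obtain ⟨d, hd, hd'⟩ := t.exists_e_pow_f_pow (j := s) (s := r) hHy hEy le_rfl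
      refine Submodule.mem_iSup_of_mem (max (s + 1) (1 - k).toNat)
        (Submodule.mem_iSup_of_mem (by omega) ⟨?_, ?_⟩)
      · refine Module.End.pow_map_zero_of_le (le_max_left _ _) ?_
        rw [pow_succ', End.mul_apply, hb', map_smul, hEy, smul_zero]
      · have hle : (((max (s + 1) (1 - k).toNat : ℕ) : ℤ) + k - 1).toNat ≤ r := by omega
        obtain ⟨q, hq⟩ := Nat.exists_eq_add_of_le hle
        refine ⟨(E ^ q) (d⁻¹ • (F ^ (s + r)) y), ?_⟩
        rw [← End.mul_apply, ← pow_add, ← hq, map_smul, hd', inv_smul_smul₀ hd]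
  obtain ⟨N, hN⟩ := t.isNilpotent_e
  exact key N x hx (by simp [hN])

end FiniteDimensional

end IsSl2Action

/-- for an `sl₂`-triple `(e, h, f)`, the `k`-th step of the Deligne filtration
attached to `e`, namely `∑_{i ≥ max(1-k,1)} ker((ad e)^i) ∩ im((ad e)^{i+k-1})`, equals the
sum of the eigenspaces of `ad h` with (integer) eigenvalues `≥ k`. -/
theorem deligne_filtration_eq_eigenspace_sum (F : Type*) [Field F] [CharZero F]
    (g : Type*) [LieRing g] [LieAlgebra F g] [FiniteDimensional F g]
    (e h f : g)
    (hhe : ⁅h, e⁆ = (2 : F) • e) (hhf : ⁅h, f⁆ = (-2 : F) • f) (hef : ⁅e, f⁆ = h)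
    (k : ℤ) :
    (⨆ i : ℕ, ⨆ _ : 1 ≤ i ∧ 1 - k ≤ (i : ℤ),
        LinearMap.ker (LieAlgebra.ad F g e ^ i) ⊓
          LinearMap.range (LieAlgebra.ad F g e ^ ((i : ℤ) + k - 1).toNat))
      = ⨆ m : ℤ, ⨆ _ : k ≤ m, Module.End.eigenspace (LieAlgebra.ad F g h) ((m : ℤ) : F) := by
  have t : IsSl2Action (LieAlgebra.ad F g e) (LieAlgebra.ad F g h) (LieAlgebra.ad F g f) :=
    { h_e v := by simp [leibniz_lie h e v, hhe, add_comm]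
      h_f v := by simp [leibniz_lie h f v, hhf, sub_eq_add_neg, add_comm]
      e_f v := by simp [leibniz_lie e f v, hef, add_comm] }
  apply le_antisymm
  · exact iSup₂_le fun i hi ↦ t.ker_inf_range_le (by omega)
  · exact iSup₂_le fun m hm x hx ↦ t.mem_iSup_ker_inf_range hm (End.mem_eigenspace_iff.mp hx)
end

section
/- Let σ and τ be finite-dimensional complex vector spaces equipped with linear endomorphisms (e_σ, h_σ, f_σ) and (e_τ, h_τ, f_τ) respectively, each triple satisfying the sl₂ commutation relations ([h,e] = 2e, [h,f] = −2f, [e,f] = h as commutators of endomorphisms), and suppose each of σ and τ is irreducible, i.e. has no nonzero proper subspace invariant under all three operators. Assume dim σ ≥ dim τ ≥ 1. Let L = Hom_ℂ(σ, τ) with the sl₂-action given by x·T = x_τ∘T − T∘x_σ for x ∈ {e, h, f}. Let v₊ ∈ σ be a nonzero vector with e_σ(v₊) = 0. Then L is the direct sum of L⁰ = {T ∈ L : T(v₊) = 0} and L^f = {T ∈ L : f_τ∘T − T∘f_σ = 0}. -/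
section SlTwo

variable {V : Type*} [AddCommGroup V] [Module ℂ V] {e h f : Module.End ℂ V}

lemma apply_h_pow_f (hf : h * f - f * h = (-2 : ℂ) • f) {w : V} {μ : ℂ} (hw : h w = μ • w)
    (n : ℕ) : h ((f ^ n) w) = (μ - 2 * n) • (f ^ n) w := by
  induction n with
  | zero => simpa using hw
  | succ n ih =>
    have key := LinearMap.congr_fun hf ((f ^ n) w)
    simp only [LinearMap.sub_apply, Module.End.mul_apply, LinearMap.smul_apply, ih, map_smul,
      sub_eq_iff_eq_add] at key
    rw [pow_succ', Module.End.mul_apply, key, ← add_smul]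
    congr 1
    push_cast
    ring

lemma apply_e_pow_succ_f (hf : h * f - f * h = (-2 : ℂ) • f) (hef : e * f - f * e = h)
    {w : V} {μ : ℂ} (hw : h w = μ • w) (ew : e w = 0) (n : ℕ) :
    e ((f ^ (n + 1)) w) = ((n + 1) * (μ - n)) • (f ^ n) w := by
  induction n with
  | zero =>
    have key := LinearMap.congr_fun hef w
    simpa [ew, hw] using key
  | succ n ih =>
    have key := LinearMap.congr_fun hef ((f ^ (n + 1)) w)
    rw [LinearMap.sub_apply, Module.End.mul_apply, Module.End.mul_apply, ih,
      apply_h_pow_f hf hw, map_smul, ← Module.End.mul_apply f,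
      ← Module.End.mul_apply f, ← pow_succ', ← pow_succ', sub_eq_iff_eq_add, ← add_smul] at key
    rw [key]
    congr 1
    push_cast
    ring

lemma span_pow_f_eq_top_of_eigenvector
    (hf : h * f - f * h = (-2 : ℂ) • f) (hef : e * f - f * e = h)
    (hirr : ∀ W : Submodule ℂ V, W.map e ≤ W → W.map h ≤ W → W.map f ≤ W → W = ⊥ ∨ W = ⊤)
    {w : V} {μ : ℂ} (hw0 : w ≠ 0) (ew : e w = 0) (hw : h w = μ • w) :
    Submodule.span ℂ (Set.range fun n : ℕ ↦ (f ^ n) w) = ⊤ := by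
  set W := Submodule.span ℂ (Set.range fun n : ℕ ↦ (f ^ n) w)
  have hmem (n : ℕ) : (f ^ n) w ∈ W := Submodule.subset_span ⟨n, rfl⟩
  refine (hirr W ?_ ?_ ?_).resolve_left fun H ↦ hw0 ?_
  · rw [Submodule.map_span_le]
    rintro _ ⟨n, rfl⟩
    cases n with
    | zero => simp [ew]
    | succ n =>
      simp only [apply_e_pow_succ_f hf hef hw ew]
      exact W.smul_mem _ (hmem n)
  · rw [Submodule.map_span_le]
    rintro _ ⟨n, rfl⟩
    simp only [apply_h_pow_f hf hw]
    exact W.smul_mem _ (hmem n)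
  · rw [Submodule.map_span_le]
    rintro _ ⟨n, rfl⟩
    simpa [pow_succ'] using hmem (n + 1)
  · simpa [H] using hmem 0

variable [FiniteDimensional ℂ V]

lemma isNilpotent_of_commutator_eq_smul (hf : h * f - f * h = (-2 : ℂ) • f) :
    IsNilpotent f := by
  let D : Module.End ℂ (Module.End ℂ V) := LinearMap.mulLeft ℂ h - LinearMap.mulRight ℂ h
  have hD (n : ℕ) : D (f ^ n) = (-2 * n : ℂ) • f ^ n := by
    induction n with
    | zero => simp [D]
    | succ n ih =>
      simp only [D, LinearMap.sub_apply, LinearMap.mulLeft_apply, LinearMap.mulRight_apply]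
        at ih ⊢
      calc h * f ^ (n + 1) - f ^ (n + 1) * h
          = (h * f ^ n - f ^ n * h) * f + f ^ n * (h * f - f * h) := by
            rw [pow_succ]; noncomm_ring
        _ = _ := by
            rw [ih, hf, smul_mul_assoc, mul_smul_comm, ← pow_succ, ← add_smul]
            congr 1
            push_cast
            ring
  by_contra contra
  have hne (n : ℕ) : f ^ n ≠ 0 := fun hn ↦ contra ⟨n, hn⟩
  have hinj : Function.Injective fun n : ℕ ↦ (-2 * n : ℂ) := fun a b hab ↦ by
    simpa using hab
  have hli := D.eigenvectors_linearIndependent' _ hinj (fun n ↦ f ^ n)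
    fun n ↦ ⟨Module.End.mem_eigenspace_iff.mpr (hD n), hne n⟩
  have := hli.finite
  exact not_finite ℕ

lemma exists_h_eigenvector_mem_ker_e (he : h * e - e * h = (2 : ℂ) • e)
    {v : V} (hv : v ≠ 0) (ev : e v = 0) :
    ∃ (w : V) (μ : ℂ), w ≠ 0 ∧ e w = 0 ∧ h w = μ • w := by
  have hinv : ∀ x ∈ LinearMap.ker e, h x ∈ LinearMap.ker e := by
    intro x hx
    have key := LinearMap.congr_fun he x
    rw [LinearMap.mem_ker] at hx ⊢
    simpa [hx] using key
  have : Nontrivial (LinearMap.ker e) := ⟨⟨v, ev⟩, 0, fun H ↦ hv (congrArg Subtype.val H)⟩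
  obtain ⟨μ, hμ⟩ := Module.End.exists_eigenvalue (h.restrict hinv)
  obtain ⟨w, hw⟩ := hμ.exists_hasEigenvector
  exact ⟨w, μ, fun H ↦ hw.2 (Subtype.ext H), w.2, congrArg Subtype.val hw.apply_eq_smul⟩

lemma finrank_ker_e_le_one
    (hf : h * f - f * h = (-2 : ℂ) • f) (hef : e * f - f * e = h)
    {w : V} {μ : ℂ} (hw0 : w ≠ 0) (ew : e w = 0) (hw : h w = μ • w)
    (hspan : Submodule.span ℂ (Set.range fun n : ℕ ↦ (f ^ n) w) = ⊤) :
    Module.finrank ℂ (LinearMap.ker e) ≤ 1 := by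
  have hex : ∃ n, (f ^ n) w = 0 := by
    obtain ⟨n, hn⟩ := isNilpotent_of_commutator_eq_smul hf
    exact ⟨n, by simp [hn]⟩
  obtain ⟨N, hN, hN'⟩ := Nat.exists_not_and_succ_of_not_zero_of_exists
    (p := fun n ↦ (f ^ n) w = 0) (by simpa using hw0) hex
  have hμ : μ = N := by
    have key := apply_e_pow_succ_f hf hef hw ew N
    rw [hN', map_zero, eq_comm, smul_eq_zero, or_iff_left hN, mul_eq_zero, sub_eq_zero] at key
    exact key.resolve_left (Nat.cast_add_one_ne_zero N)
  have htop : LinearMap.range e ⊔ Submodule.span ℂ {(f ^ N) w} = ⊤ := by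
    rw [eq_top_iff, ← hspan, Submodule.span_le]
    rintro _ ⟨n, rfl⟩
    rcases lt_trichotomy n N with hn | rfl | hn
    · refine Submodule.mem_sup_left ?_
      have hc : ((n + 1) * (μ - n) : ℂ) ≠ 0 := by
        rw [hμ]
        refine mul_ne_zero (Nat.cast_add_one_ne_zero n) (sub_ne_zero.mpr ?_)
        exact_mod_cast hn.ne'
      rw [← Submodule.smul_mem_iff _ hc, ← apply_e_pow_succ_f hf hef hw ew]
      exact LinearMap.mem_range_self e _
    · exact Submodule.mem_sup_right (Submodule.mem_span_singleton_self _)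
    · obtain ⟨k, rfl⟩ := Nat.exists_eq_add_of_lt hn
      have : (f ^ (N + k + 1)) w = 0 := by
        rw [show N + k + 1 = k + (N + 1) by ring, pow_add, Module.End.mul_apply, hN', map_zero]
      simp only [this, SetLike.mem_coe, zero_mem]
  have hle := Submodule.finrank_add_le_finrank_add_finrank (LinearMap.range e)
    (Submodule.span ℂ {(f ^ N) w})
  rw [htop, finrank_top, finrank_span_singleton hN] at hle
  have := LinearMap.finrank_range_add_finrank_ker e
  omega

/-- A highest-weight vector of an irreducible `sl₂`-module is cyclic for `f`. -/
lemma span_pow_f_eq_top (he : h * e - e * h = (2 : ℂ) • e)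
    (hf : h * f - f * h = (-2 : ℂ) • f) (hef : e * f - f * e = h)
    (hirr : ∀ W : Submodule ℂ V, W.map e ≤ W → W.map h ≤ W → W.map f ≤ W → W = ⊥ ∨ W = ⊤)
    {v : V} (hv : v ≠ 0) (ev : e v = 0) :
    Submodule.span ℂ (Set.range fun n : ℕ ↦ (f ^ n) v) = ⊤ := by
  obtain ⟨w, μ, hw0, ew, hw⟩ := exists_h_eigenvector_mem_ker_e he hv ev
  have hspan := span_pow_f_eq_top_of_eigenvector hf hef hirr hw0 ew hw
  obtain ⟨u, hu⟩ := finrank_le_one_iff.mp (finrank_ker_e_le_one hf hef hw0 ew hw hspan)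
  obtain ⟨a, ha⟩ := hu ⟨v, ev⟩
  obtain ⟨b, hb⟩ := hu ⟨w, ew⟩
  replace ha : a • (u : V) = v := congrArg Subtype.val ha
  replace hb : b • (u : V) = w := congrArg Subtype.val hb
  have ha0 : a ≠ 0 := by rintro rfl; exact hv (by simpa using ha.symm)
  have hwv : w = (b * a⁻¹) • v := by rw [← ha, ← hb, smul_smul, inv_mul_cancel_right₀ ha0]
  rw [eq_top_iff, ← hspan, Submodule.span_le]
  rintro _ ⟨n, rfl⟩
  simp only [hwv, map_smul]
  exact Submodule.smul_mem _ _ (Submodule.subset_span ⟨n, rfl⟩)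

end SlTwo

section Cyclic

variable {K V W : Type*} [Field K] [AddCommGroup V] [Module K V]
  [AddCommGroup W] [Module K W] {f : Module.End K V} {g : Module.End K W}

lemma eq_zero_of_intertwining_of_apply_eq_zero {v : V}
    (hv : Submodule.span K (Set.range fun n : ℕ ↦ (f ^ n) v) = ⊤)
    {S : V →ₗ[K] W} (hS : g ∘ₗ S = S ∘ₗ f) (hSv : S v = 0) : S = 0 := by
  refine LinearMap.ext_on_range hv fun n ↦ ?_
  induction n with
  | zero => simpa using hSv
  | succ n ih =>
    have key := LinearMap.congr_fun hS ((f ^ n) v)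
    rw [LinearMap.comp_apply, LinearMap.comp_apply, ih] at key
    simpa [pow_succ'] using key.symm

variable [FiniteDimensional K V]

lemma pow_finrank_eq_zero_of_isNilpotent (hf : IsNilpotent f) :
    f ^ Module.finrank K V = 0 := by
  have key := LinearMap.aeval_self_charpoly f
  rwa [IsNilpotent.charpoly_eq_X_pow_finrank hf, map_pow, Polynomial.aeval_X] at key

/-- A vector killed by `g ^ dim V` is the image of a cyclic vector of a nilpotent `f` under some
map intertwining `f` and `g`. -/
lemma exists_intertwining_apply_eq (hf : IsNilpotent f) {v : V}
    (hv : Submodule.span K (Set.range fun n : ℕ ↦ (f ^ n) v) = ⊤)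
    {t : W} (ht : (g ^ Module.finrank K V) t = 0) :
    ∃ S : V →ₗ[K] W, g ∘ₗ S = S ∘ₗ f ∧ S v = t := by
  set m := Module.finrank K V with hm
  have hfm : f ^ m = 0 := pow_finrank_eq_zero_of_isNilpotent hf
  have hfv {n : ℕ} (hn : m ≤ n) : (f ^ n) v = 0 := by simp [pow_eq_zero_of_le hn hfm]
  have hgt {n : ℕ} (hn : m ≤ n) : (g ^ n) t = 0 := by
    rw [← Nat.sub_add_cancel hn, pow_add, Module.End.mul_apply, ht, map_zero]
  have hspan : ⊤ ≤ Submodule.span K (Set.range fun i : Fin m ↦ (f ^ (i : ℕ)) v) := by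
    rw [← hv, Submodule.span_le]
    rintro _ ⟨n, rfl⟩
    rcases lt_or_ge n m with hn | hn
    · exact Submodule.subset_span ⟨⟨n, hn⟩, rfl⟩
    · simp only [hfv hn, SetLike.mem_coe, zero_mem]
  let B := basisOfTopLeSpanOfCardEqFinrank _ hspan (by simp [hm])
  have hB (i : Fin m) : B i = (f ^ (i : ℕ)) v := by simp [B]
  let S : V →ₗ[K] W := B.constr K fun i ↦ (g ^ (i : ℕ)) t
  have hS (n : ℕ) : S ((f ^ n) v) = (g ^ n) t := by
    rcases lt_or_ge n m with hn | hn
    · rw [← hB ⟨n, hn⟩, Module.Basis.constr_basis]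
    · rw [hfv hn, hgt hn, map_zero]
  refine ⟨S, B.ext fun i ↦ ?_, by simpa using hS 0⟩
  rw [LinearMap.comp_apply, LinearMap.comp_apply, hB, hS, ← Module.End.mul_apply,
    ← Module.End.mul_apply, ← pow_succ', ← pow_succ', hS]

end Cyclic

/-- for irreducible finite-dimensional `sl₂`-modules `σ`, `τ` with
`dim σ ≥ dim τ ≥ 1`, a highest-weight vector `v₊ ∈ σ`, the space `L = Hom(σ, τ)`
is the direct sum of `L⁰ = {T : T v₊ = 0}` and `L^f = {T : f∘T - T∘f = 0}`
(every `T` decomposes uniquely as a sum of one element of each). -/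
theorem hom_decomposition
    (σ : Type*) [AddCommGroup σ] [Module ℂ σ] [FiniteDimensional ℂ σ]
    (τ : Type*) [AddCommGroup τ] [Module ℂ τ] [FiniteDimensional ℂ τ]
    (eσ hσ fσ : Module.End ℂ σ) (eτ hτ fτ : Module.End ℂ τ)
    (hσe : hσ * eσ - eσ * hσ = (2 : ℂ) • eσ)
    (hσf : hσ * fσ - fσ * hσ = (-2 : ℂ) • fσ)
    (hσh : eσ * fσ - fσ * eσ = hσ)
    (hτe : hτ * eτ - eτ * hτ = (2 : ℂ) • eτ)
    (hτf : hτ * fτ - fτ * hτ = (-2 : ℂ) • fτ)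
    (hτh : eτ * fτ - fτ * eτ = hτ)
    (hirrσ : ∀ W : Submodule ℂ σ,
      W.map eσ ≤ W → W.map hσ ≤ W → W.map fσ ≤ W → W = ⊥ ∨ W = ⊤)
    (hirrτ : ∀ W : Submodule ℂ τ,
      W.map eτ ≤ W → W.map hτ ≤ W → W.map fτ ≤ W → W = ⊥ ∨ W = ⊤)
    (hdim : Module.finrank ℂ τ ≤ Module.finrank ℂ σ)
    (hdim1 : 1 ≤ Module.finrank ℂ τ)
    (vp : σ) (hvp : vp ≠ 0) (hevp : eσ vp = 0) :
    ∀ T : σ →ₗ[ℂ] τ, ∃! P : (σ →ₗ[ℂ] τ) × (σ →ₗ[ℂ] τ),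
      P.1 vp = 0 ∧ fτ ∘ₗ P.2 - P.2 ∘ₗ fσ = 0 ∧ T = P.1 + P.2 := by
  have hcyc := span_pow_f_eq_top hσe hσf hσh hirrσ hvp hevp
  intro T
  obtain ⟨S, hS, hSv⟩ := exists_intertwining_apply_eq (g := fτ) (t := T vp)
    (isNilpotent_of_commutator_eq_smul hσf) hcyc (by
      rw [pow_eq_zero_of_le hdim (pow_finrank_eq_zero_of_isNilpotent
        (isNilpotent_of_commutator_eq_smul hτf)), LinearMap.zero_apply])
  refine ⟨(T - S, S), ⟨by simp [hSv], sub_eq_zero.mpr hS, by simp⟩, ?_⟩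
  rintro ⟨A, B⟩ ⟨hA, hB, rfl⟩
  have hBS : B - S = 0 := by
    refine eq_zero_of_intertwining_of_apply_eq_zero (g := fτ) hcyc ?_ ?_
    · rw [LinearMap.comp_sub, LinearMap.sub_comp, hS, sub_eq_zero.mp hB]
    · simp_all
  obtain rfl := sub_eq_zero.mp hBS
  simp
end

section
/- Let V be a finite-dimensional complex vector space, let S ∈ End(V) be diagonalizable, and let f ∈ End(V) be nilpotent with S∘f − f∘S = −2f. Then there exist h', e' ∈ End(V) such that (e', h', f) is an sl₂-triple of endomorphisms, i.e. h'∘e' − e'∘h' = 2e', h'∘f − f∘h' = −2f, e'∘f − f∘e' = h', and moreover h' commutes with S. -/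
namespace SlTwoCompletion

open Finset

section Algebra

lemma unit_mul_unit {R : Type*} [Ring R] {A f : R} {n : ℕ}
    (hA : ∀ k, A * f ^ k * A = if k = n then A else 0) (i j k l : ℕ) :
    (f ^ i * A * f ^ j) * (f ^ k * A * f ^ l)
      = if j + k = n then f ^ i * A * f ^ l else 0 := by
  have : (f ^ i * A * f ^ j) * (f ^ k * A * f ^ l)
      = f ^ i * (A * f ^ (j + k) * A) * f ^ l := by
    simp only [pow_add, mul_assoc]
  rw [this, hA]
  split_ifs <;> simp

variable {R : Type*} [Ring R] [Algebra ℂ R]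

/-- The operator that is diagonal, with entries `c i`, on the Jordan block of `f` generated
by `A`. -/
def blockDiag (A f : R) (n : ℕ) (c : ℕ → ℂ) : R :=
  ∑ i ∈ range (n + 1), c i • (f ^ i * A * f ^ (n - i))

/-- The raising operator on the Jordan block of `f` generated by `A`. -/
def blockRaise (A f : R) (n : ℕ) : R :=
  ∑ i ∈ range n, (((i : ℂ) + 1) * (n - i)) • (f ^ i * A * f ^ (n - 1 - i))

variable {A f S E : R} {n : ℕ}

lemma blockDiag_mul_unit (hA : ∀ k, A * f ^ k * A = if k = n then A else 0) (c : ℕ → ℂ)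
    {i : ℕ} (hi : i ≤ n) (j : ℕ) :
    blockDiag A f n c * (f ^ i * A * f ^ j) = c i • (f ^ i * A * f ^ j) := by
  rw [blockDiag, sum_mul, sum_eq_single i]
  · rw [smul_mul_assoc, unit_mul_unit hA, if_pos (by omega)]
  · intro k hk hki
    rw [mem_range] at hk
    rw [smul_mul_assoc, unit_mul_unit hA, if_neg (by omega), smul_zero]
  · intro h
    exact absurd (mem_range.2 (by omega)) h

lemma unit_mul_blockDiag (hA : ∀ k, A * f ^ k * A = if k = n then A else 0) (c : ℕ → ℂ)
    (i : ℕ) {j : ℕ} (hj : j ≤ n) :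
    (f ^ i * A * f ^ j) * blockDiag A f n c = c (n - j) • (f ^ i * A * f ^ j) := by
  rw [blockDiag, mul_sum, sum_eq_single (n - j)]
  · rw [mul_smul_comm, unit_mul_unit hA, if_pos (by omega), Nat.sub_sub_self hj]
  · intro k hk hki
    rw [mem_range] at hk
    rw [mul_smul_comm, unit_mul_unit hA, if_neg (by omega), smul_zero]
  · intro h
    exact absurd (mem_range.2 (by omega)) h

lemma blockDiag_mul_blockDiag (hA : ∀ k, A * f ^ k * A = if k = n then A else 0)
    (c d : ℕ → ℂ) :
    blockDiag A f n c * blockDiag A f n d = blockDiag A f n (fun i => c i * d i) := by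
  conv_lhs => rw [blockDiag.eq_1 A f n d, mul_sum]
  refine sum_congr rfl fun i hi => ?_
  rw [mem_range] at hi
  rw [mul_smul_comm, blockDiag_mul_unit hA c (by omega), smul_smul, mul_comm]

lemma blockDiag_mul_blockRaise (hA : ∀ k, A * f ^ k * A = if k = n then A else 0)
    (c : ℕ → ℂ) :
    blockDiag A f n c * blockRaise A f n
      = ∑ i ∈ range n, (c i * (((i : ℂ) + 1) * (n - i))) • (f ^ i * A * f ^ (n - 1 - i)) := by
  rw [blockRaise, mul_sum]
  refine sum_congr rfl fun i hi => ?_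
  rw [mem_range] at hi
  rw [mul_smul_comm, blockDiag_mul_unit hA c (by omega), smul_smul, mul_comm]

lemma blockRaise_mul_blockDiag (hA : ∀ k, A * f ^ k * A = if k = n then A else 0)
    (c : ℕ → ℂ) :
    blockRaise A f n * blockDiag A f n c
      = ∑ i ∈ range n,
        (c (i + 1) * (((i : ℂ) + 1) * (n - i))) • (f ^ i * A * f ^ (n - 1 - i)) := by
  rw [blockRaise, sum_mul]
  refine sum_congr rfl fun i hi => ?_
  rw [mem_range] at hi
  rw [smul_mul_assoc, unit_mul_blockDiag hA c i (by omega), smul_smul, mul_comm,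
    show n - (n - 1 - i) = i + 1 by omega]

lemma blockDiag_mul_self (hr : A * f ^ (n + 1) = 0) (c : ℕ → ℂ) :
    blockDiag A f n c * f
      = ∑ i ∈ range n, c (i + 1) • (f ^ (i + 1) * A * f ^ (n - i)) := by
  rw [blockDiag, sum_mul, sum_range_succ']
  have h0 : c 0 • (f ^ 0 * A * f ^ (n - 0)) * f = 0 := by
    rw [smul_mul_assoc, mul_assoc, mul_assoc, Nat.sub_zero, ← pow_succ, hr]
    simp
  rw [h0, add_zero]
  refine sum_congr rfl fun i hi => ?_
  rw [mem_range] at hi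
  rw [smul_mul_assoc, mul_assoc _ _ f, ← pow_succ, show n - (i + 1) + 1 = n - i by omega]

lemma self_mul_blockDiag (hl : f ^ (n + 1) * A = 0) (c : ℕ → ℂ) :
    f * blockDiag A f n c
      = ∑ i ∈ range n, c i • (f ^ (i + 1) * A * f ^ (n - i)) := by
  rw [blockDiag, mul_sum, sum_range_succ]
  have h0 : f * c n • (f ^ n * A * f ^ (n - n)) = 0 := by
    rw [mul_smul_comm, ← mul_assoc, ← mul_assoc, ← pow_succ', hl]
    simp
  rw [h0, add_zero]
  refine sum_congr rfl fun i _ => ?_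
  rw [mul_smul_comm, ← mul_assoc, ← mul_assoc, ← pow_succ']

lemma blockRaise_commutator :
    blockRaise A f n * f - f * blockRaise A f n
      = blockDiag A f n (fun i => (n : ℂ) - 2 * i) := by
  have h1 : blockRaise A f n * f
      = ∑ i ∈ range (n + 1), (((i : ℂ) + 1) * (n - i)) • (f ^ i * A * f ^ (n - i)) := by
    rw [sum_range_succ, sub_self, mul_zero, zero_smul, add_zero, blockRaise, sum_mul]
    refine sum_congr rfl fun i hi => ?_
    rw [mem_range] at hi
    rw [smul_mul_assoc, mul_assoc _ _ f, ← pow_succ, show n - 1 - i + 1 = n - i by omega]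
  have h2 : f * blockRaise A f n
      = ∑ i ∈ range (n + 1), ((i : ℂ) * (n - i + 1)) • (f ^ i * A * f ^ (n - i)) := by
    rw [sum_range_succ', Nat.cast_zero, zero_mul, zero_smul, add_zero, blockRaise, mul_sum]
    refine sum_congr rfl fun i hi => ?_
    rw [mul_smul_comm, ← mul_assoc, ← mul_assoc, ← pow_succ',
      show n - 1 - i = n - (i + 1) by omega]
    congr 1
    push_cast
    ring
  rw [h1, h2, ← sum_sub_distrib, blockDiag]
  refine sum_congr rfl fun i _ => ?_
  rw [← sub_smul]
  congr 1
  ring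

lemma mul_blockDiag_of_commute (hE : Commute E f) (hEA : E * A = A) (c : ℕ → ℂ) :
    E * blockDiag A f n c = blockDiag A f n c := by
  rw [blockDiag, mul_sum]
  refine sum_congr rfl fun i _ => ?_
  rw [mul_smul_comm, ← mul_assoc, ← mul_assoc, (hE.pow_right i).eq, mul_assoc (f ^ i), hEA]

lemma blockDiag_mul_of_commute (hE : Commute E f) (hAE : A * E = A) (c : ℕ → ℂ) :
    blockDiag A f n c * E = blockDiag A f n c := by
  rw [blockDiag, sum_mul]
  refine sum_congr rfl fun i _ => ?_
  rw [smul_mul_assoc, mul_assoc _ _ E, ← (hE.pow_right _).eq, ← mul_assoc, mul_assoc _ A, hAE]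

lemma weight_mul_pow (hSf : S * f - f * S = (-2 : ℂ) • f) (k : ℕ) :
    S * f ^ k = f ^ k * S - (2 * k : ℂ) • f ^ k := by
  have hSf' : S * f = f * S - (2 : ℂ) • f := by
    rw [sub_eq_iff_eq_add] at hSf
    rw [hSf, neg_smul]
    abel
  induction k with
  | zero => simp
  | succ k ih =>
    rw [pow_succ, ← mul_assoc, ih, sub_mul, mul_assoc, hSf', mul_sub, ← mul_assoc,
      mul_smul_comm, smul_mul_assoc, sub_sub, ← add_smul]
    congr 2
    push_cast
    ring

variable {l : ℂ}

lemma commute_weight_blockDiag (hSf : S * f - f * S = (-2 : ℂ) • f)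
    (hSA : S * A = l • A) (hAS : A * S = (l - 2 * n) • A) (c : ℕ → ℂ) :
    Commute S (blockDiag A f n c) := by
  refine Commute.sum_right _ _ _ fun i hi => Commute.smul_right ?_ _
  rw [mem_range] at hi
  have hL : S * (f ^ i * A * f ^ (n - i)) = (l - 2 * i) • (f ^ i * A * f ^ (n - i)) := by
    rw [← mul_assoc, ← mul_assoc, weight_mul_pow hSf, sub_mul, mul_assoc _ S, hSA,
      mul_smul_comm, smul_mul_assoc, ← sub_smul, smul_mul_assoc]
  have hR : (f ^ i * A * f ^ (n - i)) * S = (l - 2 * i) • (f ^ i * A * f ^ (n - i)) := by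
    have h := weight_mul_pow hSf (n - i)
    rw [eq_sub_iff_add_eq, eq_comm] at h
    rw [mul_assoc, h, mul_add, ← mul_assoc, mul_assoc _ A, hAS, mul_smul_comm, mul_smul_comm,
      smul_mul_assoc, ← add_smul, Nat.cast_sub (by omega)]
    congr 1
    ring
  exact hL.trans hR.symm

lemma mul_pow_mul_of_weight (hSf : S * f - f * S = (-2 : ℂ) • f)
    (hSA : S * A = l • A) (hAS : A * S = (l - 2 * n) • A) (hn : A * f ^ n * A = A) (k : ℕ) :
    A * f ^ k * A = if k = n then A else 0 := by
  split_ifs with hk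
  · rw [hk, hn]
  have h1 : A * S * f ^ k * A = (l - 2 * n) • (A * f ^ k * A) := by
    rw [hAS, smul_mul_assoc, smul_mul_assoc]
  have h2 : A * S * f ^ k * A = (l - 2 * k) • (A * f ^ k * A) := by
    rw [mul_assoc A, weight_mul_pow hSf, mul_sub, sub_mul, mul_assoc A, mul_assoc _ S, hSA,
      mul_smul_comm, mul_smul_comm, mul_smul_comm, smul_mul_assoc, ← mul_assoc, ← sub_smul]
  rw [h1, ← sub_eq_zero, ← sub_smul, smul_eq_zero] at h2
  refine h2.resolve_left fun h => hk ?_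
  have : (k : ℂ) = n := by linear_combination h / 2
  exact_mod_cast this

/-- `f` can be completed to an `sl₂`-triple on the summand cut out by the idempotent `E`,
with neutral element commuting with `S`. -/
def HasCompletion (S f E : R) : Prop :=
  ∃ h e : R, E * h = h ∧ h * E = h ∧ E * e = e ∧ e * E = e ∧
    h * e - e * h = (2 : ℂ) • e ∧ h * f - f * h = (-2 : ℂ) • (f * E) ∧
    e * f - f * e = h ∧ h * S = S * h

lemma HasCompletion.add {P Q : R} (hPQ : P * Q = 0) (hQP : Q * P = 0)
    (hP : HasCompletion S f P) (hQ : HasCompletion S f Q) : HasCompletion S f (P + Q) := by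
  obtain ⟨h, e, h1, h2, h3, h4, h5, h6, h7, h8⟩ := hP
  obtain ⟨h', e', k1, k2, k3, k4, k5, k6, k7, k8⟩ := hQ
  have left {x y : R} (hx : x * P = x) (hy : Q * y = y) : x * y = 0 := by
    rw [← hx, ← hy, mul_assoc, ← mul_assoc P, hPQ, zero_mul, mul_zero]
  have right {x y : R} (hx : x * Q = x) (hy : P * y = y) : x * y = 0 := by
    rw [← hx, ← hy, mul_assoc, ← mul_assoc Q, hQP, zero_mul, mul_zero]
  have absl {x : R} (hx : P * x = x) : Q * x = 0 := by
    rw [← hx, ← mul_assoc, hQP, zero_mul]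
  have absl' {x : R} (hx : Q * x = x) : P * x = 0 := by
    rw [← hx, ← mul_assoc, hPQ, zero_mul]
  have absr {x : R} (hx : x * P = x) : x * Q = 0 := by
    rw [← hx, mul_assoc, hPQ, mul_zero]
  have absr' {x : R} (hx : x * Q = x) : x * P = 0 := by
    rw [← hx, mul_assoc, hQP, mul_zero]
  refine ⟨h + h', e + e', ?_, ?_, ?_, ?_, ?_, ?_, ?_, ?_⟩
  · rw [add_mul, mul_add, mul_add, h1, k1, absl h1, absl' k1]; abel
  · rw [add_mul, mul_add, mul_add, h2, k2, absr h2, absr' k2]; abel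
  · rw [add_mul, mul_add, mul_add, h3, k3, absl h3, absl' k3]; abel
  · rw [add_mul, mul_add, mul_add, h4, k4, absr h4, absr' k4]; abel
  · rw [smul_add, ← h5, ← k5, add_mul, mul_add, mul_add, add_mul, mul_add, mul_add,
      left h2 k3, right k2 h3, left h4 k1, right k4 h1]
    abel
  · rw [mul_add f P, smul_add, ← h6, ← k6, add_mul, mul_add]; abel
  · rw [add_mul, mul_add, add_sub_add_comm, h7, k7]
  · rw [add_mul, mul_add, h8, k8]

lemma hasCompletion_block (hSf : S * f - f * S = (-2 : ℂ) • f)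
    (hSA : S * A = l • A) (hAS : A * S = (l - 2 * n) • A) (hn : A * f ^ n * A = A)
    (hl : f ^ (n + 1) * A = 0) (hr : A * f ^ (n + 1) = 0) :
    HasCompletion S f (blockDiag A f n 1) := by
  have hA := mul_pow_mul_of_weight hSf hSA hAS hn
  refine ⟨blockDiag A f n (fun i => (n : ℂ) - 2 * i), blockRaise A f n, ?_, ?_, ?_, ?_, ?_, ?_,
    blockRaise_commutator, (commute_weight_blockDiag hSf hSA hAS _).eq.symm⟩
  · simp [blockDiag_mul_blockDiag hA]
  · simp [blockDiag_mul_blockDiag hA]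
  · rw [blockDiag_mul_blockRaise hA]; simp [blockRaise]
  · rw [blockRaise_mul_blockDiag hA]; simp [blockRaise]
  · rw [blockDiag_mul_blockRaise hA, blockRaise_mul_blockDiag hA, ← sum_sub_distrib,
      blockRaise, smul_sum]
    refine sum_congr rfl fun i _ => ?_
    rw [← sub_smul, smul_smul]
    congr 1
    push_cast
    ring
  · rw [blockDiag_mul_self hr, self_mul_blockDiag hl, self_mul_blockDiag hl,
      ← sum_sub_distrib, smul_sum]
    refine sum_congr rfl fun i _ => ?_
    rw [← sub_smul, smul_smul]
    congr 1
    push_cast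
    simp only [Pi.one_apply]
    ring

end Algebra

section Endomorphisms

variable {V : Type*} [AddCommGroup V] [Module ℂ V] {S f E : Module.End ℂ V}

lemma linearMap_ext_of_iSup_eigenspace {W : Type*} [AddCommGroup W] [Module ℂ W]
    (hS : (⨆ μ : ℂ, Module.End.eigenspace S μ) = ⊤) {φ ψ : V →ₗ[ℂ] W}
    (h : ∀ (μ : ℂ) v, S v = μ • v → φ v = ψ v) : φ = ψ := by
  refine LinearMap.eqLocus_eq_top.1 (top_le_iff.1 (hS ▸ iSup_le fun μ v hv => ?_))
  exact h μ v (Module.End.mem_eigenspace_iff.1 hv)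

/-- An eigenvector of a diagonalizable operator is detected by an eigenfunctional of the same
eigenvalue. -/
lemma exists_dual_eigenvector (hS : (⨆ μ : ℂ, Module.End.eigenspace S μ) = ⊤) {μ : ℂ} {w : V}
    (hw : S w = μ • w) (hw0 : w ≠ 0) :
    ∃ φ : V →ₗ[ℂ] ℂ, φ w = 1 ∧ ∀ x, φ (S x) = μ * φ x := by
  have hmem : w ∉ ⨆ ν ≠ μ, Module.End.eigenspace S ν := fun h => hw0 <|
    (Submodule.disjoint_def.1 (Module.End.eigenspaces_iSupIndep S μ)) w
      (Module.End.mem_eigenspace_iff.2 hw) h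
  obtain ⟨φ, hφw, hφ⟩ := Submodule.exists_le_ker_of_notMem hmem
  have key : φ ∘ₗ S = μ • φ := by
    refine linearMap_ext_of_iSup_eigenspace hS fun ν v hv => ?_
    by_cases hν : ν = μ
    · simp [hv, hν]
    · have : φ v = 0 := hφ <| Submodule.mem_iSup_of_mem ν <|
        Submodule.mem_iSup_of_mem hν (Module.End.mem_eigenspace_iff.2 hv)
      simp [hv, this]
  refine ⟨(φ w)⁻¹ • φ, by simp [hφw], fun x => ?_⟩
  have := LinearMap.congr_fun key x
  simp only [LinearMap.comp_apply, LinearMap.smul_apply, smul_eq_mul] at this ⊢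
  rw [this]
  ring

/-- A rank-one operator that generates a Jordan block of `f`, of size `n + 1`, inside the summand
cut out by `E`. -/
lemma exists_block_generator (hS : (⨆ μ : ℂ, Module.End.eigenspace S μ) = ⊤)
    (hSf : S * f - f * S = (-2 : ℂ) • f) (hEE : E * E = E) (hEf : Commute E f)
    (hES : Commute E S) {n : ℕ} (hn : f ^ n * E ≠ 0) :
    ∃ (A : Module.End ℂ V) (l : ℂ), A ≠ 0 ∧ E * A = A ∧ A * E = A ∧ S * A = l • A ∧
      A * S = (l - 2 * n) • A ∧ A * f ^ n * A = A := by
  obtain ⟨l, u, hu, hfu⟩ : ∃ (l : ℂ) (u : V), S u = l • u ∧ (f ^ n * E) u ≠ 0 := by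
    by_contra! h
    exact hn (linearMap_ext_of_iSup_eigenspace hS fun μ v hv => h μ v hv)
  have hESx (x : V) : E (S x) = S (E x) := LinearMap.congr_fun hES.eq x
  have hEEx (x : V) : E (E x) = E x := LinearMap.congr_fun hEE x
  have hEfx (x : V) : E ((f ^ n) x) = (f ^ n) (E x) :=
    LinearMap.congr_fun (hEf.pow_right n).eq x
  have hSv : S (E u) = l • E u := by rw [← hESx, hu, map_smul]
  have hSw : S ((f ^ n) (E u)) = (l - 2 * n) • (f ^ n) (E u) := by
    have := LinearMap.congr_fun (weight_mul_pow hSf n) (E u)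
    simp only [Module.End.mul_apply, LinearMap.sub_apply, LinearMap.smul_apply, hSv,
      map_smul] at this
    rw [this, sub_smul]
  obtain ⟨φ, hφ1, hφS⟩ := exists_dual_eigenvector hS hSw hfu
  refine ⟨(φ ∘ₗ E).smulRight (E u), l, ?_, ?_, ?_, ?_, ?_, ?_⟩
  · intro h
    have := LinearMap.congr_fun h ((f ^ n) (E u))
    simp only [LinearMap.smulRight_apply, LinearMap.comp_apply, hEfx, hEEx, hφ1, one_smul,
      LinearMap.zero_apply] at this
    exact hfu (by rw [Module.End.mul_apply, this, map_zero])
  all_goals ext x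
  · simp [hEEx]
  · simp [hEEx]
  · simp [hSv, smul_comm l]
  · simp [hESx, hφS, mul_smul]
  · simp [hEfx, hEEx, hφ1]

variable [FiniteDimensional ℂ V]

lemma finrank_range_sub_lt {P : Module.End ℂ V} (hPP : P * P = P) (hEP : E * P = P)
    (hPE : P * E = P) (hP : P ≠ 0) :
    Module.finrank ℂ (LinearMap.range (E - P)) < Module.finrank ℂ (LinearMap.range E) := by
  refine Submodule.finrank_lt_finrank_of_lt (lt_of_le_of_ne ?_ fun h => hP ?_)
  · rintro _ ⟨x, rfl⟩
    refine ⟨x - P x, ?_⟩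
    rw [map_sub, ← Module.End.mul_apply, hEP, LinearMap.sub_apply]
  · ext x
    have hx : P x ∈ LinearMap.range (E - P) := by
      rw [h]
      exact ⟨P x, LinearMap.congr_fun hEP x⟩
    obtain ⟨y, hy⟩ := hx
    have hz : P * (E - P) = 0 := by rw [mul_sub, hPE, hPP, sub_self]
    calc P x = P (P x) := (LinearMap.congr_fun hPP x).symm
      _ = (P * (E - P)) y := by rw [← hy, Module.End.mul_apply]
      _ = 0 := by rw [hz, LinearMap.zero_apply]

lemma hasCompletion_of_idempotent (hS : (⨆ μ : ℂ, Module.End.eigenspace S μ) = ⊤)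
    (hf : IsNilpotent f) (hSf : S * f - f * S = (-2 : ℂ) • f) (hEE : E * E = E)
    (hEf : Commute E f) (hES : Commute E S) : HasCompletion S f E := by
  classical
  induction hd : Module.finrank ℂ (LinearMap.range E) using Nat.strong_induction_on
    generalizing E with
  | _ d ih =>
  by_cases hE0 : E = 0
  · exact ⟨0, 0, by simp [hE0]⟩
  have hex : ∃ m, f ^ m * E = 0 := hf.imp fun m hm => by rw [hm, zero_mul]
  obtain ⟨n, hn⟩ : ∃ n, Nat.find hex = n + 1 := Nat.exists_eq_succ_of_ne_zero fun h0 => by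
    have := Nat.find_spec hex
    rw [h0, pow_zero, one_mul] at this
    exact hE0 this
  have hz : f ^ (n + 1) * E = 0 := hn ▸ Nat.find_spec hex
  obtain ⟨A, l, hA0, hEA, hAE, hSA, hAS, hAn⟩ :=
    exists_block_generator hS hSf hEE hEf hES (Nat.find_min hex (m := n) (by omega))
  have hl : f ^ (n + 1) * A = 0 := by rw [← hEA, ← mul_assoc, hz, zero_mul]
  have hr : A * f ^ (n + 1) = 0 := by
    rw [← hAE, mul_assoc, (hEf.pow_right _).eq, hz, mul_zero]
  have hA := mul_pow_mul_of_weight hSf hSA hAS hAn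
  have hblock := hasCompletion_block hSf hSA hAS hAn hl hr
  set P := blockDiag A f n 1 with hP
  have hPP : P * P = P := by
    rw [hP, blockDiag_mul_blockDiag hA]
    simp [blockDiag]
  have hEP : E * P = P := mul_blockDiag_of_commute hEf hEA _
  have hPE : P * E = P := blockDiag_mul_of_commute hEf hAE _
  have hPf : Commute P f := by
    rw [Commute, SemiconjBy, hP, blockDiag_mul_self hr, self_mul_blockDiag hl]
    rfl
  have hPS : Commute P S := (commute_weight_blockDiag hSf hSA hAS _).symm
  have hP0 : P ≠ 0 := fun h => hA0 <| by
    have := blockDiag_mul_unit hA 1 n.zero_le 0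
    rw [← hP, h] at this
    simpa using this.symm
  have hrest : HasCompletion S f (E - P) :=
    ih _ (hd ▸ finrank_range_sub_lt hPP hEP hPE hP0)
      (by rw [mul_sub, sub_mul, sub_mul, hEE, hPE, hEP, hPP]; abel)
      (hEf.sub_left hPf) (hES.sub_left hPS) rfl
  have := hblock.add (by rw [mul_sub, hPE, hPP, sub_self])
    (by rw [sub_mul, hEP, hPP, sub_self]) hrest
  rwa [add_sub_cancel] at this

end Endomorphisms

end SlTwoCompletion

/-- if `S` is diagonalizable, `f` nilpotent, and `S∘f - f∘S = -2f`, then `f`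
can be completed to an `sl₂`-triple `(e', h', f)` of endomorphisms with `h'` commuting
with `S`. -/
theorem exists_sl2_completion_commuting (V : Type*) [AddCommGroup V] [Module ℂ V]
    [FiniteDimensional ℂ V]
    (S f : Module.End ℂ V)
    (hS : (⨆ μ : ℂ, Module.End.eigenspace S μ) = ⊤)
    (hf : IsNilpotent f)
    (hSf : S * f - f * S = (-2 : ℂ) • f) :
    ∃ h' e' : Module.End ℂ V,
      h' * e' - e' * h' = (2 : ℂ) • e' ∧
      h' * f - f * h' = (-2 : ℂ) • f ∧
      e' * f - f * e' = h' ∧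
      h' * S = S * h' := by
  obtain ⟨h, e, -, -, -, -, h1, h2, h3, h4⟩ :=
    SlTwoCompletion.hasCompletion_of_idempotent hS hf hSf (mul_one 1)
      (Commute.one_left f) (Commute.one_left S)
  exact ⟨h, e, h1, by rwa [mul_one] at h2, h3, h4⟩
end

section
/- Let (f, h, e) be matrices in M_n(ℂ) forming an sl₂-triple (so he − eh = 2e, hf − fh = −2f, ef − fe = h, as matrix products). Let Z₁ and Z₂ be matrices in M_n(ℂ) each of which commutes with all three of e, h, f. Suppose there exists g ∈ GL_n(ℂ) such that g·f = f·g and g·(h + Z₁)·g⁻¹ = h + Z₂. Then there exists u ∈ GL_n(ℂ) commuting with each of e, h, f such that u·Z₁·u⁻¹ = Z₂. -/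
open Polynomial

theorem lowering_comp_raising_pow {M : Type*} [AddCommGroup M] [Module ℂ M]
    {E H F : Module.End ℂ M} (hHE : H * E - E * H = (2 : ℂ) • E) (hEF : E * F - F * E = H)
    (n : ℕ) :
    F * E ^ (n + 1) = E ^ (n + 1) * F - ((n : ℂ) + 1) • (E ^ n * (H + (n : ℂ) • 1)) := by
  induction n with
  | zero => simp [← hEF]
  | succ n ih =>
    have hHE' : H * E = E * H + (2 : ℂ) • E := by rw [← hHE]; abel
    have hFE : F * E = E * F - H := by rw [← hEF]; abel
    rw [pow_succ E (n + 1), ← mul_assoc, ih, sub_mul, mul_assoc (E ^ (n + 1)) F E, hFE,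
      smul_mul_assoc, mul_assoc (E ^ n), add_mul, hHE', pow_succ E n]
    simp only [mul_add, mul_sub, smul_mul_assoc, mul_smul_comm, one_mul, mul_one, mul_assoc]
    push_cast
    module

theorem aeval_nodal_apply_eq_zero {M : Type*} [AddCommGroup M] [Module ℂ M]
    {E H F : Module.End ℂ M} (hHE : H * E - E * H = (2 : ℂ) • E)
    (hHF : H * F - F * H = (-2 : ℂ) • F) (hEF : E * F - F * E = H)
    (n : ℕ) {x : M} (hF : F x = 0) (hE : (E ^ n) x = 0) :
    aeval H (Lagrange.nodal (Finset.range n) fun k : ℕ => -(k : ℂ)) x = 0 := by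
  induction n generalizing x with
  | zero => simpa using hE
  | succ n ih =>
    have hFH : F (H x) = 0 := by
      have := LinearMap.congr_fun hHF x
      simpa [hF] using this
    have key := LinearMap.congr_fun (lowering_comp_raising_pow hHE hEF n) x
    have hn : (n : ℂ) + 1 ≠ 0 := by exact_mod_cast n.succ_ne_zero
    rw [Module.End.mul_apply, hE] at key
    have hE' : (E ^ n) ((H + (n : ℂ) • 1) x) = 0 := by
      rw [LinearMap.sub_apply, Module.End.mul_apply, hF, map_zero, map_zero, zero_sub, eq_comm,
        neg_eq_zero, LinearMap.smul_apply, smul_eq_zero_iff_right hn] at key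
      exact key
    rw [Finset.range_add_one, Lagrange.nodal_insert_eq_nodal Finset.notMem_range_self, mul_comm,
      map_mul, Module.End.mul_apply]
    have h := ih (x := (H + (n : ℂ) • 1) x) (by simp [hF, hFH]) hE'
    simpa [Nat.cast_smul_eq_nsmul] using h

section Interpolation

variable {M ι : Type*} [AddCommGroup M] [Module ℂ M]
  {T : Module.End ℂ M} {s : Finset ι} {v : ι → ℂ} {x : M}

theorem apply_aeval_basis_eq_smul [DecidableEq ι]
    (hx : aeval T (Lagrange.nodal s v) x = 0) {i : ι} (hi : i ∈ s) :
    T (aeval T (Lagrange.basis s v i) x) = v i • aeval T (Lagrange.basis s v i) x := by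
  have hmul : (X - C (v i)) * Lagrange.basis s v i
      = C (Lagrange.nodalWeight s v i) * Lagrange.nodal s v := by
    rw [Lagrange.basis_eq_prod_sub_inv_mul_nodal_div hi, ← Lagrange.nodal_erase_eq_nodal_div hi,
      Lagrange.nodal_eq_mul_nodal_erase hi]
    ring
  have h := congrArg (fun p => aeval T p x) hmul
  simp only [map_mul, Module.End.mul_apply, hx, map_zero] at h
  simpa [sub_eq_zero] using h

theorem sum_aeval_basis_apply [DecidableEq ι] (hv : Set.InjOn v s) (hs : s.Nonempty) (x : M) :
    ∑ i ∈ s, aeval T (Lagrange.basis s v i) x = x := by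
  rw [← LinearMap.sum_apply, ← map_sum, Lagrange.sum_basis hv hs, map_one, Module.End.one_apply]

theorem eq_zero_of_aeval_nodal_apply_eq_zero (hx : aeval T (Lagrange.nodal s v) x = 0) {μ : ℂ}
    (hμ : T x = μ • x) (hne : ∀ i ∈ s, μ ≠ v i) : x = 0 := by
  rw [Module.End.aeval_apply_of_mem_apply_eq_smul hμ] at hx
  exact (smul_eq_zero.1 hx).resolve_left (Lagrange.eval_nodal_not_at_node hne)

end Interpolation

section InnerDerivation

variable {A : Type*} [Ring A] [Algebra ℂ A]

/-- The linear endomorphism `x ↦ a * x - x * a` of an algebra. -/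
noncomputable def innerDerivation (a : A) : Module.End ℂ A :=
  LinearMap.mulLeft ℂ a - LinearMap.mulRight ℂ a

theorem innerDerivation_apply (a x : A) : innerDerivation a x = a * x - x * a := by
  simp [innerDerivation]

theorem innerDerivation_apply_eq_zero {a x : A} : innerDerivation a x = 0 ↔ a * x = x * a := by
  rw [innerDerivation_apply, sub_eq_zero]

theorem innerDerivation_apply_mul (a x y : A) :
    innerDerivation a (x * y) = innerDerivation a x * y + x * innerDerivation a y := by
  simp only [innerDerivation_apply]
  noncomm_ring

theorem innerDerivation_smul (c : ℂ) (a : A) :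
    innerDerivation (c • a) = c • innerDerivation a := by
  ext x
  simp [innerDerivation_apply, smul_sub]

theorem innerDerivation_mul_sub_mul (a b : A) :
    innerDerivation a * innerDerivation b - innerDerivation b * innerDerivation a
      = innerDerivation (a * b - b * a) := by
  ext x
  simp only [innerDerivation_apply, LinearMap.sub_apply, Module.End.mul_apply]
  noncomm_ring

theorem isNilpotent_innerDerivation {a : A} (ha : IsNilpotent a) :
    IsNilpotent (innerDerivation a) :=
  (LinearMap.commute_mulLeft_right a a).isNilpotent_sub
    ((LinearMap.isNilpotent_mulLeft_iff ℂ a).2 ha) ((LinearMap.isNilpotent_mulRight_iff ℂ a).2 ha)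

theorem innerDerivation_mul_eq_smul {a x y : A} {μ ν : ℂ} (hx : innerDerivation a x = μ • x)
    (hy : innerDerivation a y = ν • y) : innerDerivation a (x * y) = (μ + ν) • (x * y) := by
  rw [innerDerivation_apply_mul, hx, hy, smul_mul_assoc, mul_smul_comm, add_smul]

theorem innerDerivation_pow_eq_smul {a x : A} {μ : ℂ} (hx : innerDerivation a x = μ • x) (k : ℕ) :
    innerDerivation a (x ^ k) = ((k : ℂ) * μ) • x ^ k := by
  induction k with
  | zero => simp [innerDerivation_apply]
  | succ k ih =>
    rw [pow_succ, innerDerivation_mul_eq_smul ih hx]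
    push_cast
    ring_nf

theorem isNilpotent_of_innerDerivation_eq_smul [FiniteDimensional ℂ A] {a x : A} {μ : ℂ}
    (hμ : μ ≠ 0) (hx : innerDerivation a x = μ • x) : IsNilpotent x := by
  by_contra hne
  refine Set.infinite_of_injective_forall_mem (f := fun k : ℕ => (k : ℂ) * μ)
    (fun k l hkl => by simpa [hμ] using hkl) (fun k => ?_)
    (Module.End.finite_hasEigenvalue (innerDerivation a))
  exact Module.End.hasEigenvalue_of_hasEigenvector (x := x ^ k)
    ⟨Module.End.mem_eigenspace_iff.2 (innerDerivation_pow_eq_smul hx k), fun h0 => hne ⟨k, h0⟩⟩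

/-- The projection onto the kernel of `ad h`, on any subspace where `ad h` is diagonalizable with
eigenvalues among `0, -1, …, -(n - 1)`. -/
noncomputable def weightZeroPart (h : A) (n : ℕ) : Module.End ℂ A :=
  aeval (innerDerivation h) (Lagrange.basis (Finset.range n) (fun k : ℕ => -(k : ℂ)) 0)

theorem weightZeroPart_mem {h : A} {n : ℕ} {p : Submodule ℂ A}
    (hp : p ≤ p.comap (innerDerivation h)) {x : A} (hx : x ∈ p) : weightZeroPart h n x ∈ p :=
  aeval_apply_smul_mem_of_le_comap hx _ _ hp

theorem innerDerivation_weightZeroPart {h : A} {n : ℕ} (hn : 0 < n) {x : A}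
    (hx : aeval (innerDerivation h)
      (Lagrange.nodal (Finset.range n) fun k : ℕ => -(k : ℂ)) x = 0) :
    innerDerivation h (weightZeroPart h n x) = 0 := by
  simpa using! apply_aeval_basis_eq_smul hx (Finset.mem_range.2 hn)

theorem weightZeroPart_of_commute {h : A} {n : ℕ} {x : A} (hn : 0 < n)
    (hx : innerDerivation h x = 0) : weightZeroPart h n x = x := by
  have hx' : innerDerivation h x = (-((0 : ℕ) : ℂ)) • x := by simpa using hx
  rw [weightZeroPart, Module.End.aeval_apply_of_mem_apply_eq_smul hx',
    Lagrange.eval_basis_self (v := fun k : ℕ => -(k : ℂ)) (fun k _ l _ hkl => by simpa using hkl)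
      (Finset.mem_range.2 hn), one_smul]

theorem weightZeroPart_of_ne_zero {h : A} {n m : ℕ} {x : A} (hm : m ≠ 0)
    (hx : innerDerivation h x = (-(m : ℂ)) • x)
    (hx' : aeval (innerDerivation h)
      (Lagrange.nodal (Finset.range n) fun k : ℕ => -(k : ℂ)) x = 0) :
    weightZeroPart h n x = 0 := by
  by_cases hmn : m < n
  · rw [weightZeroPart, Module.End.aeval_apply_of_mem_apply_eq_smul hx,
      Lagrange.eval_basis_of_ne (v := fun k : ℕ => -(k : ℂ)) hm.symm (Finset.mem_range.2 hmn),
      zero_smul]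
  · rw [eq_zero_of_aeval_nodal_apply_eq_zero hx' hx, map_zero]
    intro k hk hmk
    have : m = k := by simpa using hmk
    exact hmn (this ▸ Finset.mem_range.1 hk)

/-- On a subalgebra stable under `ad h` on which the eigenvalues of `ad h` are nonpositive
integers, taking weight-zero components is multiplicative. -/
theorem weightZeroPart_mul {h : A} {n : ℕ} (hn : 0 < n) {S : Subalgebra ℂ A}
    (hS : ∀ x ∈ S, innerDerivation h x ∈ S)
    (hS' : ∀ x ∈ S, aeval (innerDerivation h)
      (Lagrange.nodal (Finset.range n) fun k : ℕ => -(k : ℂ)) x = 0)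
    {x y : A} (hx : x ∈ S) (hy : y ∈ S) :
    weightZeroPart h n (x * y) = weightZeroPart h n x * weightZeroPart h n y := by
  set v : ℕ → ℂ := fun k => -(k : ℂ) with hv
  set B : ℕ → Module.End ℂ A := fun k =>
    aeval (innerDerivation h) (Lagrange.basis (Finset.range n) v k) with hB
  have hinj : Set.InjOn v (Finset.range n) := fun k _ l _ hkl => by simpa [hv] using hkl
  have hne : (Finset.range n).Nonempty := ⟨0, Finset.mem_range.2 hn⟩
  have hmem (k : ℕ) {z : A} (hz : z ∈ S) : B k z ∈ S :=
    aeval_apply_smul_mem_of_le_comap (q := Subalgebra.toSubmodule S) hz _ _ hS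
  have heig {k : ℕ} (hk : k ∈ Finset.range n) {z : A} (hz : z ∈ S) :
      innerDerivation h (B k z) = v k • B k z := apply_aeval_basis_eq_smul (hS' z hz) hk
  have hprod {k l : ℕ} (hk : k ∈ Finset.range n) (hl : l ∈ Finset.range n) (hkl : k + l ≠ 0) :
      weightZeroPart h n (B k x * B l y) = 0 := by
    refine weightZeroPart_of_ne_zero hkl ?_ (hS' _ (S.mul_mem (hmem k hx) (hmem l hy)))
    rw [innerDerivation_mul_eq_smul (heig hk hx) (heig hl hy)]
    congr 1
    simp only [hv]
    push_cast
    ring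
  have h0 : (0 : ℕ) ∈ Finset.range n := Finset.mem_range.2 hn
  calc weightZeroPart h n (x * y)
      = ∑ k ∈ Finset.range n, ∑ l ∈ Finset.range n, weightZeroPart h n (B k x * B l y) := by
        conv_lhs => rw [← sum_aeval_basis_apply (T := innerDerivation h) hinj hne x,
          ← sum_aeval_basis_apply (T := innerDerivation h) hinj hne y, Finset.sum_mul_sum]
        simp only [map_sum, hB]
    _ = weightZeroPart h n (B 0 x * B 0 y) := by
        rw [Finset.sum_eq_single_of_mem 0 h0 fun k hk hk0 =>
            Finset.sum_eq_zero fun l hl => hprod hk hl (by lia),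
          Finset.sum_eq_single_of_mem 0 h0 fun l hl hl0 => hprod h0 hl (by lia)]
    _ = weightZeroPart h n x * weightZeroPart h n y := by
        refine weightZeroPart_of_commute hn ?_
        rw [innerDerivation_mul_eq_smul (heig h0 hx) (heig h0 hy)]
        simp [hv]

theorem exists_unit_commute_sl2_of_commute_lowering [FiniteDimensional ℂ A] {e h f Z₁ Z₂ : A}
    (hhe : h * e - e * h = (2 : ℂ) • e) (hhf : h * f - f * h = (-2 : ℂ) • f)
    (hef : e * f - f * e = h) (hZ₁h : Z₁ * h = h * Z₁) (hZ₂h : Z₂ * h = h * Z₂)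
    (g : Aˣ) (hgf : g * f = f * g) (hg : g * (h + Z₁) = (h + Z₂) * g) :
    ∃ u : Aˣ, u * e = e * u ∧ u * h = h * u ∧ u * f = f * u ∧ u * Z₁ = Z₂ * u := by
  have hHE : innerDerivation h * innerDerivation e - innerDerivation e * innerDerivation h
      = (2 : ℂ) • innerDerivation e := by
    rw [innerDerivation_mul_sub_mul, hhe, innerDerivation_smul]
  have hHF : innerDerivation h * innerDerivation f - innerDerivation f * innerDerivation h
      = (-2 : ℂ) • innerDerivation f := by
    rw [innerDerivation_mul_sub_mul, hhf, innerDerivation_smul]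
  have hEF : innerDerivation e * innerDerivation f - innerDerivation f * innerDerivation e
      = innerDerivation h := by
    rw [innerDerivation_mul_sub_mul, hef]
  obtain ⟨n, hn, hEn⟩ : ∃ n, 0 < n ∧ innerDerivation e ^ n = 0 := by
    obtain ⟨m, hm⟩ := isNilpotent_innerDerivation (isNilpotent_of_innerDerivation_eq_smul
      two_ne_zero (by rw [innerDerivation_apply, hhe] : innerDerivation h e = (2 : ℂ) • e))
    exact ⟨m + 1, m.succ_pos, by rw [pow_succ, hm, zero_mul]⟩
  set S : Subalgebra ℂ A := Subalgebra.centralizer ℂ {f}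
  have hmemS {x : A} : x ∈ S ↔ innerDerivation f x = 0 := by
    rw [innerDerivation_apply_eq_zero, Subalgebra.mem_centralizer_iff]
    simp
  have hS (x : A) (hx : x ∈ S) : innerDerivation h x ∈ S := by
    rw [hmemS] at hx ⊢
    simpa [hx] using LinearMap.congr_fun hHF x
  have hS' (x : A) (hx : x ∈ S) : aeval (innerDerivation h)
      (Lagrange.nodal (Finset.range n) fun k : ℕ => -(k : ℂ)) x = 0 :=
    aeval_nodal_apply_eq_zero hHE hHF hEF n (hmemS.1 hx) (by simp [hEn])
  have hgS : (g : A) ∈ S := hmemS.2 (innerDerivation_apply_eq_zero.2 hgf.symm)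
  have hgS' : ((g⁻¹ : Aˣ) : A) ∈ S := by
    refine hmemS.2 (innerDerivation_apply_eq_zero.2 ?_)
    have : Commute (g : A) f := hgf
    exact this.units_inv_left.symm.eq
  have hone : weightZeroPart h n (1 : A) = 1 :=
    weightZeroPart_of_commute hn (by simp [innerDerivation_apply])
  let u : Aˣ := ⟨weightZeroPart h n g, weightZeroPart h n (g⁻¹ : Aˣ),
    by rw [← weightZeroPart_mul hn hS hS' hgS hgS', g.mul_inv, hone],
    by rw [← weightZeroPart_mul hn hS hS' hgS' hgS, g.inv_mul, hone]⟩
  have hu : (u : A) = weightZeroPart h n g := rfl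
  have huS : (u : A) ∈ S := weightZeroPart_mem (p := Subalgebra.toSubmodule S) hS hgS
  have huf : innerDerivation f (u : A) = 0 := hmemS.1 huS
  have huh : innerDerivation h (u : A) = 0 := innerDerivation_weightZeroPart hn (hS' _ hgS)
  have hue : innerDerivation e (u : A) = 0 := by
    have hweight : innerDerivation h (innerDerivation e (u : A))
        = (2 : ℂ) • innerDerivation e (u : A) := by
      simpa [huh] using LinearMap.congr_fun hHE (u : A)
    have hmem : innerDerivation e (u : A) ∈ S := by
      rw [hmemS]
      simpa [huh, huf] using LinearMap.congr_fun hEF (u : A)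
    refine eq_zero_of_aeval_nodal_apply_eq_zero (hS' _ hmem) hweight fun k _ hk => ?_
    have : ((2 + k : ℕ) : ℂ) = 0 := by
      push_cast
      rw [hk]
      ring
    norm_cast at this
    lia
  have huZ : (u : A) * Z₁ = Z₂ * u := by
    set L : Module.End ℂ A := LinearMap.mulRight ℂ Z₁ - LinearMap.mulLeft ℂ Z₂
    have hL (x : A) : L x = x * Z₁ - Z₂ * x := by simp [L]
    have hLD (x : A) : L (innerDerivation h x) = innerDerivation h (L x) := by
      have hleft : Z₂ * (h * x) = h * (Z₂ * x) := by rw [← mul_assoc, hZ₂h, mul_assoc]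
      simp only [hL, innerDerivation_apply, mul_sub, sub_mul, mul_assoc, hZ₁h, hleft]
      abel
    have hgL : (g : A) ∈ LinearMap.ker (L - innerDerivation h) := by
      rw [LinearMap.mem_ker, LinearMap.sub_apply, hL, innerDerivation_apply]
      rw [← sub_eq_zero] at hg
      rw [← hg]
      noncomm_ring
    have huL : (u : A) ∈ LinearMap.ker (L - innerDerivation h) := by
      refine weightZeroPart_mem (fun x hx => ?_) hgL
      rw [Submodule.mem_comap, LinearMap.mem_ker, LinearMap.sub_apply, hLD, ← map_sub,
        ← LinearMap.sub_apply, LinearMap.mem_ker.1 hx, map_zero]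
    rwa [LinearMap.mem_ker, LinearMap.sub_apply, huh, sub_zero, hL, sub_eq_zero] at huL
  exact ⟨u, (innerDerivation_apply_eq_zero.1 hue).symm, (innerDerivation_apply_eq_zero.1 huh).symm,
    (innerDerivation_apply_eq_zero.1 huf).symm, huZ⟩

end InnerDerivation

/-- if `Z₁`, `Z₂` commute with an `sl₂`-triple `(e,h,f)` of matrices, and
`h + Z₁` is conjugate to `h + Z₂` by an element of `GL_n(ℂ)` centralizing `f`, then `Z₁`
is conjugate to `Z₂` by an element centralizing `e`, `h` and `f`. -/
theorem conjugate_by_centralizer (n : ℕ) (e h f Z₁ Z₂ : Matrix (Fin n) (Fin n) ℂ)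
    (hhe : h * e - e * h = (2 : ℂ) • e)
    (hhf : h * f - f * h = (-2 : ℂ) • f)
    (hef : e * f - f * e = h)
    (hZ₁e : Z₁ * e = e * Z₁) (hZ₁h : Z₁ * h = h * Z₁) (hZ₁f : Z₁ * f = f * Z₁)
    (hZ₂e : Z₂ * e = e * Z₂) (hZ₂h : Z₂ * h = h * Z₂) (hZ₂f : Z₂ * f = f * Z₂)
    (hconj : ∃ g : GL (Fin n) ℂ,
      (g : Matrix (Fin n) (Fin n) ℂ) * f = f * (g : Matrix (Fin n) (Fin n) ℂ) ∧
      (g : Matrix (Fin n) (Fin n) ℂ) * (h + Z₁) *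
        ((g⁻¹ : GL (Fin n) ℂ) : Matrix (Fin n) (Fin n) ℂ) = h + Z₂) :
    ∃ u : GL (Fin n) ℂ,
      (u : Matrix (Fin n) (Fin n) ℂ) * e = e * (u : Matrix (Fin n) (Fin n) ℂ) ∧
      (u : Matrix (Fin n) (Fin n) ℂ) * h = h * (u : Matrix (Fin n) (Fin n) ℂ) ∧
      (u : Matrix (Fin n) (Fin n) ℂ) * f = f * (u : Matrix (Fin n) (Fin n) ℂ) ∧
      (u : Matrix (Fin n) (Fin n) ℂ) * Z₁ *
        ((u⁻¹ : GL (Fin n) ℂ) : Matrix (Fin n) (Fin n) ℂ) = Z₂ := by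
  obtain ⟨g, hgf, hg⟩ := hconj
  obtain ⟨u, hue, huh, huf, huZ⟩ := exists_unit_commute_sl2_of_commute_lowering hhe hhf hef
    hZ₁h hZ₂h g hgf ((Units.mul_inv_eq_iff_eq_mul g).1 hg)
  exact ⟨u, hue, huh, huf, (Units.mul_inv_eq_iff_eq_mul u).2 huZ⟩
end

section
/- Let g be a finite-dimensional Lie algebra over a field of characteristic zero and let (e, h, f) be an sl₂-triple in g with e ≠ 0. Then the Killing form κ of g satisfies κ(e, f) = κ(h, h)/2 and κ(h, h) ≠ 0; in particular κ(e, f) ≠ 0. -/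
open Module LieModule TensorProduct

namespace IsSl2Triple

/-- The eigenvalues of `h` on a finite-dimensional representation of an `sl₂`-triple are
integers. -/
lemma exists_int_of_hasEigenvalue {K L M : Type*} [Field K] [CharZero K] [LieRing L]
    [LieAlgebra K L] [AddCommGroup M] [Module K M] [LieRingModule L M] [LieModule K L M]
    [FiniteDimensional K M] {h e f : L} (t : IsSl2Triple h e f) {μ : K}
    (hμ : (toEnd K L M h).HasEigenvalue μ) : ∃ n : ℤ, μ = n := by
  obtain ⟨m, hm⟩ := hμ.exists_hasEigenvector
  have exists_zero : ∃ k, ((toEnd K L M e) ^ k) m = 0 := by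
    by_contra! contra
    have inj : Function.Injective fun n : ℕ ↦ μ + 2 * (n : K) := fun a b hab ↦ by
      simpa using hab
    have indep := (toEnd K L M h).eigenvectors_linearIndependent'
      (fun n : ℕ ↦ μ + 2 * (n : K)) inj (fun n ↦ ((toEnd K L M e) ^ n) m)
      fun n ↦ ⟨by
        rw [End.mem_eigenspace_iff, toEnd_apply_apply]
        exact t.lie_h_pow_toEnd_e hm.apply_eq_smul n, contra n⟩
    exact not_finite_iff_infinite.mpr (inferInstanceAs (Infinite ℕ)) indep.finite
  obtain ⟨k, hk, hk'⟩ := Nat.exists_not_and_succ_of_not_zero_of_exists hm.2 exists_zero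
  have P : t.HasPrimitiveVectorWith (((toEnd K L M e) ^ k) m) (μ + 2 * (k : K)) :=
    ⟨hk, t.lie_h_pow_toEnd_e hm.apply_eq_smul k, by rwa [lie_e_pow_toEnd_e k]⟩
  obtain ⟨n, hn⟩ := P.exists_nat
  exact ⟨n - 2 * k, by push_cast; rw [← hn]; ring⟩

/-- Over an algebraically closed field of characteristic zero, `κ(h, h) ≠ 0` for every
`sl₂`-triple. -/
lemma killingForm_h_h_ne_zero_of_isAlgClosed {K L : Type*} [Field K] [CharZero K] [IsAlgClosed K]
    [LieRing L] [LieAlgebra K L] [FiniteDimensional K L] {h e f : L} (t : IsSl2Triple h e f) :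
    killingForm K L h h ≠ 0 := by
  set H : End K L := toEnd K L L h with hH
  have roots_nat : ∀ x ∈ (H ^ 2).charpoly.roots, ∃ n : ℕ, (n : K) = x := by
    intro x hx
    have hx' : x ∈ spectrum K (H ^ 2) :=
      ((End.hasEigenvalue_iff_isRoot_charpoly _ _).mpr
        (Polynomial.isRoot_of_mem_roots hx)).mem_spectrum
    rw [spectrum.map_pow_of_pos H two_pos] at hx'
    obtain ⟨μ, hμ, rfl⟩ := hx'
    obtain ⟨n, rfl⟩ := t.exists_int_of_hasEigenvalue (End.hasEigenvalue_iff_mem_spectrum.mpr hμ)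
    exact ⟨n.natAbs ^ 2, by
      beta_reduce
      rw [← Int.cast_pow, ← Int.natAbs_sq]
      norm_cast⟩
  have four_mem : (4 : K) ∈ (H ^ 2).charpoly.roots := by
    rw [Polynomial.mem_roots (LinearMap.charpoly_monic _).ne_zero,
      ← End.hasEigenvalue_iff_isRoot_charpoly]
    refine End.hasEigenvalue_of_hasEigenvector (x := e) ⟨?_, t.e_ne_zero⟩
    rw [End.mem_eigenspace_iff, pow_two, End.mul_apply, hH, toEnd_apply_apply, toEnd_apply_apply,
      t.lie_h_e_smul K, lie_smul, t.lie_h_e_smul K, smul_smul]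
    norm_num
  have trace_eq : killingForm K L h h = (H ^ 2).charpoly.roots.sum := by
    rw [← End.trace_eq_sum_roots_charpoly_of_splits (IsAlgClosed.splits _), pow_two]
    rfl
  obtain ⟨s, hs⟩ : ∃ s : Multiset ℕ, s.map (Nat.cast : ℕ → K) = (H ^ 2).charpoly.roots :=
    (@Multiset.canLift _ _ Nat.cast (fun x : K ↦ ∃ n : ℕ, (n : K) = x) ⟨fun _ ↦ id⟩).prf _ roots_nat
  rw [trace_eq, ← hs, ← Nat.cast_multiset_sum, Nat.cast_ne_zero]
  intro hsum
  rw [← hs, Multiset.mem_map] at four_mem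
  obtain ⟨n, hn, hn4⟩ := four_mem
  rw [Multiset.sum_eq_zero_iff.mp hsum n hn] at hn4
  norm_num at hn4

/-- The Killing form does not vanish at `(h, h)` for an `sl₂`-triple in a finite-dimensional Lie
algebra of characteristic zero. -/
lemma killingForm_h_h_ne_zero {K L : Type*} [Field K] [CharZero K]
    [LieRing L] [LieAlgebra K L] [FiniteDimensional K L] {h e f : L} (t : IsSl2Triple h e f) :
    killingForm K L h h ≠ 0 := by
  let A := AlgebraicClosure K
  have : CharZero A := charZero_of_injective_algebraMap (algebraMap K A).injective
  have tA : IsSl2Triple ((1 : A) ⊗ₜ[K] h) (1 ⊗ₜ e) (1 ⊗ₜ f) :=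
    { h_ne_zero := fun h0 ↦ t.h_ne_zero <|
        Module.FaithfullyFlat.tensorProduct_mk_injective (A := K) (B := A) L (by simpa using h0)
      lie_e_f := by simp [t.lie_e_f]
      lie_h_e_nsmul := by simp [t.lie_h_e_nsmul, TensorProduct.tmul_smul]
      lie_h_f_nsmul := by simp [t.lie_h_f_nsmul, TensorProduct.tmul_smul, TensorProduct.tmul_neg] }
  have key := tA.killingForm_h_h_ne_zero_of_isAlgClosed (K := A)
  intro h0
  apply key
  rw [killingForm, traceForm_baseChange]
  simp [h0]

end IsSl2Triple

/-- for an `sl₂`-triple `(e,h,f)` with `e ≠ 0` in a finite-dimensional Lie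
algebra over a field of characteristic zero, `κ(e,f) = κ(h,h)/2` and `κ(h,h) ≠ 0`;
in particular `κ(e,f) ≠ 0`. -/
theorem killing_form_sl2 (F : Type*) [Field F] [CharZero F]
    (g : Type*) [LieRing g] [LieAlgebra F g] [FiniteDimensional F g]
    (e h f : g) (he0 : e ≠ 0)
    (hhe : ⁅h, e⁆ = (2 : F) • e) (hhf : ⁅h, f⁆ = (-2 : F) • f) (hef : ⁅e, f⁆ = h) :
    killingForm F g e f = killingForm F g h h / 2 ∧
    killingForm F g h h ≠ 0 ∧
    killingForm F g e f ≠ 0 := by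
  have t : IsSl2Triple h e f :=
    { h_ne_zero := by
        rintro rfl
        simp [he0, eq_comm] at hhe
      lie_e_f := hef
      lie_h_e_nsmul := by rw [hhe, two_smul, two_smul]
      lie_h_f_nsmul := by rw [hhf, neg_smul, two_smul, two_smul] }
  have hne := t.killingForm_h_h_ne_zero (K := F)
  have heq : killingForm F g h h = 2 * killingForm F g e f := by
    have := traceForm_apply_lie_apply F g g e f h
    rw [hef, ← lie_skew, hhf, neg_smul, neg_neg, map_smul, smul_eq_mul] at this
    exact this
  refine ⟨by rw [heq]; simp, hne, fun h0 ↦ hne (by rw [heq, h0, mul_zero])⟩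
end

section
/- Let g be a finite-dimensional Lie algebra over a field of characteristic zero and let (e, h, f) be an sl₂-triple in g. Then the centralizer of f in g, i.e. ker(ad f) = {x ∈ g : [f,x] = 0}, is contained in the sum of the eigenspaces of ad(h) corresponding to nonpositive integer eigenvalues. -/
/-- The commutation rule for `f` with powers of `e` in an algebra with an `sl₂`-triple. -/
theorem mul_pow_succ_of_sl2_relations {A : Type*} [Ring A] {e h f : A}
    (hhe : h * e = e * h + 2 * e) (hef : f * e = e * f - h) (n : ℕ) :
    f * e ^ (n + 1) = e ^ (n + 1) * f - ((n : A) + 1) * (e ^ n * (h + (n : A))) := by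
  induction n with
  | zero => simp [hef]
  | succ n ih =>
    have hn : (n : A) * e = e * n := Nat.cast_commute n e
    have hp : (n : A) * e ^ (n + 1) = e ^ (n + 1) * n := Nat.cast_commute n _
    have key : (h + (n : A)) * e = e * (h + (n : A) + 2) := by
      rw [add_mul, hhe, hn]; noncomm_ring
    calc f * e ^ (n + 1 + 1) = f * e ^ (n + 1) * e := by rw [pow_succ _ (n + 1), mul_assoc]
      _ = e ^ (n + 1) * (f * e) - ((n : A) + 1) * (e ^ n * ((h + (n : A)) * e)) := by
        rw [ih]; simp only [sub_mul, mul_assoc]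
      _ = e ^ (n + 1) * (e * f - h)
          - ((n : A) + 1) * (e ^ (n + 1) * (h + (n : A) + 2)) := by
        rw [hef, key, ← mul_assoc (e ^ n) e, ← pow_succ]
      _ = _ := by
        rw [pow_succ e (n + 1)]
        push_cast
        generalize e ^ (n + 1) = p at hp
        simp only [mul_add, add_mul, mul_sub, one_mul, mul_one, ← mul_assoc, hp]
        noncomm_ring

/-- In characteristic zero, an endomorphism `e` of a finite-dimensional space which satisfies
`[h, e] = 2 e` for some `h` is nilpotent. -/
theorem Module.End.isNilpotent_of_commutator_eq_two_mul {F V : Type*} [Field F] [CharZero F]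
    [AddCommGroup V] [Module F V] [FiniteDimensional F V] {e h : Module.End F V}
    (hhe : h * e = e * h + 2 * e) : IsNilpotent e := by
  by_contra hnil
  have hne (n : ℕ) : e ^ n ≠ 0 := fun h0 ↦ hnil ⟨n, h0⟩
  let D : Module.End F (Module.End F V) := LinearMap.mulLeft F h - LinearMap.mulRight F h
  have hD (n : ℕ) : D (e ^ n) = (2 * n : F) • e ^ n := by
    simp only [D, LinearMap.sub_apply, LinearMap.mulLeft_apply, LinearMap.mulRight_apply]
    induction n with
    | zero => simp
    | succ n ih =>
      have h1 : h * e ^ n = e ^ n * h + (2 * n : F) • e ^ n := by rw [← ih]; abel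
      have h2 : e ^ n * (2 * e) = (2 : F) • (e ^ n * e) := by
        rw [two_smul]; noncomm_ring
      rw [pow_succ, ← mul_assoc, h1, add_mul, mul_assoc, hhe, mul_add, h2, smul_mul_assoc]
      push_cast
      rw [mul_add, mul_one, add_smul, mul_assoc]
      abel
  have hinj : Function.Injective fun n : ℕ ↦ (2 * n : F) := fun a b hab ↦ by simpa using hab
  have hli : LinearIndependent F fun n : ℕ ↦ e ^ n :=
    D.eigenvectors_linearIndependent' (fun n : ℕ ↦ (2 * n : F)) hinj _
      fun n ↦ ⟨Module.End.mem_eigenspace_iff.mpr (hD n), hne n⟩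
  exact Infinite.not_finite hli.finite

/-- If `(h + n) x` lies in the sum of the eigenspaces of `h` for `0, -1, …, -(n - 1)`, then `x` lies
in the sum of the eigenspaces for `0, -1, …, -n`. -/
theorem Module.End.mem_iSup_eigenspace_neg_of_add_smul_mem {F V : Type*} [Field F] [CharZero F]
    [AddCommGroup V] [Module F V] (h : Module.End F V) (n : ℕ) {x : V}
    (hx : h x + (n : F) • x ∈ ⨆ k : ℕ, ⨆ _ : k < n, h.eigenspace (-(k : F))) :
    x ∈ ⨆ k : ℕ, ⨆ _ : k < n + 1, h.eigenspace (-(k : F)) := by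
  have hle : (⨆ k : ℕ, ⨆ _ : k < n, h.eigenspace (-(k : F))) ≤
      (⨆ k : ℕ, ⨆ _ : k < n, h.eigenspace (-(k : F))).map (h + (n : F) • 1) := by
    refine iSup₂_le fun k hk v hv ↦ ?_
    have hnk : (n : F) - k ≠ 0 := sub_ne_zero.mpr (Nat.cast_injective.ne hk.ne')
    refine ⟨((n : F) - k)⁻¹ • v, Submodule.smul_mem _ _
      (Submodule.mem_iSup_of_mem k (Submodule.mem_iSup_of_mem hk hv)), ?_⟩
    rw [map_smul, LinearMap.add_apply, Module.End.mem_eigenspace_iff.mp hv, LinearMap.smul_apply,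
      Module.End.one_apply, ← add_smul, neg_add_eq_sub, smul_smul, inv_mul_cancel₀ hnk, one_smul]
  obtain ⟨z, hz, hzx⟩ := hle hx
  have hmem : x - z ∈ h.eigenspace (-(n : F)) := by
    rw [LinearMap.add_apply, LinearMap.smul_apply, Module.End.one_apply] at hzx
    rw [Module.End.mem_eigenspace_iff, map_sub, neg_smul, smul_sub]
    rw [← sub_eq_zero, ← neg_eq_zero, ← sub_eq_zero.mpr hzx]
    abel
  rw [← sub_add_cancel x z]
  refine add_mem (Submodule.mem_iSup_of_mem n (Submodule.mem_iSup_of_mem n.lt_succ_self hmem)) ?_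
  exact (iSup_mono fun k ↦ iSup_mono' fun hk ↦ ⟨hk.trans n.lt_succ_self, le_rfl⟩ :
    (⨆ k : ℕ, ⨆ _ : k < n, h.eigenspace (-(k : F))) ≤ _) hz

/-- A vector killed by `f` and by `e ^ n` lies in the sum of the eigenspaces of `h` for the
eigenvalues `0, -1, …, -(n - 1)`. -/
theorem Module.End.mem_iSup_eigenspace_neg_of_pow_apply_eq_zero {F V : Type*} [Field F]
    [CharZero F] [AddCommGroup V] [Module F V] {e h f : Module.End F V}
    (hhe : h * e = e * h + 2 * e) (hhf : f * h = h * f + 2 * f) (hef : f * e = e * f - h)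
    (n : ℕ) {x : V} (hfx : f x = 0) (hex : (e ^ n) x = 0) :
    x ∈ ⨆ k : ℕ, ⨆ _ : k < n, h.eigenspace (-(k : F)) := by
  induction n generalizing x with
  | zero =>
    have : x = 0 := by simpa using hex
    exact this ▸ zero_mem _
  | succ n ih =>
    refine mem_iSup_eigenspace_neg_of_add_smul_mem h n (ih ?_ ?_)
    · have hfh : f (h x) = h (f x) + (2 : Module.End F V) (f x) := LinearMap.congr_fun hhf x
      simp [hfh, hfx]
    · have hcomm := LinearMap.congr_fun (mul_pow_succ_of_sl2_relations hhe hef n) x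
      have hcast (y : V) : ((n : Module.End F V) + 1) y = ((n : F) + 1) • y := by
        simp [add_smul, Nat.cast_smul_eq_nsmul]
      rw [LinearMap.sub_apply, Module.End.mul_apply, Module.End.mul_apply, Module.End.mul_apply,
        hex, hfx, map_zero, map_zero, zero_sub, eq_comm, neg_eq_zero, hcast] at hcomm
      have := (smul_eq_zero.mp hcomm).resolve_left (Nat.cast_add_one_ne_zero n)
      simpa [Nat.cast_smul_eq_nsmul] using this

/-- for an `sl₂`-triple `(e,h,f)`, the centralizer `ker(ad f)` of `f` is
contained in the sum of the eigenspaces of `ad h` with nonpositive integer eigenvalues. -/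
theorem centralizer_le_nonpositive_part (F : Type*) [Field F] [CharZero F]
    (g : Type*) [LieRing g] [LieAlgebra F g] [FiniteDimensional F g]
    (e h f : g)
    (hhe : ⁅h, e⁆ = (2 : F) • e) (hhf : ⁅h, f⁆ = (-2 : F) • f) (hef : ⁅e, f⁆ = h) :
    LinearMap.ker (LieAlgebra.ad F g f) ≤
      ⨆ m : ℤ, ⨆ _ : m ≤ 0, Module.End.eigenspace (LieAlgebra.ad F g h) ((m : ℤ) : F) := by
  intro x hx
  have hE : LieAlgebra.ad F g h * LieAlgebra.ad F g e
      = LieAlgebra.ad F g e * LieAlgebra.ad F g h + 2 * LieAlgebra.ad F g e := by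
    ext y
    simp [two_mul, leibniz_lie h e y, hhe, two_smul]
    abel
  have hF : LieAlgebra.ad F g f * LieAlgebra.ad F g h
      = LieAlgebra.ad F g h * LieAlgebra.ad F g f + 2 * LieAlgebra.ad F g f := by
    ext y
    simp only [Module.End.mul_apply, LinearMap.add_apply, LieAlgebra.ad_apply, two_mul,
      leibniz_lie h f y, hhf, neg_smul, two_smul, neg_lie, add_lie]
    abel
  have hEF : LieAlgebra.ad F g f * LieAlgebra.ad F g e
      = LieAlgebra.ad F g e * LieAlgebra.ad F g f - LieAlgebra.ad F g h := by
    ext y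
    simp [leibniz_lie e f y, hef]
  obtain ⟨n, hn⟩ := Module.End.isNilpotent_of_commutator_eq_two_mul hE
  have hmem := Module.End.mem_iSup_eigenspace_neg_of_pow_apply_eq_zero hE hF hEF n
    (LinearMap.mem_ker.mp hx) (by rw [hn, LinearMap.zero_apply])
  have hle : (⨆ k : ℕ, ⨆ _ : k < n, (LieAlgebra.ad F g h).eigenspace (-(k : F))) ≤
      ⨆ m : ℤ, ⨆ _ : m ≤ 0, Module.End.eigenspace (LieAlgebra.ad F g h) ((m : ℤ) : F) :=
    iSup₂_le fun k _ ↦ le_iSup₂_of_le (-(k : ℤ)) (by simp) (by simp)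
  exact hle hmem
end

section
/- Let g be a finite-dimensional Lie algebra over a field of characteristic zero and let (e, h, f) be an sl₂-triple in g. Let g_{≥k} denote the sum of the eigenspaces of ad(h) with eigenvalues ≥ k and g_{>k} the sum of those with eigenvalues > k. Then (ad e)² maps g_{≥−2} onto g_{≥2}, and (ad e)² maps g_{>−2} onto g_{>2}. -/
open Module

section SlTwoEndomorphisms

variable {F V : Type*} [Field F] [AddCommGroup V] [Module F V] {E H N : End F V}

/-- If `[H, A] = c A`, then `A ^ k` shifts the eigenvalues of `H` by `k c`. -/
lemma Module.End.pow_mem_eigenspace_of_commutator {A : End F V} {c : F}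
    (hHA : ∀ x, H (A x) = A (H x) + c • A x) {μ : F} {v : V} (hv : v ∈ H.eigenspace μ) (k : ℕ) :
    (A ^ k) v ∈ H.eigenspace (μ + k * c) := by
  induction k with
  | zero => simpa using hv
  | succ k ih =>
    rw [End.mem_eigenspace_iff] at ih ⊢
    rw [pow_succ', End.mul_apply, hHA, ih, map_smul, ← add_smul]
    congr 1
    push_cast
    ring

/-- The commutator of `E ^ (k + 1)` with `N` on a weight vector. -/
lemma Module.End.pow_succ_apply_of_slTwo
    (hHE : ∀ x, H (E x) = E (H x) + (2 : F) • E x) (hEN : ∀ x, E (N x) = N (E x) + H x)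
    {μ : F} {v : V} (hv : v ∈ H.eigenspace μ) (k : ℕ) :
    (E ^ (k + 1)) (N v) = N ((E ^ (k + 1)) v) + ((k + 1) * (μ + k)) • (E ^ k) v := by
  induction k with
  | zero => simpa [hEN] using End.mem_eigenspace_iff.mp hv
  | succ k ih =>
    have hw := End.mem_eigenspace_iff.mp
      (End.pow_mem_eigenspace_of_commutator hHE hv (k + 1))
    rw [pow_succ' E (k + 1), End.mul_apply, ih, map_add, hEN, hw, map_smul, End.mul_apply,
      ← End.mul_apply E (E ^ k), ← pow_succ', add_assoc, ← add_smul]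
    congr 2
    push_cast
    ring

/-- A vector of weight `m ≥ 2` killed by a power of `E` is in the image under `E ^ 2` of the
vectors of weight `m - 4`. -/
lemma Module.End.mem_map_sq_eigenspace_of_pow_eq_zero [CharZero F]
    (hHE : ∀ x, H (E x) = E (H x) + (2 : F) • E x)
    (hHN : ∀ x, H (N x) = N (H x) + (-2 : F) • N x)
    (hEN : ∀ x, E (N x) = N (E x) + H x) {m : ℤ} (hm : 2 ≤ m) (k : ℕ) {v : V}
    (hv : v ∈ H.eigenspace (m : F)) (hk : (E ^ k) v = 0) :
    v ∈ (H.eigenspace ((m - 4 : ℤ) : F)).map (E ^ 2) := by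
  induction k generalizing v with
  | zero =>
    obtain rfl : v = 0 := by simpa using hk
    exact zero_mem _
  | succ k ih =>
    set c : F := (k + 2) * (m + k - 1) * ((k + 1) * (m + k)) with hc
    have hc0 : c ≠ 0 := by
      have : ((k + 2) * (m + k - 1) * ((k + 1) * (m + k)) : ℤ) ≠ 0 := by
        have : (0 : ℤ) < m + k - 1 := by lia
        have : (0 : ℤ) < m + k := by lia
        positivity
      rw [hc]
      exact_mod_cast this
    have hNv : N v ∈ H.eigenspace ((m : F) - 2) := by
      simpa [sub_eq_add_neg] using End.pow_mem_eigenspace_of_commutator hHN hv 1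
    have hNNv : N (N v) ∈ H.eigenspace ((m - 4 : ℤ) : F) := by
      rw [← End.mul_apply, ← sq]
      convert End.pow_mem_eigenspace_of_commutator hHN hv 2 using 2
      push_cast
      ring
    have hENN : (E ^ 2) (N (N v)) ∈ H.eigenspace (m : F) := by
      convert End.pow_mem_eigenspace_of_commutator hHE hNNv 2 using 2
      push_cast
      ring
    have hEN1 : (E ^ (k + 1)) (N v) = ((k + 1) * (m + k) : F) • (E ^ k) v := by
      rw [End.pow_succ_apply_of_slTwo hHE hEN hv, hk, map_zero, zero_add]
    have hEN2 : (E ^ (k + 2)) (N v) = 0 := by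
      rw [pow_succ', End.mul_apply, hEN1, map_smul, ← End.mul_apply, ← pow_succ', hk, smul_zero]
    have hpow : (E ^ k) ((E ^ 2) (N (N v))) = c • (E ^ k) v := by
      rw [← End.mul_apply, ← pow_add, End.pow_succ_apply_of_slTwo hHE hEN hNv (k + 1), hEN2,
        map_zero, zero_add, hEN1, smul_smul, hc]
      congr 1
      push_cast
      ring
    have hmem : (E ^ 2) (N (N v)) - c • v ∈ (H.eigenspace ((m - 4 : ℤ) : F)).map (E ^ 2) :=
      ih (sub_mem hENN (Submodule.smul_mem _ _ hv)) (by rw [map_sub, hpow, map_smul, sub_self])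
    have hcv := sub_mem (Submodule.mem_map_of_mem (f := E ^ 2) hNNv) hmem
    rwa [sub_sub_cancel, Submodule.smul_mem_iff _ hc0] at hcv

/-- In finite dimension, an operator raising weights by `2` is nilpotent on weight vectors. -/
lemma Module.End.exists_pow_eq_zero_of_commutator [CharZero F] [FiniteDimensional F V]
    (hHE : ∀ x, H (E x) = E (H x) + (2 : F) • E x) {μ : F} {v : V}
    (hv : v ∈ H.eigenspace μ) : ∃ k : ℕ, (E ^ k) v = 0 := by
  by_contra! hne
  have hinj : Function.Injective fun k : ℕ ↦ μ + k * 2 := fun a b hab ↦ by simpa using hab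
  refine Set.infinite_range_of_injective hinj (H.finite_hasEigenvalue.subset ?_)
  rintro _ ⟨k, rfl⟩
  exact End.hasEigenvalue_of_hasEigenvector
    ⟨End.pow_mem_eigenspace_of_commutator hHE hv k, hne k⟩

/-- For `m ≥ 2`, the map `E ^ 2` sends the vectors of weight `m - 4` onto those of weight `m`. -/
lemma Module.End.map_sq_eigenspace_of_slTwo [CharZero F] [FiniteDimensional F V]
    (hHE : ∀ x, H (E x) = E (H x) + (2 : F) • E x)
    (hHN : ∀ x, H (N x) = N (H x) + (-2 : F) • N x)
    (hEN : ∀ x, E (N x) = N (E x) + H x) {m : ℤ} (hm : 2 ≤ m) :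
    (H.eigenspace ((m - 4 : ℤ) : F)).map (E ^ 2) = H.eigenspace (m : F) := by
  refine le_antisymm ?_ fun v hv ↦ ?_
  · rintro _ ⟨w, hw, rfl⟩
    convert End.pow_mem_eigenspace_of_commutator hHE hw 2 using 2
    push_cast
    ring
  · obtain ⟨k, hk⟩ := End.exists_pow_eq_zero_of_commutator hHE hv
    exact End.mem_map_sq_eigenspace_of_pow_eq_zero hHE hHN hEN hm k hv hk

/-- For `n ≥ 2`, the map `E ^ 2` sends the span of the vectors of weight at least `n - 4` onto the
span of the vectors of weight at least `n`. -/
lemma Module.End.map_sq_iSup_eigenspace_of_slTwo [CharZero F] [FiniteDimensional F V]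
    (hHE : ∀ x, H (E x) = E (H x) + (2 : F) • E x)
    (hHN : ∀ x, H (N x) = N (H x) + (-2 : F) • N x)
    (hEN : ∀ x, E (N x) = N (E x) + H x) {n : ℤ} (hn : 2 ≤ n) :
    (⨆ m : ℤ, ⨆ _ : n - 4 ≤ m, H.eigenspace (m : F)).map (E ^ 2) =
      ⨆ m : ℤ, ⨆ _ : n ≤ m, H.eigenspace (m : F) := by
  rw [← (Equiv.subRight (4 : ℤ)).iSup_comp]
  simp only [Submodule.map_iSup, Equiv.subRight_apply, sub_le_sub_iff_right]
  exact iSup_congr fun m ↦ iSup_congr fun hm ↦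
    End.map_sq_eigenspace_of_slTwo hHE hHN hEN (hn.trans hm)

end SlTwoEndomorphisms

/-- for an `sl₂`-triple `(e,h,f)`, `(ad e)²` maps `g_{≥ -2}` onto `g_{≥ 2}`
and `g_{> -2}` onto `g_{> 2}`, where `g_{≥ k}` (resp. `g_{> k}`) is the sum of the
eigenspaces of `ad h` with integer eigenvalues `≥ k` (resp. `> k`). -/
theorem ad_sq_surjective_on_filtration (F : Type*) [Field F] [CharZero F]
    (g : Type*) [LieRing g] [LieAlgebra F g] [FiniteDimensional F g]
    (e h f : g)
    (hhe : ⁅h, e⁆ = (2 : F) • e) (hhf : ⁅h, f⁆ = (-2 : F) • f) (hef : ⁅e, f⁆ = h) :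
    Submodule.map (LieAlgebra.ad F g e ^ 2)
        (⨆ m : ℤ, ⨆ _ : (-2 : ℤ) ≤ m, Module.End.eigenspace (LieAlgebra.ad F g h) ((m : ℤ) : F))
      = (⨆ m : ℤ, ⨆ _ : (2 : ℤ) ≤ m, Module.End.eigenspace (LieAlgebra.ad F g h) ((m : ℤ) : F)) ∧
    Submodule.map (LieAlgebra.ad F g e ^ 2)
        (⨆ m : ℤ, ⨆ _ : (-2 : ℤ) < m, Module.End.eigenspace (LieAlgebra.ad F g h) ((m : ℤ) : F))
      = (⨆ m : ℤ, ⨆ _ : (2 : ℤ) < m, Module.End.eigenspace (LieAlgebra.ad F g h) ((m : ℤ) : F)) := by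
  have hHE (x : g) : LieAlgebra.ad F g h (LieAlgebra.ad F g e x) =
      LieAlgebra.ad F g e (LieAlgebra.ad F g h x) + (2 : F) • LieAlgebra.ad F g e x := by
    simp only [LieAlgebra.ad_apply]
    rw [leibniz_lie h, hhe, smul_lie, add_comm]
  have hHN (x : g) : LieAlgebra.ad F g h (LieAlgebra.ad F g f x) =
      LieAlgebra.ad F g f (LieAlgebra.ad F g h x) + (-2 : F) • LieAlgebra.ad F g f x := by
    simp only [LieAlgebra.ad_apply]
    rw [leibniz_lie h, hhf, smul_lie, add_comm]
  have hEN (x : g) : LieAlgebra.ad F g e (LieAlgebra.ad F g f x) =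
      LieAlgebra.ad F g f (LieAlgebra.ad F g e x) + LieAlgebra.ad F g h x := by
    simp only [LieAlgebra.ad_apply]
    rw [leibniz_lie e, hef, add_comm]
  have h_ge := Module.End.map_sq_iSup_eigenspace_of_slTwo hHE hHN hEN (n := 2) le_rfl
  have h_gt := Module.End.map_sq_iSup_eigenspace_of_slTwo hHE hHN hEN (n := 3) (by norm_num)
  simp only [← Int.add_one_le_iff]
  exact ⟨h_ge, h_gt⟩
end
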